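/- arXiv:math/0508326 — 3 statements merged into one kernel-verified Lean document; each statement's English description precedes it below -/
import Mathlib

section
/- Let k be an algebraically closed field of characteristic 0 and let F ∈ k[x_0,x_1,x_2,x_3] be an irreducible homogeneous polynomial of degree d ≥ 2 defining the non-linear integral surface Z = {F = 0} ⊂ P^3. Suppose that for every nonzero x ∈ k^4 with F(x) = 0, either there exist two distinct 2-dimensional k-linear subspaces L_1 ≠ L_2 of k^4, each containing x, on each of which F vanishes identically, or there exists a 2-dimensional k-linear subspace L of k^4 containing x on which F and all four partial derivatives ∂F/∂x_i vanish identically (a line in the singular locus of Z). Then d = 2 and Z is non-singular: for every nonzero x ∈ k^4 with F(x) = 0, some partial derivative ∂F/∂x_i does not vanish at x. -/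
open MvPolynomial


/-- vanishing on the zero set of a prime -/
lemma dvd_of_vanish {k : Type*} [Field k] [IsAlgClosed k] {n : ℕ} {P G : MvPolynomial (Fin n) k}
    (hP : Irreducible P) (h : ∀ x, eval x P = 0 → eval x G = 0) : P ∣ G := by
  have hpr : (Ideal.span {P}).IsPrime := (Ideal.span_singleton_prime hP.ne_zero).2 hP.prime
  have := IsPrime.vanishingIdeal_zeroLocus (K := k) (Ideal.span {P})
  rw [← Ideal.mem_span_singleton, ← this, mem_vanishingIdeal_iff]
  intro x hx
  rw [aeval_eq_eval]
  apply h
  have := (mem_zeroLocus_iff.1 hx) P (Ideal.mem_span_singleton_self P)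
  rwa [aeval_eq_eval] at this

lemma exists_linear {k : Type*} [Field k] {n : ℕ} (H : Submodule k (Fin n → k))
    (hH : Module.finrank k H + 1 = n) :
    ∃ l : MvPolynomial (Fin n) k, Irreducible l ∧ l.IsHomogeneous 1 ∧ ∀ x, eval x l = 0 ↔ x ∈ H := by
  have hlt : H < ⊤ := by
    rw [lt_top_iff_ne_top]; rintro rfl
    simp at hH
  obtain ⟨f, hf0, hf⟩ := H.exists_le_ker_of_lt_top hlt
  have hker : LinearMap.ker f = H := by
    symm
    apply Submodule.eq_of_le_of_finrank_eq hf
    have h1 := LinearMap.finrank_range_add_finrank_ker f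
    have h2 : Module.finrank k (LinearMap.range f) = 1 := by
      rw [LinearMap.range_eq_top.2 (LinearMap.surjective hf0)]; simp
    simp at h1
    omega
  let l : MvPolynomial (Fin n) k := ∑ i, C (f (Pi.single i 1)) * X i
  have hl : ∀ x, eval x l = f x := by
    intro x
    simp only [l, map_sum, map_mul, eval_C, eval_X]
    conv_rhs => rw [LinearMap.pi_apply_eq_sum_univ f x]
    refine Finset.sum_congr rfl fun i _ => ?_
    rw [smul_eq_mul, mul_comm]
    congr 2
    ext j
    simp [Pi.single_apply, eq_comm]
  have hhom : l.IsHomogeneous 1 := by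
    apply IsHomogeneous.sum
    intro i _
    exact isHomogeneous_C_mul_X _ _
  have hl0 : l ≠ 0 := by
    intro h
    apply hf0
    ext1; ext1
    simp [← hl, h]
  refine ⟨l, ?_, hhom, ?_⟩
  · apply irreducible_of_totalDegree_eq_one (hhom.totalDegree hl0)
    intro x hx
    obtain ⟨m, hm⟩ := ne_zero_iff.1 hl0
    have := hx m
    rw [isUnit_iff_ne_zero]; rintro rfl
    exact hm (zero_dvd_iff.1 this)
  · intro x; rw [hl, ← hker]; rfl

/-- A nonzero polynomial vanishes on at most `totalDegree` hyperplanes. -/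
lemma card_hyperplanes {k : Type*} [Field k] [IsAlgClosed k] {n : ℕ} {R : MvPolynomial (Fin n) k}
    (hR : R ≠ 0) (S : Finset (Submodule k (Fin n → k)))
    (h1 : ∀ H ∈ S, Module.finrank k H + 1 = n) (h2 : ∀ H ∈ S, ∀ x ∈ H, eval x R = 0) :
    S.card ≤ R.totalDegree := by
  classical
  choose l hl using fun H : S => exists_linear H.1 (h1 H.1 H.2)
  have hd : ∏ H : S, l H ∣ R := by
    apply Finset.prod_dvd_of_isRelPrime
    · intro H _ H' _ hne
      rw [Function.onFun, (hl H).1.isRelPrime_iff_not_dvd]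
      intro hdv
      apply hne
      have : H.1 ≤ H'.1 := by
        intro x hx
        rw [← (hl H').2.2]
        rw [← (hl H).2.2] at hx
        obtain ⟨c, hc⟩ := hdv
        rw [hc]; simp [hx]
      apply Subtype.ext
      apply Submodule.eq_of_le_of_finrank_eq this
      have := h1 _ H.2; have := h1 _ H'.2; omega
    · intro H _
      apply dvd_of_vanish (hl H).1
      intro x hx
      exact h2 _ H.2 x ((hl H).2.2 x |>.1 hx)
  have hh : (∏ H : S, l H).IsHomogeneous (∑ H : S, 1) :=
    IsHomogeneous.prod _ _ _ fun H _ => (hl H).2.1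
  have hne : (∏ H : S, l H) ≠ 0 := by
    rw [Finset.prod_ne_zero_iff]; intro H _; exact (hl H).1.ne_zero
  have h3 := hh.totalDegree hne
  have h4 := totalDegree_le_of_dvd_of_isDomain hd hR
  rw [Finset.sum_const, Finset.card_univ, Fintype.card_coe, smul_eq_mul, mul_one] at h3
  omega

/-- elimination -/
lemma exists_elim0 {k : Type*} [Field k] {n : ℕ} {F G : MvPolynomial (Fin (n+1)) k}
    (hF : Irreducible F) (h : ¬ F ∣ G) :
    ∃ R : MvPolynomial (Fin n) k, R ≠ 0 ∧ ∀ x : Fin (n+1) → k, eval x F = 0 → eval x G = 0 →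
      eval (x ∘ Fin.succ) R = 0 := by
  set A := MvPolynomial (Fin n) k
  set e := finSuccEquiv k n
  have hFe : Irreducible (e F) := (MulEquiv.irreducible_iff e).2 hF
  have hdv : ¬ e F ∣ e G := by
    rwa [map_dvd_iff e]
  -- evaluation
  have hev : ∀ (x : Fin (n+1) → k) (P : MvPolynomial (Fin (n+1)) k),
      eval x P = Polynomial.eval (x 0) ((e P).map (eval (x ∘ Fin.succ))) := by
    intro x P
    rw [← eval_eq_eval_mv_eval']
    congr 2
    exact (Fin.cons_self_tail x).symm
  by_cases hdeg : (e F).natDegree = 0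
  · obtain ⟨R, hR⟩ := Polynomial.natDegree_eq_zero.1 hdeg
    refine ⟨R, ?_, ?_⟩
    · rintro rfl
      apply hFe.ne_zero; rw [← hR]; simp
    · intro x hx _
      rw [hev, ← hR] at hx
      simpa using hx
  have hprim : (e F).IsPrimitive := hFe.isPrimitive hdeg
  let K := FractionRing A
  have hirrK : Irreducible ((e F).map (algebraMap A K)) :=
    (hprim.irreducible_iff_irreducible_map_fraction_map).1 hFe
  have hdvK : ¬ (e F).map (algebraMap A K) ∣ (e G).map (algebraMap A K) := fun h' =>
    hdv (hprim.dvd_of_fraction_map_dvd_fraction_map h')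
  obtain ⟨a, b, hab⟩ := (hirrK.coprime_iff_not_dvd.2 hdvK)
  have hclear : ∀ a : Polynomial K, ∃ c : A, c ≠ 0 ∧ ∃ a' : Polynomial A,
      a'.map (algebraMap A K) = Polynomial.C (algebraMap A K c) * a := by
    intro a
    obtain ⟨c, hc, h⟩ := IsLocalization.integerNormalization_spec (nonZeroDivisors A) a
    refine ⟨c, nonZeroDivisors.ne_zero hc, _, h.trans ?_⟩
    rw [← Polynomial.smul_eq_C_mul, algebraMap_smul]
  obtain ⟨c, hc, a', ha'⟩ := hclear a
  obtain ⟨c', hc', b', hb'⟩ := hclear b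
  have key : Polynomial.C c' * a' * e F + Polynomial.C c * b' * e G = Polynomial.C (c * c') := by
    apply Polynomial.map_injective _ (IsFractionRing.injective A K)
    simp only [Polynomial.map_add, Polynomial.map_mul, ha', hb', Polynomial.map_C, map_mul]
    linear_combination (Polynomial.C (algebraMap A K c) * Polynomial.C (algebraMap A K c')) * hab
  refine ⟨c * c', mul_ne_zero hc hc', ?_⟩
  intro x hx hy
  rw [hev] at hx hy
  have := congrArg (fun p => Polynomial.eval (x 0) (p.map (eval (x ∘ Fin.succ)))) key
  simpa [hx, hy] using this.symm

lemma exists_elim {k : Type*} [Field k] {n : ℕ} {F G : MvPolynomial (Fin (n+1)) k}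
    (hF : Irreducible F) (h : ¬ F ∣ G) (σ : Equiv.Perm (Fin (n+1))) :
    ∃ R : MvPolynomial (Fin n) k, R ≠ 0 ∧ ∀ x : Fin (n+1) → k, eval x F = 0 → eval x G = 0 →
      eval (x ∘ σ ∘ Fin.succ) R = 0 := by
  let e := renameEquiv k σ.symm
  obtain ⟨R, hR, hR'⟩ := exists_elim0 (F := e F) (G := e G)
    ((MulEquiv.irreducible_iff e).2 hF) (by rwa [map_dvd_iff e])
  refine ⟨R, hR, fun x h1 h2 => hR' (x ∘ σ) ?_ ?_⟩
  · simp [e, eval_rename, Function.comp_assoc, h1]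
  · simp [e, eval_rename, Function.comp_assoc, h2]


/-- a line on the surface -/
def LineOn {k : Type*} [Field k] (F : MvPolynomial (Fin 4) k) (L : Submodule k (Fin 4 → k)) : Prop :=
  Module.finrank k L = 2 ∧ ∀ y ∈ L, eval y F = 0

lemma prop_of_lines {k V : Type*} [Field k] [AddCommGroup V] [Module k V]
    {L L' : Submodule k V} (h : Module.finrank k L = 2)
    (h' : Module.finrank k L' = 2) (hne : L ≠ L') {x y : V} (hx0 : x ≠ 0)
    (hx : x ∈ L) (hx' : x ∈ L') (hy : y ∈ L) (hy' : y ∈ L') : ∃ c : k, c • x = y := by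
  have : FiniteDimensional k L := FiniteDimensional.of_finrank_pos (by omega)
  have : FiniteDimensional k L' := FiniteDimensional.of_finrank_pos (by omega)
  have h1 : Module.finrank k (L ⊓ L' : Submodule k V) ≤ 2 := h ▸ Submodule.finrank_mono inf_le_left
  have h2 : Module.finrank k (L ⊓ L' : Submodule k V) ≠ 2 := by
    intro h2
    apply hne
    have e1 := Submodule.eq_of_le_of_finrank_eq (inf_le_left : L ⊓ L' ≤ L) (by omega)
    have e2 := Submodule.eq_of_le_of_finrank_eq (inf_le_right : L ⊓ L' ≤ L') (by omega)
    rw [← e1]; exact e2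
  have h3 : 0 < Module.finrank k (L ⊓ L' : Submodule k V) := by
    rw [Module.finrank_pos_iff_exists_ne_zero]
    exact ⟨⟨x, hx, hx'⟩, fun h => hx0 (congrArg Subtype.val h)⟩
  obtain ⟨c, hc⟩ := exists_smul_eq_of_finrank_eq_one (by omega : Module.finrank k (L ⊓ L' : Submodule k V) = 1)
    (x := ⟨x, hx, hx'⟩) (fun h => hx0 (congrArg Subtype.val h)) ⟨y, hy, hy'⟩
  exact ⟨c, congrArg Subtype.val hc⟩

lemma finrank_sup_span {k V : Type*} [Field k] [AddCommGroup V] [Module k V] [FiniteDimensional k V]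
    {L : Submodule k V} (h : Module.finrank k L = 2) {p : V} (hp : p ∉ L) :
    Module.finrank k (L ⊔ Submodule.span k {p} : Submodule k V) = 3 := by
  have h1 := Submodule.finrank_sup_add_finrank_inf_eq L (Submodule.span k {p})
  have hp0 : p ≠ 0 := by rintro rfl; exact hp L.zero_mem
  have h2 : L ⊓ Submodule.span k {p} = ⊥ := by
    rw [← disjoint_iff, Submodule.disjoint_span_singleton' hp0]; exact hp
  rw [h2, finrank_span_singleton hp0, h] at h1
  simpa using h1

lemma no_plane {k : Type*} [Field k] [IsAlgClosed k] {d : ℕ} (hd : 2 ≤ d)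
    {F : MvPolynomial (Fin 4) k} (hhom : F.IsHomogeneous d) (hirr : Irreducible F)
    {W : Submodule k (Fin 4 → k)} (hW : Module.finrank k W = 3)
    (h : ∀ y ∈ W, eval y F = 0) : False := by
  obtain ⟨l, hl, hl1, hl2⟩ := exists_linear W (by omega)
  have h1 : l ∣ F := dvd_of_vanish hl fun x hx => h x ((hl2 x).1 hx)
  have h2 : F ∣ l := (hl.associated_of_dvd hirr h1).symm.dvd
  have h3 := totalDegree_le_of_dvd_of_isDomain h2 hl.ne_zero
  rw [hl1.totalDegree hl.ne_zero, hhom.totalDegree hirr.ne_zero] at h3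
  omega

lemma lines_in_plane {k : Type*} [Field k] [IsAlgClosed k] {d : ℕ} (hd : 2 ≤ d)
    {F : MvPolynomial (Fin 4) k} (hhom : F.IsHomogeneous d) (hirr : Irreducible F)
    {W : Submodule k (Fin 4 → k)} (hW : Module.finrank k W = 3)
    (S : Finset (Submodule k (Fin 4 → k))) (hS : ∀ L ∈ S, LineOn F L ∧ L ≤ W) :
    S.card ≤ d := by
  classical
  let φ : (Fin 3 → k) ≃ₗ[k] W := LinearEquiv.ofFinrankEq _ _ (by simp [hW])
  let ψ : (Fin 3 → k) →ₗ[k] (Fin 4 → k) := W.subtype ∘ₗ φ.toLinearMap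
  have hψ : Function.Injective ψ := by
    intro a b hab
    exact φ.injective (Subtype.ext hab)
  have hrange : LinearMap.range ψ = W := by
    simp [ψ, LinearMap.range_comp]
  let g : Fin 4 → MvPolynomial (Fin 3) k := fun i => ∑ j, C (ψ (Pi.single j 1) i) * X j
  let R : MvPolynomial (Fin 3) k := aeval g F
  have hg : ∀ z i, eval z (g i) = ψ z i := by
    intro z i
    simp only [g, map_sum, map_mul, eval_C, eval_X]
    conv_rhs => rw [LinearMap.pi_apply_eq_sum_univ ψ z]
    rw [Finset.sum_apply]
    refine Finset.sum_congr rfl fun j _ => ?_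
    rw [Pi.smul_apply, smul_eq_mul, mul_comm]
    congr 2
    have : (Pi.single j 1 : Fin 3 → k) = fun l => if j = l then 1 else 0 := by
      ext l
      simp [Pi.single_apply, eq_comm]
    rw [this]
  have hR : ∀ z, eval z R = eval (ψ z) F := by
    intro z
    have : eval z R = eval (fun i => eval z (g i)) F := by
      simp only [R]
      rw [← aeval_eq_eval, ← AlgHom.comp_apply, comp_aeval, ← aeval_eq_eval]
    rw [this]; congr 2; ext i; exact hg z i
  have hRhom : R.IsHomogeneous (1 * d) := hhom.aeval g fun i =>
    IsHomogeneous.sum _ _ _ fun j _ => isHomogeneous_C_mul_X _ _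
  have hR0 : R ≠ 0 := by
    intro h0
    apply no_plane hd hhom hirr hW
    intro y hy
    rw [← hrange] at hy
    obtain ⟨z, rfl⟩ := hy
    rw [← hR, h0]; simp
  have hmap : ∀ L ∈ S, (L.comap ψ).map ψ = L := by
    intro L hL
    rw [Submodule.map_comap_eq, hrange]
    exact inf_eq_right.2 (hS L hL).2
  have hinj : Set.InjOn (fun L : Submodule k (Fin 4 → k) => L.comap ψ) S := by
    intro L hL L' hL' h
    rw [← hmap L hL, ← hmap L' hL']
    exact congrArg _ h
  rw [← Finset.card_image_of_injOn hinj]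
  refine (card_hyperplanes hR0 _ ?_ ?_).trans (hRhom.totalDegree_le.trans (by omega))
  · intro H hH
    obtain ⟨L, hL, rfl⟩ := Finset.mem_image.1 hH
    have := (Submodule.equivMapOfInjective ψ hψ (L.comap ψ)).finrank_eq
    rw [hmap L hL, (hS L hL).1.1] at this
    simp only [this]
  · intro H hH x hx
    obtain ⟨L, hL, rfl⟩ := Finset.mem_image.1 hH
    rw [hR]
    exact (hS L hL).1.2 _ hx

lemma finite_of_card_le {α : Type*} {S : Set α} (N : ℕ) (h : ∀ T : Finset α, ↑T ⊆ S → T.card ≤ N) :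
    S.Finite := by
  by_contra hS
  obtain ⟨T, hT, hc⟩ := Set.Infinite.exists_subset_card_eq hS (N+1)
  have := h T hT
  omega

/-- Fact (c), half -/
lemma finite_lines_aux {k : Type*} [Field k] [IsAlgClosed k] {d : ℕ} (hd : 2 ≤ d)
    {F G : MvPolynomial (Fin 4) k} (hhom : F.IsHomogeneous d) (hirr : Irreducible F)
    (hG : ¬ F ∣ G) (σ : Equiv.Perm (Fin 4)) :
    {L | LineOn F L ∧ (∀ y ∈ L, eval y G = 0) ∧ Pi.single (σ 0) 1 ∉ L}.Finite := by
  classical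
  obtain ⟨R, hR, hR'⟩ := exists_elim hirr hG σ
  let π : (Fin 4 → k) →ₗ[k] (Fin 3 → k) := LinearMap.funLeft k k (σ ∘ Fin.succ)
  have hker : LinearMap.ker π = Submodule.span k {Pi.single (σ 0) 1} := by
    ext x
    rw [LinearMap.mem_ker, Submodule.mem_span_singleton]
    constructor
    · intro h
      refine ⟨x (σ 0), ?_⟩
      ext i
      obtain ⟨j, rfl⟩ := σ.surjective i
      rcases Fin.eq_zero_or_eq_succ j with rfl | ⟨j, rfl⟩
      · simp
      · have : x (σ j.succ) = 0 := congrFun h j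
        rw [this]; simp
    · rintro ⟨c, rfl⟩
      ext j
      simp [π, LinearMap.funLeft_apply]
  apply Set.Finite.of_finite_fibers (fun L => L.map π)
  · apply finite_of_card_le R.totalDegree
    intro T hT
    apply card_hyperplanes hR
    · intro H hH
      obtain ⟨L, ⟨hL, _, hL3⟩, rfl⟩ := hT hH
      have hdis : Disjoint L (LinearMap.ker π) := by
        rw [hker, Submodule.disjoint_span_singleton' (by simp)]; exact hL3
      have h1 : LinearMap.ker (π.domRestrict L) = ⊥ := by
        rw [LinearMap.ker_domRestrict]
        rw [eq_bot_iff]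
        rintro ⟨y, hy⟩ hy2
        exact Subtype.ext (Submodule.disjoint_def.1 hdis y hy hy2)
      have := LinearMap.finrank_range_of_inj (LinearMap.ker_eq_bot.1 h1)
      rw [LinearMap.range_domRestrict, hL.1] at this
      simp only [this]
    · intro H hH x hx
      obtain ⟨L, ⟨hL, hL2, hL3⟩, rfl⟩ := hT hH
      obtain ⟨y, hy, rfl⟩ := hx
      exact hR' y (hL.2 y hy) (hL2 y hy)
  · rintro H ⟨L, ⟨hL, hL2, hL3⟩, rfl⟩
    apply finite_of_card_le d
    intro T hT
    apply lines_in_plane hd hhom hirr (finrank_sup_span hL.1 hL3)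
    intro L' hL'
    obtain ⟨h1, h2⟩ := hT hL'
    refine ⟨h1.1, ?_⟩
    rw [← hker, ← Submodule.comap_map_eq]
    have h2 : L'.map π = L.map π := h2
    rw [← h2]
    exact Submodule.le_comap_map _ _

/-- Fact (c) -/
lemma finite_lines {k : Type*} [Field k] [IsAlgClosed k] {d : ℕ} (hd : 2 ≤ d)
    {F G : MvPolynomial (Fin 4) k} (hhom : F.IsHomogeneous d) (hirr : Irreducible F)
    (hG : ¬ F ∣ G) :
    {L | LineOn F L ∧ (∀ y ∈ L, eval y G = 0)}.Finite := by
  have h1 := finite_lines_aux hd hhom hirr hG (Equiv.refl _)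
  have h2 := finite_lines_aux hd hhom hirr hG (Equiv.swap 0 1)
  have h3 : {L : Submodule k (Fin 4 → k) | Module.finrank k L = 2 ∧ Pi.single 0 1 ∈ L ∧ Pi.single 1 1 ∈ L}.Finite := by
    apply Set.Subsingleton.finite
    intro L hL L' hL'
    by_contra hne
    obtain ⟨c, hc⟩ := prop_of_lines hL.1 hL'.1 hne (by simp) hL.2.1 hL'.2.1 hL.2.2 hL'.2.2
    have := congrFun hc 1
    simp at this
  refine ((h1.union h2).union h3).subset ?_
  rintro L ⟨hL, hL2⟩
  by_cases c1 : Pi.single 0 1 ∈ L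
  · by_cases c2 : Pi.single 1 1 ∈ L
    · exact Or.inr ⟨hL.1, c1, c2⟩
    · refine Or.inl (Or.inr ⟨hL, hL2, ?_⟩); simpa using c2
  · refine Or.inl (Or.inl ⟨hL, hL2, ?_⟩); simpa using c1

lemma dvd_of_infinite {k : Type*} [Field k] [IsAlgClosed k] {d : ℕ} (hd : 2 ≤ d)
    {F G : MvPolynomial (Fin 4) k} (hhom : F.IsHomogeneous d) (hirr : Irreducible F)
    {S : Set (Submodule k (Fin 4 → k))} (hS : S.Infinite)
    (h : ∀ L ∈ S, LineOn F L ∧ ∀ y ∈ L, eval y G = 0) : F ∣ G := by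
  by_contra hG
  exact hS ((finite_lines hd hhom hirr hG).subset h)


lemma hom_eval_smul {k : Type*} [Field k] {σ : Type*} {p : MvPolynomial σ k} {n : ℕ}
    (h : p.IsHomogeneous n) (t : k) (w : σ → k) : eval (t • w) p = t ^ n * eval w p := by
  rw [eval_eq, eval_eq, Finset.mul_sum]
  refine Finset.sum_congr rfl fun m hm => ?_
  have : m.degree = n := (h.degree_eq_sum_deg_support hm).symm
  simp only [Pi.smul_apply, smul_eq_mul, mul_pow, Finset.prod_mul_distrib, Finset.prod_pow_eq_pow_sum]
  rw [← this, Finsupp.degree_apply]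
  ring

lemma hc_eval {k : Type*} [Field k] [Infinite k] {σ : Type*} {p : MvPolynomial σ k} {w : σ → k}
    (hp : ∀ t : k, eval (t • w) p = 0) (N : ℕ) : eval w (homogeneousComponent N p) = 0 := by
  by_cases hN : p.totalDegree < N
  · rw [homogeneousComponent_eq_zero _ _ hN]; simp
  let q : Polynomial k := ∑ j ∈ Finset.range (p.totalDegree + 1),
    Polynomial.C (eval w (homogeneousComponent j p)) * Polynomial.X ^ j
  have hq : q = 0 := by
    apply Polynomial.funext
    intro t
    have := hp t
    rw [← sum_homogeneousComponent p, map_sum] at this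
    simp only [q, Polynomial.eval_finsetSum, Polynomial.eval_mul, Polynomial.eval_C,
      Polynomial.eval_pow, Polynomial.eval_X, Polynomial.eval_zero]
    rw [← this]
    refine Finset.sum_congr rfl fun j _ => ?_
    rw [hom_eval_smul (homogeneousComponent_isHomogeneous j p), mul_comm]
  have := congrArg (fun q => Polynomial.coeff q N) hq
  simp only [q, Polynomial.finsetSum_coeff, Polynomial.coeff_C_mul_X_pow, Polynomial.coeff_zero] at this
  rw [Finset.sum_ite_eq, if_pos (Finset.mem_range.2 (by omega))] at this
  exact this

noncomputable def mon2 (N m : ℕ) : Fin 2 →₀ ℕ := Finsupp.single 0 m + Finsupp.single 1 (N - m)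

lemma hom2_eq {k : Type*} [Field k] {h : MvPolynomial (Fin 2) k} {N : ℕ} (hh : h.IsHomogeneous N) :
    h = ∑ m : Fin (N+1), monomial (mon2 N m) (coeff (mon2 N m) h) := by
  classical
  ext e
  rw [coeff_sum]
  simp only [coeff_monomial]
  by_cases he : e.degree = N
  · have h01 : e 0 + e 1 = N := by
      rw [← he, Finsupp.degree_eq_sum]; simp
    have hm : mon2 N (e 0) = e := by
      ext i; fin_cases i
      · simp [mon2]
      · simp [mon2]; omega
    rw [Finset.sum_eq_single (⟨e 0, by omega⟩ : Fin (N+1))]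
    · simp [hm]
    · intro b _ hb
      rw [if_neg]
      rintro rfl
      apply hb
      ext; simp [mon2]
    · simp
  · rw [hh.coeff_eq_zero he]
    symm
    apply Finset.sum_eq_zero
    intro m _
    split_ifs with h1
    · rw [h1, hh.coeff_eq_zero he]
    · rfl

lemma hom2_eval {k : Type*} [Field k] (q : MvPolynomial (Fin 2) k) (N : ℕ) (w : Fin 2 → k) :
    eval w (homogeneousComponent N q) =
      ∑ m : Fin (N+1), coeff (mon2 N m) q * (w 0 ^ (m:ℕ) * w 1 ^ (N - m)) := by
  rw [hom2_eq (homogeneousComponent_isHomogeneous N q), map_sum]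
  refine Finset.sum_congr rfl fun m _ => ?_
  rw [eval_monomial, coeff_homogeneousComponent, if_pos]
  · congr 1
    rw [Finsupp.prod_fintype _ _ (by simp)]
    simp [mon2]
  · have := m.2
    rw [mon2, Finsupp.degree_eq_sum]
    simp only [Fin.sum_univ_two, Finsupp.add_apply]
    simp
    omega

lemma elim_closed {k : Type*} [Field k] [IsAlgClosed k] {F : MvPolynomial (Fin 4) k}
    (a b x0 : Fin 4 → k)
    (h0 : ¬ ∃ w : Fin 2 → k, w ≠ 0 ∧ ∀ t : k, eval (x0 + t • (w 0 • a + w 1 • b)) F = 0) :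
    ∃ G : MvPolynomial (Fin 4) k, eval x0 G ≠ 0 ∧ ∀ x,
      (∃ w : Fin 2 → k, w ≠ 0 ∧ ∀ t : k, eval (x + t • (w 0 • a + w 1 • b)) F = 0) →
      eval x G = 0 := by
  classical
  have : Infinite k := IsAlgClosed.instInfinite
  let P : MvPolynomial (Fin 2) (MvPolynomial (Fin 4) k) :=
    eval₂ (C.comp C) (fun i => C (X i) + C (C (a i)) * X 0 + C (C (b i)) * X 1) F
  have hP : ∀ x w, eval w (map (eval x) P) = eval (x + (w 0 • a + w 1 • b)) F := by
    intro x w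
    simp only [P]
    rw [← coe_eval₂Hom, ← RingHom.comp_apply, ← RingHom.comp_apply]
    congr 1
    apply MvPolynomial.ringHom_ext
    · intro r; simp
    · intro i; simp; ring
  let f : ℕ → MvPolynomial (Fin 2) (MvPolynomial (Fin 4) k) := fun j => homogeneousComponent j P
  let g : ℕ → (Fin 4 → k) → MvPolynomial (Fin 2) k := fun j x => map (eval x) (f j)
  have hg : ∀ j x, g j x = homogeneousComponent j (map (eval x) P) := by
    intro j x
    ext e
    simp only [g, f, coeff_map, coeff_homogeneousComponent]
    split_ifs <;> simp
  have hghom : ∀ j x, (g j x).IsHomogeneous j := fun j x => by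
    rw [hg]; exact homogeneousComponent_isHomogeneous _ _
  have hfor : ∀ x w, (∀ t : k, eval (x + t • (w 0 • a + w 1 • b)) F = 0) → ∀ j, eval w (g j x) = 0 := by
    intro x w h j
    rw [hg]
    apply hc_eval
    intro t
    rw [hP, ← h t]
    congr 2
    simp [smul_add, mul_smul]
  let D := P.totalDegree
  have hback : ∀ x w, (∀ j : Fin (D+1), eval w (g j x) = 0) →
      (∀ t : k, eval (x + t • (w 0 • a + w 1 • b)) F = 0) := by
    intro x w h t
    have h1 : eval (x + t • (w 0 • a + w 1 • b)) F = eval (t • w) (map (eval x) P) := by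
      rw [hP]; congr 2
      simp [smul_add, mul_smul]
    rw [h1, ← sum_homogeneousComponent P, map_sum, map_sum]
    apply Finset.sum_eq_zero
    intro j hj
    have h2 := h ⟨j, by simpa [D] using hj⟩
    have h3 := hom_eval_smul (hghom j x) t w
    rw [show map (eval x) (homogeneousComponent j P) = g j x from rfl, h3]
    simp at h2
    rw [h2, mul_zero]
  let I : Ideal (MvPolynomial (Fin 2) k) := Ideal.span (Set.range fun j : Fin (D+1) => g j x0)
  have hz : ∀ w ∈ zeroLocus k I, w = 0 := by
    intro w hw
    by_contra hne
    apply h0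
    refine ⟨w, hne, hback x0 w fun j => ?_⟩
    have := mem_zeroLocus_iff.1 hw (g j x0) (Ideal.subset_span ⟨j, rfl⟩)
    rwa [aeval_eq_eval] at this
  have hX : ∀ i : Fin 2, ∃ n, X i ^ n ∈ I := by
    intro i
    have : (X i : MvPolynomial (Fin 2) k) ∈ vanishingIdeal k (zeroLocus k I) := by
      rw [mem_vanishingIdeal_iff]
      intro w hw
      rw [hz w hw]; simp
    rw [vanishingIdeal_zeroLocus_eq_radical] at this
    exact this
  obtain ⟨n0, hn0⟩ := hX 0
  obtain ⟨n1, hn1⟩ := hX 1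
  let N := n0 + n1
  have hmon : ∀ l : Fin (N+1), ∃ c : Fin (D+1) → MvPolynomial (Fin 2) k,
      ∑ j, c j * g j x0 = monomial (mon2 N l) 1 := by
    intro l
    have : monomial (mon2 N l) (1:k) ∈ I := by
      have e : monomial (mon2 N l) (1:k) = X 0 ^ (l:ℕ) * X 1 ^ (N - l) := by
        rw [mon2, X_pow_eq_monomial, X_pow_eq_monomial, monomial_mul, one_mul]
      rw [e]
      by_cases hl : n0 ≤ l
      · exact Ideal.mul_mem_right _ _ (I.pow_mem_of_pow_mem hn0 hl)
      · exact Ideal.mul_mem_left _ _ (I.pow_mem_of_pow_mem hn1 (by omega))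
    exact Ideal.mem_span_range_iff_exists_fun.1 this
  choose c hc using hmon
  let M : Matrix (Fin (N+1)) (Fin (N+1)) (MvPolynomial (Fin 4) k) := fun l m =>
    coeff (mon2 N m) (∑ j, map C (c l j) * f j)
  have hM : ∀ x l m, eval x (M l m) = coeff (mon2 N m) (∑ j, c l j * g j x) := by
    intro x l m
    simp only [M, g]
    rw [← coeff_map, map_sum]
    congr 1
    refine Finset.sum_congr rfl fun j _ => ?_
    rw [map_mul, map_map]
    congr 1
    have : (eval x).comp C = RingHom.id k := by ext r; simp
    rw [this, map_id]
  refine ⟨M.det, ?_, ?_⟩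
  · have : (eval x0) M.det = 1 := by
      rw [RingHom.map_det]
      rw [← Matrix.det_one (n := Fin (N+1))]
      congr 1
      ext l m
      rw [RingHom.mapMatrix_apply, Matrix.map_apply, hM, hc, coeff_monomial, Matrix.one_apply]
      congr 1
      simp only [eq_iff_iff]
      constructor
      · intro h
        have := DFunLike.congr_fun h 0
        simp [mon2] at this
        exact Fin.ext this
      · rintro rfl; rfl
    rw [this]; exact one_ne_zero
  · rintro x ⟨w, hw, hw2⟩
    rw [RingHom.map_det, ← Matrix.exists_mulVec_eq_zero_iff]
    refine ⟨fun m => w 0 ^ (m:ℕ) * w 1 ^ (N - m), ?_, ?_⟩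
    · intro h
      apply hw
      have h1 := congrFun h (Fin.last N)
      have h2 := congrFun h 0
      simp at h1 h2
      ext i; fin_cases i
      · exact h1.1
      · exact h2.1
    · ext l
      simp only [Matrix.mulVec, dotProduct, RingHom.mapMatrix_apply, Matrix.map_apply, hM]
      rw [← hom2_eval]
      apply hc_eval
      intro t
      rw [map_sum]
      apply Finset.sum_eq_zero
      intro j _
      rw [map_mul, hom_eval_smul (hghom j x), hfor x w hw2, mul_zero, mul_zero]

lemma line_through {k : Type*} [Field k] [IsAlgClosed k] {d : ℕ} (hd : 2 ≤ d)
    {F : MvPolynomial (Fin 4) k} (hhom : F.IsHomogeneous d) (hirr : Irreducible F)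
    {L : Submodule k (Fin 4 → k)} (hL : LineOn F L)
    (hinf : {M | LineOn F M ∧ ∃ y ∈ L, y ≠ 0 ∧ y ∈ M}.Infinite)
    {x : Fin 4 → k} (hx : eval x F = 0) :
    ∃ M, LineOn F M ∧ x ∈ M ∧ ∃ y ∈ L, y ≠ 0 ∧ y ∈ M := by
  let B := Module.finBasisOfFinrankEq k L hL.1
  let a : Fin 4 → k := B 0
  let b : Fin 4 → k := B 1
  have hmem : ∀ w : Fin 2 → k, w 0 • a + w 1 • b ∈ L := fun w =>
    L.add_mem (L.smul_mem _ (B 0).2) (L.smul_mem _ (B 1).2)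
  have hne : ∀ w : Fin 2 → k, w 0 • a + w 1 • b = 0 → w = 0 := by
    intro w hw
    have := Fintype.linearIndependent_iff.1 B.linearIndependent w (by
      apply Subtype.ext
      simpa using hw)
    ext i; exact this i
  have hsurj : ∀ y ∈ L, ∃ w : Fin 2 → k, y = w 0 • a + w 1 • b := by
    intro y hy
    refine ⟨B.repr ⟨y, hy⟩, ?_⟩
    have := congrArg Subtype.val (B.sum_repr ⟨y, hy⟩)
    rw [Fin.sum_univ_two] at this
    exact this.symm
  by_contra hcon
  have h0 : ¬ ∃ w : Fin 2 → k, w ≠ 0 ∧ ∀ t : k, eval (x + t • (w 0 • a + w 1 • b)) F = 0 := by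
    rintro ⟨w, hw, hw2⟩
    apply hcon
    generalize hy : w 0 • a + w 1 • b = y at hw2
    have hyL : y ∈ L := hy ▸ hmem w
    have hy0 : y ≠ 0 := fun h => hw (hne w (hy.trans h))
    by_cases hxL : x ∈ L
    · exact ⟨L, hL, hxL, y, hyL, hy0, hyL⟩
    · refine ⟨Submodule.span k {x, y}, ⟨?_, ?_⟩, Submodule.subset_span (by simp), y, hyL, hy0,
        Submodule.subset_span (by simp)⟩
      · have hli : LinearIndependent k ![x, y] := by
          rw [LinearIndependent.pair_symm_iff, LinearIndependent.pair_iff' hy0]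
          intro c hc
          exact hxL (hc ▸ L.smul_mem c hyL)
        have := finrank_span_eq_card hli
        have e : Set.range ![x, y] = {x, y} := by
          ext z; simp [eq_comm]; tauto
        rw [e] at this
        simpa using this
      · intro z hz
        obtain ⟨α, β, rfl⟩ := Submodule.mem_span_pair.1 hz
        by_cases hα : α = 0
        · subst hα
          simpa using hL.2 _ (L.smul_mem β hyL)
        · have : α • x + β • y = α • (x + (β / α) • y) := by
            rw [smul_add, smul_smul, mul_div_cancel₀ _ hα]
          rw [this, hom_eval_smul hhom, hw2, mul_zero]
  obtain ⟨G, hG0, hG⟩ := elim_closed a b x h0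
  have : F ∣ G := by
    apply dvd_of_infinite hd hhom hirr hinf
    rintro M ⟨hM, y, hyL, hy0, hyM⟩
    refine ⟨hM, fun z hz => hG z ?_⟩
    obtain ⟨w, rfl⟩ := hsurj y hyL
    refine ⟨w, ?_, fun t => hM.2 _ (M.add_mem hz (M.smul_mem t hyM))⟩
    rintro rfl
    simp at hy0
  obtain ⟨c, rfl⟩ := this
  apply hG0
  rw [map_mul, hx, zero_mul]


noncomputable def lineP {k : Type*} [Field k] {n : ℕ} (F : MvPolynomial (Fin n) k) (x v : Fin n → k) :
    Polynomial k := aeval (fun i => Polynomial.C (x i) + Polynomial.C (v i) * Polynomial.X) F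

lemma lineP_eval {k : Type*} [Field k] {n : ℕ} (F : MvPolynomial (Fin n) k) (x v : Fin n → k) (t : k) :
    (lineP F x v).eval t = eval (x + t • v) F := by
  rw [lineP, ← Polynomial.coe_aeval_eq_eval, ← AlgHom.comp_apply, comp_aeval, ← aeval_eq_eval]
  have : (fun i => Polynomial.aeval t (Polynomial.C (x i) + Polynomial.C (v i) * Polynomial.X)) = x + t • v := by
    ext i
    rw [Polynomial.coe_aeval_eq_eval]
    simp only [Polynomial.eval_add, Polynomial.eval_mul, Polynomial.eval_C, Polynomial.eval_X, Pi.add_apply,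
      Pi.smul_apply, smul_eq_mul]
    ring
  rw [this]

lemma lineP_deriv {k : Type*} [Field k] {n : ℕ} (F : MvPolynomial (Fin n) k) (x v : Fin n → k) :
    (lineP F x v).derivative = ∑ i, Polynomial.C (v i) * lineP (pderiv i F) x v := by
  induction F using MvPolynomial.induction_on with
  | C a => simp [lineP, algebraMap_eq, aeval_C]
  | add p q hp hq =>
    simp only [lineP, map_add, mul_add, Finset.sum_add_distrib] at *
    rw [hp, hq]
  | mul_X p j hp =>
    have hX : lineP (X j) x v = Polynomial.C (x j) + Polynomial.C (v j) * Polynomial.X := by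
      rw [lineP, aeval_X]
    have hm : ∀ a b : MvPolynomial (Fin n) k, lineP (a * b) x v = lineP a x v * lineP b x v := by
      intro a b; simp only [lineP, map_mul]
    have ha : ∀ a b : MvPolynomial (Fin n) k, lineP (a + b) x v = lineP a x v + lineP b x v := by
      intro a b; simp only [lineP, map_add]
    have hd : (lineP (X j) x v).derivative = Polynomial.C (v j) := by
      rw [hX]; simp
    rw [hm, Polynomial.derivative_mul, hp, hd]
    simp only [Derivation.leibniz, smul_eq_mul, ha, hm, mul_add, Finset.sum_add_distrib]
    rw [add_comm]
    congr 1
    · rw [Finset.sum_eq_single j]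
      · rw [pderiv_X_self]; simp [lineP]; ring
      · intro b _ hb
        rw [pderiv_X_of_ne hb.symm]; simp [lineP]
      · simp
    · rw [Finset.sum_mul]
      refine Finset.sum_congr rfl fun i _ => ?_
      ring

lemma tangent {k : Type*} [Field k] [Infinite k] {F : MvPolynomial (Fin 4) k}
    {L : Submodule k (Fin 4 → k)} (hL : LineOn F L) {x v : Fin 4 → k} (hx : x ∈ L) (hv : v ∈ L) :
    ∑ i, v i * eval x (pderiv i F) = 0 := by
  have h0 : lineP F x v = 0 := by
    apply Polynomial.funext
    intro t
    rw [lineP_eval, Polynomial.eval_zero]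
    exact hL.2 _ (L.add_mem hx (L.smul_mem t hv))
  have := congrArg (Polynomial.eval 0) (lineP_deriv F x v)
  rw [h0, Polynomial.eval_finsetSum] at this
  simpa [lineP_eval] using this.symm

lemma smooth_count {k : Type*} [Field k] [IsAlgClosed k] {d : ℕ} (hd : 2 ≤ d)
    {F : MvPolynomial (Fin 4) k} (hhom : F.IsHomogeneous d) (hirr : Irreducible F)
    {x : Fin 4 → k} {i : Fin 4} (hx : eval x (pderiv i F) ≠ 0)
    (S : Finset (Submodule k (Fin 4 → k))) (hS : ∀ L ∈ S, LineOn F L ∧ x ∈ L) :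
    S.card ≤ d := by
  have : Infinite k := IsAlgClosed.instInfinite
  let f : (Fin 4 → k) →ₗ[k] k := ∑ j, eval x (pderiv j F) • LinearMap.proj j
  have hf : ∀ v, f v = ∑ j, v j * eval x (pderiv j F) := by
    intro v; simp [f, mul_comm]
  have hf0 : f ≠ 0 := by
    intro h
    apply hx
    have := hf (Pi.single i 1)
    rw [h] at this
    simpa [Pi.single_apply] using this.symm
  have hker : Module.finrank k (LinearMap.ker f) = 3 := by
    have h1 := LinearMap.finrank_range_add_finrank_ker f
    have h2 : Module.finrank k (LinearMap.range f) = 1 := by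
      rw [LinearMap.range_eq_top.2 (LinearMap.surjective hf0)]; simp
    simp at h1
    omega
  apply lines_in_plane hd hhom hirr hker
  intro L hL
  refine ⟨(hS L hL).1, fun v hv => ?_⟩
  rw [LinearMap.mem_ker, hf]
  exact tangent (hS L hL).1 (hS L hL).2 hv

lemma exists_indep {k : Type*} [Field k] {L : Submodule k (Fin 4 → k)} (hL : Module.finrank k L = 2)
    (x : Fin 4 → k) : ∃ v ∈ L, ¬ ∃ c : k, c • x = v := by
  by_contra h
  push Not at h
  have : L ≤ Submodule.span k {x} := fun v hv => Submodule.mem_span_singleton.2 (h v hv)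
  have h1 := Submodule.finrank_mono this
  have h2 := finrank_span_le_card (R := k) ({x} : Set (Fin 4 → k))
  simp at h2
  omega

lemma pts {k : Type*} [Field k] [Infinite k] (G : MvPolynomial (Fin 4) k)
    {L : Submodule k (Fin 4 → k)} (hL : Module.finrank k L = 2) {x : Fin 4 → k} (hx : x ∈ L)
    (hx0 : x ≠ 0) (hG : eval x G ≠ 0) (T : Set (Submodule k (Fin 4 → k)))
    (hT : ∀ y ∈ L, eval y G ≠ 0 → ∃ M ∈ T, M ≠ L ∧ Module.finrank k M = 2 ∧ y ∈ M) :
    T.Infinite := by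
  classical
  intro hfin
  obtain ⟨v, hv, hvx⟩ := exists_indep hL x
  have hne : lineP G x v ≠ 0 := by
    intro h
    have := lineP_eval G x v 0
    rw [h] at this
    simp at this
    exact hG this.symm
  have hinf : {t : k | (lineP G x v).eval t ≠ 0}.Infinite := by
    have h1 : {t : k | (lineP G x v).eval t = 0}.Finite := by
      refine ((lineP G x v).roots.toFinset.finite_toSet).subset ?_
      intro t ht
      simpa [hne] using ht
    exact h1.infinite_compl
  choose! M hM using hT
  obtain ⟨t, ht, t', ht', htt, hMM⟩ := Set.Infinite.exists_ne_map_eq_of_mapsTo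
    (f := fun t : k => M (x + t • v)) (t := T) hinf (by
      intro t ht
      exact (hM _ (L.add_mem hx (L.smul_mem t hv)) (by rw [← lineP_eval]; exact ht)).1) hfin
  have a1 := hM _ (L.add_mem hx (L.smul_mem t hv)) (by rw [← lineP_eval]; exact ht)
  have a2 := hM _ (L.add_mem hx (L.smul_mem t' hv)) (by rw [← lineP_eval]; exact ht')
  change M (x + t • v) = M (x + t' • v) at hMM
  rw [← hMM] at a2
  have hvM : v ∈ M (x + t • v) := by
    have h1 := Submodule.sub_mem _ a1.2.2.2 a2.2.2.2
    have h2 : x + t • v - (x + t' • v) = (t - t') • v := by module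
    rw [h2] at h1
    exact (Submodule.smul_mem_iff _ (sub_ne_zero.2 htt)).1 h1
  have hxM : x ∈ M (x + t • v) := by
    have := Submodule.sub_mem _ a1.2.2.2 (Submodule.smul_mem _ t hvM)
    simpa using this
  exact hvx (prop_of_lines a1.2.2.1 hL a1.2.1 hx0 hxM hx hvM hv)

lemma span_two {k : Type*} [Field k] {L : Submodule k (Fin 4 → k)} (hL : Module.finrank k L = 2)
    {p q : Fin 4 → k} (hp : p ∈ L) (hq : q ∈ L) (hp0 : p ≠ 0) (hpq : ¬ ∃ c : k, c • p = q)
    {z : Fin 4 → k} (hz : z ∈ L) : ∃ α β : k, α • p + β • q = z := by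
  have hli : LinearIndependent k ![p, q] := by
    rw [LinearIndependent.pair_iff' hp0]
    intro c hc; exact hpq ⟨c, hc⟩
  have e : Set.range ![p, q] = {p, q} := by
    ext z; simp [eq_comm]; tauto
  have h1 := finrank_span_eq_card hli
  rw [e] at h1
  have h2 : Submodule.span k {p, q} = L := by
    apply Submodule.eq_of_le_of_finrank_eq
    · rw [Submodule.span_le]; rintro z (rfl | rfl) <;> assumption
    · rw [h1, hL]; simp
  rw [← h2] at hz
  exact Submodule.mem_span_pair.1 hz

def idx10 : Fin 10 → Fin 4 × Fin 4 :=
  ![(0,0),(0,1),(0,2),(0,3),(1,1),(1,2),(1,3),(2,2),(2,3),(3,3)]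

lemma exists_quadric {k : Type*} [Field k] (p : Fin 3 → Fin 3 → Fin 4 → k) :
    ∃ Q : MvPolynomial (Fin 4) k, Q ≠ 0 ∧ Q.totalDegree ≤ 2 ∧ (∀ i j, eval (p i j) Q = 0) ∧
      ∃ B : (Fin 4 → k) → (Fin 4 → k) → k, ∀ (x y : Fin 4 → k) (α β : k), eval (α • x + β • y) Q =
        α ^ 2 * eval x Q + β ^ 2 * eval y Q + α * β * B x y := by
  let A : Matrix (Fin 3 × Fin 3) (Fin 10) k := fun s n => p s.1 s.2 (idx10 n).1 * p s.1 s.2 (idx10 n).2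
  have hA : LinearMap.ker A.mulVecLin ≠ ⊥ := by
    apply LinearMap.ker_ne_bot_of_finrank_lt
    simp
  obtain ⟨c, hc, hc0⟩ := Submodule.exists_mem_ne_zero_of_ne_bot hA
  let Q : MvPolynomial (Fin 4) k := ∑ n, C (c n) * (X (idx10 n).1 * X (idx10 n).2)
  have hQ : ∀ x, eval x Q = ∑ n, c n * (x (idx10 n).1 * x (idx10 n).2) := by
    intro x; simp [Q]
  refine ⟨Q, ?_, ?_, ?_, fun x y => ∑ n, c n * (x (idx10 n).1 * y (idx10 n).2 + y (idx10 n).1 * x (idx10 n).2), ?_⟩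
  · intro h
    apply hc0
    have h1 : ∀ x : Fin 4 → k, ∑ n, c n * (x (idx10 n).1 * x (idx10 n).2) = 0 := by
      intro x; rw [← hQ, h]; simp
    have e0 := h1 ![1,0,0,0]
    have e1 := h1 ![0,1,0,0]
    have e2 := h1 ![0,0,1,0]
    have e3 := h1 ![0,0,0,1]
    have e01 := h1 ![1,1,0,0]
    have e02 := h1 ![1,0,1,0]
    have e03 := h1 ![1,0,0,1]
    have e12 := h1 ![0,1,1,0]
    have e13 := h1 ![0,1,0,1]
    have e23 := h1 ![0,0,1,1]
    simp [Fin.sum_univ_succ, idx10] at e0 e1 e2 e3 e01 e02 e03 e12 e13 e23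
    ext n
    fin_cases n <;> simp <;> grind
  · apply (totalDegree_finsetSum_le (d := 2))
    intro n _
    apply (totalDegree_mul _ _).trans
    have := totalDegree_mul (X (idx10 n).1 : MvPolynomial (Fin 4) k) (X (idx10 n).2)
    simp only [totalDegree_X, totalDegree_C] at *
    omega
  · intro i j
    rw [hQ]
    have := congrFun (LinearMap.mem_ker.1 hc) (i, j)
    rw [Matrix.mulVecLin_apply] at this
    change ∑ n, (p i j (idx10 n).1 * p i j (idx10 n).2) * c n = 0 at this
    rw [← this]
    refine Finset.sum_congr rfl fun n _ => ?_
    ring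
  · intro x y α β
    simp only [hQ, Finset.mul_sum, ← Finset.sum_add_distrib]
    refine Finset.sum_congr rfl fun n _ => ?_
    simp
    ring


def GoodH {k : Type*} [Field k] (F G : MvPolynomial (Fin 4) k) : Prop :=
  ∀ x, eval x F = 0 → eval x G ≠ 0 → ∃ L₁ L₂, L₁ ≠ L₂ ∧ LineOn F L₁ ∧ LineOn F L₂ ∧ x ∈ L₁ ∧ x ∈ L₂

lemma exists_shift {k : Type*} [Field k] (F : MvPolynomial (Fin 4) k) (p : Fin 4 → k) :
    ∃ H : MvPolynomial (Fin 4) k, ∀ x, eval x H = eval (x + p) F := by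
  refine ⟨bind₁ (fun i => X i + C (p i)) F, fun x => ?_⟩
  rw [← aeval_eq_eval, aeval_bind₁, ← aeval_eq_eval]
  have : (fun i => (aeval x) ((X i : MvPolynomial (Fin 4) k) + C (p i))) = x + p := by
    ext i; simp
  rw [this]

lemma exists_good {k : Type*} [Field k] [IsAlgClosed k] {F G : MvPolynomial (Fin 4) k} (hirr : Irreducible F)
    (hnd : ¬ F ∣ G) : ∃ x, eval x F = 0 ∧ eval x G ≠ 0 := by
  by_contra h
  push Not at h
  exact hnd (dvd_of_vanish hirr h)

lemma no_cone {k : Type*} [Field k] [IsAlgClosed k] {d : ℕ} (hd : 2 ≤ d)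
    {F G : MvPolynomial (Fin 4) k} (hhom : F.IsHomogeneous d) (hirr : Irreducible F)
    {e : ℕ} (hGh : G.IsHomogeneous e) (he : e ≠ 0)
    (hnd : ¬ F ∣ G) (hgood : GoodH F G) {p : Fin 4 → k} (hp0 : p ≠ 0) (hGp : eval p G = 0)
    (hc : ∀ x, eval x F = 0 → ∀ t : k, eval (x + t • p) F = 0) : False := by
  obtain ⟨x, hx, hxG⟩ := exists_good hirr hnd
  obtain ⟨L₁, L₂, hne, h1, h2, m1, m2⟩ := hgood x hx hxG
  have key : ∀ L, LineOn F L → p ∉ L → False := by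
    intro L hL hpL
    refine no_plane hd hhom hirr (finrank_sup_span hL.1 hpL) fun y hy => ?_
    obtain ⟨z, hz, w, hw, rfl⟩ := Submodule.mem_sup.1 hy
    obtain ⟨t, rfl⟩ := Submodule.mem_span_singleton.1 hw
    exact hc z (hL.2 z hz) t
  have p1 : p ∈ L₁ := by by_contra h; exact key _ h1 h
  have p2 : p ∈ L₂ := by by_contra h; exact key _ h2 h
  obtain ⟨c, rfl⟩ := prop_of_lines h1.1 h2.1 hne hp0 p1 p2 m1 m2
  rw [hom_eval_smul hGh, hGp] at hxG
  simp at hxG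

lemma through_finite {k : Type*} [Field k] [IsAlgClosed k] {d : ℕ} (hd : 2 ≤ d)
    {F G : MvPolynomial (Fin 4) k} (hhom : F.IsHomogeneous d) (hirr : Irreducible F)
    {i : Fin 4} (hGi : G = pderiv i F)
    {e : ℕ} (hGh : G.IsHomogeneous e) (he : e ≠ 0)
    (hnd : ¬ F ∣ G) (hgood : GoodH F G) {p : Fin 4 → k} (hp0 : p ≠ 0) :
    {M | LineOn F M ∧ p ∈ M}.Finite := by
  by_cases hGp : eval p G = 0
  · by_contra hinf
    refine no_cone hd hhom hirr hGh he hnd hgood hp0 hGp fun x hx t => ?_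
    obtain ⟨H, hH⟩ := exists_shift F (t • p)
    have : F ∣ H := by
      refine dvd_of_infinite hd hhom hirr hinf fun L hL => ⟨hL.1, fun y hy => ?_⟩
      rw [hH]
      exact hL.1.2 _ (L.add_mem hy (L.smul_mem t hL.2))
    rw [← hH]
    obtain ⟨K, rfl⟩ := this
    simp [hx]
  · refine finite_of_card_le d fun T hT => ?_
    subst hGi
    exact smooth_count hd hhom hirr hGp T fun L hL => hT hL

lemma good_ne {k : Type*} [Field k] {G : MvPolynomial (Fin 4) k} {e : ℕ} (hGh : G.IsHomogeneous e) (he : e ≠ 0)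
    {x : Fin 4 → k} (hx : eval x G ≠ 0) : x ≠ 0 := by
  rintro rfl
  apply hx
  have := hom_eval_smul hGh 0 (0 : Fin 4 → k)
  simpa [he] using this

lemma other {k : Type*} [Field k] {F G : MvPolynomial (Fin 4) k} (hgood : GoodH F G) {x : Fin 4 → k}
    (hx : eval x F = 0) (hG : eval x G ≠ 0) (L : Submodule k (Fin 4 → k)) :
    ∃ M, M ≠ L ∧ LineOn F M ∧ x ∈ M := by
  obtain ⟨L₁, L₂, hne, h1, h2, m1, m2⟩ := hgood x hx hG
  by_cases h : L₁ = L
  · exact ⟨L₂, fun h' => hne (h.trans h'.symm), h2, m2⟩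
  · exact ⟨L₁, h, h1, m1⟩

lemma good_infinite {k : Type*} [Field k] [IsAlgClosed k] {F G : MvPolynomial (Fin 4) k} (hirr : Irreducible F)
    {e : ℕ} (hGh : G.IsHomogeneous e) (he : e ≠ 0) (hnd : ¬ F ∣ G) (hgood : GoodH F G) :
    {L | LineOn F L ∧ ∃ x ∈ L, eval x G ≠ 0}.Infinite := by
  have : Infinite k := IsAlgClosed.instInfinite
  obtain ⟨x, hx, hxG⟩ := exists_good hirr hnd
  obtain ⟨L, -, hL, hxL⟩ := other hgood hx hxG ⊥
  refine pts G hL.1 hxL (good_ne hGh he hxG) hxG _ fun y hy hyG => ?_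
  obtain ⟨M, hne, hM, hyM⟩ := other hgood (hL.2 y hy) hyG L
  exact ⟨M, ⟨hM, y, hyM, hyG⟩, hne, hM.1, hyM⟩

lemma meet_all {k : Type*} [Field k] [IsAlgClosed k] {d : ℕ} (hd : 2 ≤ d)
    {F G : MvPolynomial (Fin 4) k} (hhom : F.IsHomogeneous d) (hirr : Irreducible F)
    {e : ℕ} (hGh : G.IsHomogeneous e) (he : e ≠ 0) (hgood : GoodH F G)
    {L : Submodule k (Fin 4 → k)} (hL : LineOn F L) {x : Fin 4 → k} (hxL : x ∈ L) (hxG : eval x G ≠ 0)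
    {z : Fin 4 → k} (hz : eval z F = 0) :
    ∃ M, LineOn F M ∧ z ∈ M ∧ ∃ y ∈ L, y ≠ 0 ∧ y ∈ M := by
  have : Infinite k := IsAlgClosed.instInfinite
  refine line_through hd hhom hirr hL ?_ hz
  refine pts G hL.1 hxL (good_ne hGh he hxG) hxG _ fun y hy hyG => ?_
  obtain ⟨M, hne, hM, hyM⟩ := other hgood (hL.2 y hy) hyG L
  exact ⟨M, ⟨hM, y, hy, good_ne hGh he hyG, hyM⟩, hne, hM.1, hyM⟩

/-- two lines meet -/
def Meets {k : Type*} [Field k] (L M : Submodule k (Fin 4 → k)) : Prop := ∃ y ∈ L, y ≠ 0 ∧ y ∈ M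

lemma bad_finite {k : Type*} [Field k] [IsAlgClosed k] {d : ℕ} (hd : 2 ≤ d)
    {F G : MvPolynomial (Fin 4) k} (hhom : F.IsHomogeneous d) (hirr : Irreducible F)
    {i : Fin 4} (hGi : G = pderiv i F)
    {e : ℕ} (hGh : G.IsHomogeneous e) (he : e ≠ 0)
    (hnd : ¬ F ∣ G) (hgood : GoodH F G) {a b : Submodule k (Fin 4 → k)} (ha : LineOn F a) (hb : LineOn F b)
    (hab : a ≠ b) : {M | LineOn F M ∧ ∃ y, y ≠ 0 ∧ y ∈ a ∧ y ∈ b ∧ y ∈ M}.Finite := by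
  by_cases h : ∃ y, y ≠ 0 ∧ y ∈ a ∧ y ∈ b
  · obtain ⟨p, hp0, hpa, hpb⟩ := h
    refine (through_finite hd hhom hirr hGi hGh he hnd hgood hp0).subset ?_
    rintro M ⟨hM, y, hy0, hya, hyb, hyM⟩
    refine ⟨hM, ?_⟩
    obtain ⟨c, rfl⟩ := prop_of_lines ha.1 hb.1 hab hy0 hya hyb hpa hpb
    exact M.smul_mem _ hyM
  · convert Set.finite_empty
    ext M
    simp only [Set.mem_setOf_eq, Set.mem_empty_iff_false, iff_false]
    rintro ⟨hM, y, hy0, hya, hyb, hyM⟩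
    exact h ⟨y, hy0, hya, hyb⟩

lemma basis2 {k : Type*} [Field k] {L : Submodule k (Fin 4 → k)} (hL : Module.finrank k L = 2) :
    ∃ u ∈ L, ∃ v ∈ L, ∀ z ∈ L, ∃ α β : k, α • u + β • v = z := by
  obtain ⟨u, hu, hu0⟩ := exists_indep hL 0
  have hu0 : u ≠ 0 := by rintro rfl; exact hu0 ⟨0, by simp⟩
  obtain ⟨v, hv, hvu⟩ := exists_indep hL u
  exact ⟨u, hu, v, hv, fun z hz => span_two hL hu hv hu0 hvu hz⟩

lemma quadric_three {k : Type*} [Field k] (a : Fin 3 → Submodule k (Fin 4 → k))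
    (ha : ∀ i, Module.finrank k (a i) = 2) :
    ∃ Q : MvPolynomial (Fin 4) k, Q ≠ 0 ∧ Q.totalDegree ≤ 2 ∧ (∀ i, ∀ y ∈ a i, eval y Q = 0) ∧
      ∀ M : Submodule k (Fin 4 → k), Module.finrank k M = 2 → ∀ p q r : Fin 4 → k, p ∈ M → q ∈ M → r ∈ M →
        p ≠ 0 → (¬ ∃ c : k, c • p = q) → (¬ ∃ c : k, c • p = r) → (¬ ∃ c : k, c • q = r) →
        eval p Q = 0 → eval q Q = 0 → eval r Q = 0 → ∀ y ∈ M, eval y Q = 0 := by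
  choose u hu v hv huv using fun i => basis2 (ha i)
  obtain ⟨Q, hQ0, hQd, hQ, B, hB⟩ := exists_quadric fun i => ![u i, v i, u i + v i]
  refine ⟨Q, hQ0, hQd, ?_, ?_⟩
  · intro i y hy
    have h0 := hQ i 0
    have h1 := hQ i 1
    have h2 := hQ i 2
    simp at h0 h1 h2
    have h3 := hB (u i) (v i) 1 1
    simp [h0, h1, h2] at h3
    obtain ⟨α, β, rfl⟩ := huv i y hy
    rw [hB, h0, h1, ← h3]; simp
  · intro M hM p q r hp hq hr hp0 hpq hpr hqr ep eq er y hy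
    obtain ⟨α, β, rfl⟩ := span_two hM hp hq hp0 hpq hr
    have hα : α ≠ 0 := by rintro rfl; exact hqr ⟨β, by simp⟩
    have hβ : β ≠ 0 := by rintro rfl; exact hpr ⟨α, by simp⟩
    rw [hB, ep, eq] at er
    have hBB : B p q = 0 := by simpa [hα, hβ] using er
    obtain ⟨α, β, rfl⟩ := span_two hM hp hq hp0 hpq hy
    rw [hB, ep, eq, hBB]; simp

lemma rest_finite {k : Type*} [Field k] [IsAlgClosed k] {d : ℕ} (hd : 2 < d)
    {F : MvPolynomial (Fin 4) k} (hhom : F.IsHomogeneous d) (hirr : Irreducible F)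
    {a b c : Submodule k (Fin 4 → k)} (ha : LineOn F a) (hb : LineOn F b) (hc : LineOn F c) :
    {M | LineOn F M ∧ ∃ p ∈ a, ∃ q ∈ b, ∃ r ∈ c, p ∈ M ∧ q ∈ M ∧ r ∈ M ∧
        p ≠ 0 ∧ (¬ ∃ c : k, c • p = q) ∧ (¬ ∃ c : k, c • p = r) ∧ (¬ ∃ c : k, c • q = r)}.Finite := by
  obtain ⟨Q, hQ0, hQd, hQ, hQM⟩ := quadric_three ![a, b, c] (by
    intro i; fin_cases i; exacts [ha.1, hb.1, hc.1])
  by_contra hinf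
  have : F ∣ Q := by
    refine dvd_of_infinite hd.le hhom hirr hinf ?_
    rintro M ⟨hM, p, hpa, q, hqb, r, hrc, hp, hq, hr, hp0, h1, h2, h3⟩
    exact ⟨hM, hQM M hM.1 p q r hp hq hr hp0 h1 h2 h3 (hQ 0 p hpa) (hQ 1 q hqb) (hQ 2 r hrc)⟩
  have := totalDegree_le_of_dvd_of_isDomain this hQ0
  rw [hhom.totalDegree hirr.ne_zero] at this
  omega

lemma three_finite {k : Type*} [Field k] [IsAlgClosed k] {d : ℕ} (hd : 2 < d)
    {F G : MvPolynomial (Fin 4) k} (hhom : F.IsHomogeneous d) (hirr : Irreducible F)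
    {i : Fin 4} (hGi : G = pderiv i F)
    {e : ℕ} (hGh : G.IsHomogeneous e) (he : e ≠ 0)
    (hnd : ¬ F ∣ G) (hgood : GoodH F G) {a b c : Submodule k (Fin 4 → k)}
    (ha : LineOn F a) (hb : LineOn F b) (hc : LineOn F c)
    (hab : a ≠ b) (hac : a ≠ c) (hbc : b ≠ c) :
    {M | LineOn F M ∧ Meets a M ∧ Meets b M ∧ Meets c M}.Finite := by
  have f := fun {a b} => bad_finite (a := a) (b := b) hd.le hhom hirr hGi hGh he hnd hgood
  refine ((((f ha hb hab).union (f ha hc hac)).union (f hb hc hbc)).union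
    (rest_finite hd hhom hirr ha hb hc)).subset ?_
  rintro M ⟨hM, ⟨p, hpa, hp0, hp⟩, ⟨q, hqb, hq0, hq⟩, ⟨r, hrc, hr0, hr⟩⟩
  by_cases h1 : ∃ c : k, c • p = q
  · obtain ⟨t, rfl⟩ := h1
    exact Or.inl (Or.inl (Or.inl ⟨hM, t • p, hq0, a.smul_mem _ hpa, hqb, hq⟩))
  by_cases h2 : ∃ c : k, c • p = r
  · obtain ⟨t, rfl⟩ := h2
    exact Or.inl (Or.inl (Or.inr ⟨hM, t • p, hr0, a.smul_mem _ hpa, hrc, hr⟩))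
  by_cases h3 : ∃ c : k, c • q = r
  · obtain ⟨t, rfl⟩ := h3
    exact Or.inl (Or.inr ⟨hM, t • q, hr0, b.smul_mem _ hqb, hrc, hr⟩)
  exact Or.inr ⟨hM, p, hpa, q, hqb, r, hrc, hp, hq, hr, hp0, h1, h2, h3⟩

lemma deg_le_two {k : Type*} [Field k] [IsAlgClosed k] {d : ℕ} (hd : 2 < d)
    {F G : MvPolynomial (Fin 4) k} (hhom : F.IsHomogeneous d) (hirr : Irreducible F)
    {i : Fin 4} (hGi : G = pderiv i F)
    {e : ℕ} (hGh : G.IsHomogeneous e) (he : e ≠ 0)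
    (hnd : ¬ F ∣ G) (hgood : GoodH F G) : False := by
  classical
  have : Infinite k := IsAlgClosed.instInfinite
  have hinf := good_infinite hirr hGh he hnd hgood
  obtain ⟨Ls, hLs, hcard⟩ := hinf.exists_subset_card_eq (2 * d + 1)
  let T : Set (Submodule k (Fin 4 → k)) := {M | LineOn F M ∧ ∃ a ∈ Ls, ∃ b ∈ Ls, ∃ c ∈ Ls,
    a ≠ b ∧ a ≠ c ∧ b ≠ c ∧ Meets a M ∧ Meets b M ∧ Meets c M}
  have hTfin : T.Finite := by
    have h1 : (⋃ a ∈ Ls, ⋃ b ∈ Ls, ⋃ c ∈ Ls, {M | LineOn F M ∧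
        a ≠ b ∧ a ≠ c ∧ b ≠ c ∧ Meets a M ∧ Meets b M ∧ Meets c M}).Finite := by
      refine Set.Finite.biUnion Ls.finite_toSet fun a ha => Set.Finite.biUnion Ls.finite_toSet fun b hb =>
        Set.Finite.biUnion Ls.finite_toSet fun c hc => ?_
      by_cases h : a ≠ b ∧ a ≠ c ∧ b ≠ c
      · refine (three_finite hd hhom hirr hGi hGh he hnd hgood (hLs ha).1 (hLs hb).1 (hLs hc).1
          h.1 h.2.1 h.2.2).subset ?_
        rintro M ⟨hM, -, -, -, h⟩
        exact ⟨hM, h⟩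
      · refine Set.finite_empty.subset ?_
        rintro M ⟨hM, h1, h2, h3, -⟩
        exact (h ⟨h1, h2, h3⟩).elim
    refine h1.subset ?_
    rintro M ⟨hM, a, ha, b, hb, c, hc, h⟩
    simp only [Set.mem_iUnion]
    exact ⟨a, ha, b, hb, c, hc, hM, h⟩
  obtain ⟨N, ⟨hN, x, hxN, hxG⟩, hNT⟩ := hinf.exists_notMem_finite hTfin
  refine pts G hN.1 hxN (good_ne hGh he hxG) hxG T (fun y hy hyG => ?_) hTfin
  have hex : ∀ L ∈ Ls, ∃ M, LineOn F M ∧ y ∈ M ∧ Meets L M := by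
    intro L hL
    obtain ⟨hL1, z, hz, hzG⟩ := hLs hL
    exact meet_all hd.le hhom hirr hGh he hgood hL1 hz hzG (hN.2 y hy)
  choose! M hM using hex
  have hcd : (Ls.image M).card ≤ d := by
    subst hGi
    refine smooth_count hd.le hhom hirr hyG _ fun L hL => ?_
    obtain ⟨L', hL', rfl⟩ := Finset.mem_image.1 hL
    exact ⟨(hM L' hL').1, (hM L' hL').2.1⟩
  obtain ⟨P, hP, hPc⟩ := Finset.exists_lt_card_fiber_of_mul_lt_card_of_maps_to (s := Ls) (t := Ls.image M)
    (f := M) (n := 2) (fun a ha => Finset.mem_image_of_mem _ ha) (by omega)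
  obtain ⟨a, b, c, ha, hb, hc, hab, hac, hbc⟩ := Finset.two_lt_card_iff.1 hPc
  rw [Finset.mem_filter] at ha hb hc
  have ha' := hM a ha.1
  have hb' := hM b hb.1
  have hc' := hM c hc.1
  rw [ha.2] at ha'
  rw [hb.2] at hb'
  rw [hc.2] at hc'
  have hPT : P ∈ T := ⟨ha'.1, a, ha.1, b, hb.1, c, hc.1, hab, hac, hbc, ha'.2.2, hb'.2.2, hc'.2.2⟩
  exact ⟨P, hPT, fun h => hNT (h ▸ hPT), ha'.1.1, ha'.2.1⟩

lemma sing_cone {k : Type*} [Field k] [CharZero k] {F : MvPolynomial (Fin 4) k} (hhom : F.IsHomogeneous 2)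
    {p : Fin 4 → k} (hp : eval p F = 0) (hs : ∀ i, eval p (pderiv i F) = 0) (x : Fin 4 → k)
    (hx : eval x F = 0) (t : k) : eval (x + t • p) F = 0 := by
  have hdeg : (lineP F p x).natDegree ≤ 2 := by
    have := aeval_natDegree_le F (m := 2) (n := 1) (by exact hhom.totalDegree_le)
      (fun i => Polynomial.C (p i) + Polynomial.C (x i) * Polynomial.X) (fun i => by
        rw [add_comm]; exact Polynomial.natDegree_linear_le)
    rw [lineP]; simpa using this
  have c0 : (lineP F p x).coeff 0 = 0 := by
    rw [Polynomial.coeff_zero_eq_eval_zero, lineP_eval]; simpa using hp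
  have c1 : (lineP F p x).coeff 1 = 0 := by
    have h := congrArg (Polynomial.eval 0) (lineP_deriv F p x)
    rw [Polynomial.eval_finsetSum, ← Polynomial.coeff_zero_eq_eval_zero, Polynomial.coeff_derivative] at h
    simpa [lineP_eval, hs] using h
  have hF : ∀ s : k, eval (p + s • x) F = (lineP F p x).coeff 2 * s ^ 2 := by
    intro s
    rw [← lineP_eval, Polynomial.eval_eq_sum_range' (n := 3) (by omega)]
    simp [Finset.sum_range_succ, c0, c1]
  set c := (lineP F p x).coeff 2
  have h1 : ∀ s : k, s ≠ 0 → (lineP F x p).eval s = c := by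
    intro s hs
    rw [lineP_eval]
    have : x + s • p = s • (p + s⁻¹ • x) := by
      rw [smul_add, smul_smul, mul_inv_cancel₀ hs, one_smul, add_comm]
    rw [this, hom_eval_smul hhom, hF]
    field_simp
  have h2 : lineP F x p = Polynomial.C c := by
    refine Polynomial.eq_of_infinite_eval_eq _ _ ((Set.finite_singleton (0:k)).infinite_compl.mono ?_)
    intro s hs
    simpa using h1 s hs
  have h3 := lineP_eval F x p 0
  rw [← lineP_eval, h2]
  rw [h2] at h3
  simpa [hx] using h3

/-- Lemma 7.2 of Salberger: a non-linear integral surface `Z = {F = 0} ⊂ P^3` over an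
algebraically closed field of characteristic `0`, each of whose points lies on at least
two different lines on `Z` or on a line contained in the singular locus of `Z`, is a
non-singular quadric. -/
theorem stmt_14 (k : Type*) [Field k] [IsAlgClosed k] [CharZero k] (d : ℕ) (hd : 2 ≤ d)
    (F : MvPolynomial (Fin 4) k) (hhom : F.IsHomogeneous d) (hirr : Irreducible F)
    (hlines : ∀ x : Fin 4 → k, x ≠ 0 → eval x F = 0 →
      (∃ L₁ L₂ : Submodule k (Fin 4 → k), L₁ ≠ L₂ ∧
        Module.finrank k L₁ = 2 ∧ Module.finrank k L₂ = 2 ∧ x ∈ L₁ ∧ x ∈ L₂ ∧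
        (∀ y ∈ L₁, eval y F = 0) ∧ (∀ y ∈ L₂, eval y F = 0)) ∨
      (∃ L : Submodule k (Fin 4 → k), Module.finrank k L = 2 ∧ x ∈ L ∧
        ∀ y ∈ L, eval y F = 0 ∧ ∀ i, eval y (pderiv i F) = 0)) :
    d = 2 ∧ ∀ x : Fin 4 → k, x ≠ 0 → eval x F = 0 → ∃ i, eval x (pderiv i F) ≠ 0 := by
  obtain ⟨i, hi⟩ : ∃ i, pderiv i F ≠ 0 := by
    by_contra h
    push Not at h
    have h1 := hhom.sum_X_mul_pderiv
    simp [h] at h1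
    rcases h1 with h1 | h1
    · omega
    · exact hirr.ne_zero h1
  obtain ⟨G, hGi⟩ : ∃ G, G = pderiv i F := ⟨_, rfl⟩
  have hGh : G.IsHomogeneous (d - 1) := hGi ▸ hhom.pderiv
  have he : d - 1 ≠ 0 := by omega
  have hnd : ¬ F ∣ G := by
    intro h
    rw [← hGi] at hi
    have := totalDegree_le_of_dvd_of_isDomain h hi
    rw [hhom.totalDegree hirr.ne_zero, hGh.totalDegree hi] at this
    omega
  have hgood : GoodH F G := by
    intro x hx hxG
    rcases hlines x (good_ne hGh he hxG) hx with ⟨L₁, L₂, h, h1, h2, h3, h4, h5, h6⟩ | ⟨L, h1, h2, h3⟩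
    · exact ⟨L₁, L₂, h, ⟨h1, h5⟩, ⟨h2, h6⟩, h3, h4⟩
    · exact (hxG (hGi ▸ (h3 x h2).2 i)).elim
  have hd2 : d = 2 := by
    by_contra h
    exact deg_le_two (by omega) hhom hirr hGi hGh he hnd hgood
  refine ⟨hd2, fun p hp0 hp => ?_⟩
  by_contra hs
  push Not at hs
  subst hd2
  exact no_cone le_rfl hhom hirr hGh he hnd hgood hp0 (hGi ▸ hs i) (sing_cone hhom hp hs)
end

section
/- Let k be an algebraically closed field of characteristic 0, let r ≥ 3, and let G ∈ k[x_0,…,x_r] be a nonzero homogeneous polynomial of positive degree defining the (possibly non-reduced or reducible) hypersurface Z = {G = 0} ⊂ P^r. Let P ∈ k^{r+1} be nonzero with G(P) = 0, and suppose that for every nonzero linear form ℓ on k^{r+1} with ℓ(P) = 0 there exists an (r−1)-dimensional k-linear subspace W of k^{r+1} with P ∈ W on which both ℓ and G vanish identically. If r = 3, suppose additionally that there exists a nonzero linear form ℓ_0 with ℓ_0(P) = 0 such that, fixing a k-linear isomorphism φ : k^3 → ker ℓ_0 and writing g = G∘φ ∈ k[u_0,u_1,u_2], there is, up to scalar multiples,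 exactly one nonzero linear form λ ∈ k[u_0,u_1,u_2] with λ dividing g and λ(φ^{-1}(P)) = 0, and moreover λ^2 does not divide g. Then there exists an r-dimensional k-linear subspace W of k^{r+1} with P ∈ W on which G vanishes identically. -/
open MvPolynomial

/-- The composite `G ∘ ψ` of a polynomial `G` in `m` variables with a linear map
`ψ : k^n → k^m`, as a polynomial in `n` variables. -/
noncomputable def restrictPoly {k : Type*} [CommSemiring k] {m n : ℕ}
    (G : MvPolynomial (Fin m) k) (ψ : (Fin n → k) →ₗ[k] (Fin m → k)) :
    MvPolynomial (Fin n) k :=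
  aeval (fun i => ∑ j, C (ψ (Pi.single j 1) i) * X j) G


set_option linter.unusedSectionVars false
set_option linter.unusedSimpArgs false

/-- linear form with given coefficients -/
noncomputable def LinF {A ι : Type*} [CommRing A] [Fintype ι] (b : ι → A) : MvPolynomial ι A :=
  ∑ i, C (b i) * X i

/-- substitution eliminating the variable `i0` on `LinF b = 0` -/
noncomputable def subF {A ι : Type*} [CommRing A] [Fintype ι] [DecidableEq ι] (b : ι → A) (i0 : ι) :
    MvPolynomial ι A →ₐ[A] MvPolynomial ι A :=
  aeval (fun i => if i = i0 then X i - LinF b else X i)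

section lin
variable {A ι : Type*} [CommRing A] [Fintype ι] [DecidableEq ι]

lemma subF_X (b : ι → A) (i0 i : ι) :
    subF b i0 (X i) = if i = i0 then X i - LinF b else X i := by
  simp [subF]

lemma subF_LinF (b b' : ι → A) (i0 : ι) :
    subF b i0 (LinF b') = LinF b' - C (b' i0) * LinF b := by
  have : ∀ i, subF b i0 (C (b' i) * X i) = C (b' i) * X i
      - if i = i0 then C (b' i) * LinF b else 0 := by
    intro i
    rw [map_mul, subF_X, ← algebraMap_eq, AlgHom.commutes]
    split_ifs <;> ring
  unfold LinF at *
  rw [map_sum, Finset.sum_congr rfl (fun i _ => this i), Finset.sum_sub_distrib]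
  simp

lemma LinF_dvd_sub (b : ι → A) (i0 : ι) (f : MvPolynomial ι A) :
    LinF b ∣ f - subF b i0 f := by
  rw [← Ideal.mem_span_singleton, ← Ideal.Quotient.eq]
  have : (Ideal.Quotient.mkₐ A (Ideal.span {LinF b})) =
    (Ideal.Quotient.mkₐ A (Ideal.span {LinF b})).comp (subF b i0) := by
    ext i
    simp only [AlgHom.comp_apply, subF_X]
    split_ifs
    · rw [Ideal.Quotient.mkₐ_eq_mk, Ideal.Quotient.eq, Ideal.mem_span_singleton]
      simp
    · rfl
  exact congrArg (fun g => g f) this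

lemma LinF_dvd_iff (b : ι → A) (i0 : ι) (hb : b i0 = 1) (f : MvPolynomial ι A) :
    LinF b ∣ f ↔ subF b i0 f = 0 := by
  constructor
  · rintro ⟨g, rfl⟩
    rw [map_mul, subF_LinF, hb]
    simp
  · intro h
    have := LinF_dvd_sub b i0 f
    rwa [h, sub_zero] at this

lemma LinF_prime [IsDomain A] (b : ι → A) (i0 : ι) (hb : b i0 = 1) : Prime (LinF b) := by
  refine ⟨?_, ?_, ?_⟩
  · intro h
    have := congrArg (eval (Pi.single i0 1)) h
    simp [LinF, Pi.single_apply, hb] at this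
  · intro h
    have h1 := h.dvd (a := 1)
    rw [LinF_dvd_iff b i0 hb] at h1
    simp at h1
  · intro f g h
    simp only [LinF_dvd_iff b i0 hb, map_mul, mul_eq_zero] at *
    exact h

lemma eval_LinF (b p : ι → A) : eval p (LinF b) = ∑ i, b i * p i := by
  simp [LinF]

lemma map_LinF {B : Type*} [CommRing B] (f : A →+* B) (b : ι → A) :
    map f (LinF b) = LinF (f ∘ b) := by
  simp [LinF]

lemma map_subF {B : Type*} [CommRing B] (f : A →+* B) (b : ι → A) (i0 : ι) (p : MvPolynomial ι A) :
    map f (subF b i0 p) = subF (f ∘ b) i0 (map f p) := by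
  have : (map f).comp (subF b i0 : MvPolynomial ι A →+* MvPolynomial ι A) =
      (subF (f ∘ b) i0 : MvPolynomial ι B →+* MvPolynomial ι B).comp (map f) := by
    apply MvPolynomial.ringHom_ext
    · intro r
      simp only [RingHom.comp_apply, map_C, RingHom.coe_coe]
      rw [← algebraMap_eq, ← algebraMap_eq, AlgHom.commutes, AlgHom.commutes, algebraMap_eq, map_C]
      rfl
    · intro i
      simp only [RingHom.comp_apply, map_X, RingHom.coe_coe, subF_X]
      split_ifs <;> simp [map_LinF]
  exact congrArg (fun g => g p) this

/-- coefficientwise application -/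
noncomputable def coefFun {k E ι : Type*} [CommRing k] [CommRing E] [Algebra k E]
    (D : Derivation k E E) (p : MvPolynomial ι E) : MvPolynomial ι E :=
  ∑ m ∈ p.support, monomial m (D (coeff m p))

lemma coeff_coefFun {k E ι : Type*} [CommRing k] [CommRing E] [Algebra k E]
    (D : Derivation k E E) (p : MvPolynomial ι E) (m) : coeff m (coefFun D p) = D (coeff m p) := by
  classical
  simp only [coefFun, coeff_sum, coeff_monomial]
  rw [Finset.sum_ite_eq' p.support m]
  split_ifs with h
  · rfl
  · rw [notMem_support_iff.mp h, map_zero]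

/-- coefficientwise derivation -/
noncomputable def coefD {k E : Type*} (ι : Type*) [CommRing k] [CommRing E] [Algebra k E]
    (D : Derivation k E E) : Derivation k (MvPolynomial ι E) (MvPolynomial ι E) :=
  Derivation.mk'
    { toFun := coefFun D
      map_add' := fun p q => by
        ext m
        simp only [coeff_coefFun, coeff_add, map_add]
      map_smul' := fun c p => by
        ext m
        simp only [coeff_coefFun, coeff_smul, RingHom.id_apply, Derivation.map_smul] } (by
    classical
    intro p q
    ext m
    simp only [LinearMap.coe_mk, AddHom.coe_mk]
    rw [coeff_coefFun, smul_eq_mul, smul_eq_mul, mul_comm q]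
    simp only [coeff_add, coeff_mul, coeff_coefFun, map_sum, Derivation.leibniz, smul_eq_mul]
    rw [← Finset.sum_add_distrib]
    exact Finset.sum_congr rfl (fun _ _ => by ring))

lemma coeff_coefD {k E ι : Type*} [CommRing k] [CommRing E] [Algebra k E]
    (D : Derivation k E E) (p : MvPolynomial ι E) (m) : coeff m (coefD ι D p) = D (coeff m p) :=
  coeff_coefFun D p m

lemma coefD_C {k E ι : Type*} [CommRing k] [CommRing E] [Algebra k E]
    (D : Derivation k E E) (c : E) : coefD ι D (C c) = C (D c) := by
  classical
  ext m
  rw [coeff_coefD, coeff_C, coeff_C]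
  split_ifs <;> simp

lemma coefD_X {k E ι : Type*} [CommRing k] [CommRing E] [Algebra k E]
    (D : Derivation k E E) (i : ι) : coefD ι D (X i) = 0 := by
  classical
  ext m
  rw [coeff_coefD, coeff_X]
  split_ifs <;> simp

lemma coefD_LinF {k E : Type*} [CommRing k] [CommRing E] [Algebra k E]
    (D : Derivation k E E) (b : ι → E) : coefD ι D (LinF b) = LinF (fun i => D (b i)) := by
  simp [LinF, coefD_C, coefD_X, mul_comm]

/-- chain rule -/
lemma deriv_aeval {k S : Type*} [CommRing k] [CommRing S] [Algebra k S]
    (D : Derivation k S S) (v : ι → S) (G : MvPolynomial ι k) :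
    D (aeval v G) = ∑ i, aeval v (pderiv i G) * D (v i) := by
  induction G using MvPolynomial.induction_on with
  | C a => simp
  | add p q hp hq => simp [hp, hq, add_mul, Finset.sum_add_distrib]
  | mul_X p i hp =>
    simp only [map_mul, aeval_X, Derivation.leibniz, hp, smul_eq_mul, pderiv_X, map_add]
    simp only [add_mul, Finset.sum_add_distrib, Finset.mul_sum]
    congr 1
    · rw [Finset.sum_eq_single i]
      · simp
      · intro b _ hb
        simp [Pi.single_apply, hb]
      · simp
    · exact Finset.sum_congr rfl (fun _ _ => by ring)

end lin

lemma dvd_deriv {k S : Type*} [CommRing k] [CommRing S] [Algebra k S] [IsDomain S] [WfDvdMonoid S]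
    [Algebra ℚ S] (D : Derivation k S S) (L F : S) (hL : Prime L) (hF : F ≠ 0) (hLF : L ∣ F)
    (hD : D F = 0) : L ∣ D L := by
  obtain ⟨n, M, hM, rfl⟩ := WfDvdMonoid.max_power_factor hF hL.irreducible
  rcases n with _ | m
  · simp at hLF; exact absurd hLF hM
  rw [Derivation.leibniz, Derivation.leibniz_pow] at hD
  simp only [smul_eq_mul, nsmul_eq_mul, Nat.add_sub_cancel] at hD
  have h : L ^ m * (L * D M + (m + 1 : ℕ) * M * D L) = 0 := by
    rw [← hD]; ring
  rw [mul_eq_zero, or_iff_right (pow_ne_zero _ hL.ne_zero)] at h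
  have h2 : L ∣ (m + 1 : ℕ) * M * D L := ⟨- D M, by linear_combination h⟩
  rcases hL.dvd_or_dvd h2 with h3 | h3
  · rcases hL.dvd_or_dvd h3 with h4 | h4
    · exfalso
      apply hL.not_isUnit
      refine isUnit_of_dvd_unit h4 ?_
      have : ((m + 1 : ℕ) : S) = algebraMap ℚ S (m + 1 : ℕ) := by simp
      rw [this]
      apply IsUnit.map
      rw [isUnit_iff_ne_zero]; positivity
    · exact absurd h4 hM
  · exact h3

lemma coefD_subF {k E ι : Type*} [CommRing k] [CommRing E] [Algebra k E] [Fintype ι] [DecidableEq ι]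
    (D : Derivation k E E) (b : ι → E) (i0 : ι) (G : MvPolynomial ι k) :
    ∃ N, ∀ D : Derivation k E E, coefD ι D (subF b i0 (map (algebraMap k E) G)) =
      N * LinF (fun i => D (b i)) := by
  refine ⟨- aeval (fun i => if i = i0 then X i - LinF b else X i : ι → MvPolynomial ι E) (pderiv i0 G), ?_⟩
  intro D
  have : subF b i0 (map (algebraMap k E) G) =
      aeval (fun i => if i = i0 then X i - LinF b else X i : ι → MvPolynomial ι E) G := by
    rw [subF, aeval_map_algebraMap]
  rw [this, deriv_aeval, Finset.sum_eq_single i0]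
  · simp [coefD_X, coefD_LinF]
  · intro i _ hi
    simp [hi, coefD_X]
  · simp

/-- coefficient vector with zero `z`-coefficient -/
def vec {A : Type*} [Zero A] {n : ℕ} (y : A) (x : Fin n → A) : Fin (n + 2) → A :=
  Fin.cons 0 (Fin.cons y x)

section
variable {A : Type*} [CommRing A] {n : ℕ}
@[simp] lemma vec_zero (y : A) (x : Fin n → A) : vec y x 0 = 0 := rfl
@[simp] lemma vec_one (y : A) (x : Fin n → A) : vec y x 1 = y := rfl
@[simp] lemma vec_succ (y : A) (x : Fin n → A) (i : Fin n) : vec y x i.succ.succ = x i := rfl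

lemma vec_map {B : Type*} [CommRing B] (f : A → B) (hf : f 0 = 0) (y : A) (x : Fin n → A) :
    (fun i => f (vec y x i)) = vec (f y) (fun i => f (x i)) := by
  funext i
  refine Fin.cases ?_ (fun i => Fin.cases ?_ (fun i => ?_) i) i
  · exact hf
  · rfl
  · rfl

lemma sum_vec (y : A) (x : Fin n → A) (p : Fin (n + 2) → A) :
    ∑ i, vec y x i * p i = y * p 1 + ∑ i, x i * p i.succ.succ := by
  rw [Fin.sum_univ_succ, Fin.sum_univ_succ]
  simp [vec]

lemma LinF_vec (y : A) (x : Fin n → A) :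
    LinF (vec y x) = C y * X 1 + ∑ i, C (x i) * X i.succ.succ := by
  rw [LinF, Fin.sum_univ_succ, Fin.sum_univ_succ]
  simp [vec]

lemma LinF_add {ι : Type*} [Fintype ι] (b b' : ι → A) : LinF (b + b') = LinF b + LinF b' := by
  simp [LinF, add_mul, Finset.sum_add_distrib]

lemma LinF_smul {ι : Type*} [Fintype ι] (c : A) (b : ι → A) : LinF (c • b) = C c * LinF b := by
  simp [LinF, Finset.mul_sum, mul_assoc]
end

lemma LinF_not_dvd_X {E : Type*} [Field E] {ι : Type*} [Fintype ι] [DecidableEq ι] (b : ι → E) (i0 j : ι)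
    (hb : b i0 = 1) (hj : j ≠ i0) (c : E) (hc : c ≠ 0) : ¬ LinF b ∣ C c * X j := by
  rw [LinF_dvd_iff b i0 hb, map_mul, subF_X, if_neg hj]
  rw [← algebraMap_eq, AlgHom.commutes, algebraMap_eq]
  simp [hc, X_ne_zero]

/-- if `b` is constant for `D`, and a linear form `LinF c` divides `G` restricted to `LinF b = 0`
then this restriction is zero, unless `D (LinF c)` is a multiple of `LinF c`. -/
lemma final_aux {k E : Type*} [Field k] [Field E] [CharZero E] [Algebra k E] {ι : Type*} [Fintype ι]
    [DecidableEq ι] (D : Derivation k E E) (b : ι → E) (i0 : ι) (hb : ∀ i, D (b i) = 0)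
    (G : MvPolynomial ι k) (c : ι → E) (i1 : ι) (hc : c i1 = 1)
    (h : LinF c ∣ subF b i0 (map (algebraMap k E) G))
    (hn : ¬ LinF c ∣ LinF (fun i => D (c i))) : subF b i0 (map (algebraMap k E) G) = 0 := by
  by_contra hne
  apply hn
  rw [← coefD_LinF]
  refine dvd_deriv (coefD ι D) _ _ (LinF_prime c i1 hc) hne h ?_
  obtain ⟨N, hN⟩ := coefD_subF D b i0 G
  rw [hN]
  simp [LinF, hb]

theorem core {k E : Type*} [Field k] [Field E] [CharZero E] [Algebra k E] {n : ℕ} (hn : 3 ≤ n)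
    (D : Fin n → Derivation k E E) (hcomm : ∀ i j x, D i (D j x) = D j (D i x))
    (t : Fin n → E) (hDt : ∀ j i, D j (t i) = if i = j then 1 else 0)
    (a : Fin n → E) (s : Fin n) (has : a s = 1) (G : MvPolynomial (Fin (n + 2)) k)
    (h : subF (vec 0 a) s.succ.succ (subF (vec 1 (fun i => - t i)) 1 (map (algebraMap k E) G)) = 0) :
    ∃ (b : Fin (n + 2) → E) (i0 : Fin (n + 2)), b 0 = 0 ∧ b i0 = 1 ∧
      subF b i0 (map (algebraMap k E) G) = 0 := by
  set Gm := map (algebraMap k E) G with hGm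
  set b0 : Fin (n + 2) → E := vec 1 (fun i => - t i) with hb0
  set F := subF b0 1 Gm with hF
  by_cases hF0 : F = 0
  · exact ⟨b0, 1, rfl, rfl, hF0⟩
  have haL : vec 0 a s.succ.succ = 1 := by simpa using has
  have hLF : LinF (vec 0 a) ∣ F := (LinF_dvd_iff _ s.succ.succ haL F).mpr h
  have hP := LinF_prime (vec 0 a) s.succ.succ haL
  -- cross relation
  have hcross : ∀ i j, LinF (vec 0 a) ∣
      X i.succ.succ * LinF (vec 0 (fun l => D j (a l))) - X j.succ.succ * LinF (vec 0 (fun l => D i (a l))) := by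
    intro i j
    have hL : ∀ j, coefD _ (D j) (LinF (vec 0 a)) = LinF (vec 0 (fun l => D j (a l))) := by
      intro j
      rw [coefD_LinF, vec_map _ (map_zero _), map_zero]
    obtain ⟨N, hN⟩ := coefD_subF (D i) b0 1 G
    have hDF : ∀ j, coefD _ (D j) F = - N * X j.succ.succ := by
      intro j
      rw [hF, hGm, hN, hb0, vec_map _ (map_zero _), LinF_vec]
      simp [hDt]
    have := dvd_deriv ((X i.succ.succ : MvPolynomial (Fin (n + 2)) E) • coefD _ (D j)
      - (X j.succ.succ : MvPolynomial (Fin (n + 2)) E) • coefD _ (D i)) _ _ hP hF0 hLF (by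
        simp only [Derivation.sub_apply, Derivation.smul_apply, hDF, smul_eq_mul]; ring)
    simpa only [Derivation.sub_apply, Derivation.smul_apply, smul_eq_mul, hL] using this
  have hpt : ∀ (x : Fin n → E), ∑ l, a l * x l = 0 → ∀ i j,
      x i * ∑ l, D j (a l) * x l = x j * ∑ l, D i (a l) * x l := by
    intro x hx i j
    obtain ⟨q, hq⟩ := hcross i j
    have := congrArg (eval (vec 0 x)) hq
    simp only [map_sub, map_mul, eval_X, eval_LinF, sum_vec, vec_succ, hx] at this
    simpa [sub_eq_zero] using this
  have hDs : ∀ j, D j (a s) = 0 := by intro j; rw [has]; exact (D j).map_one_eq_zero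
  -- the test vectors
  have hv : ∀ l, l ≠ s → ∀ f : Fin n → E, ∑ m, f m * (Pi.single l 1 - Pi.single s (a l) : Fin n → E) m
      = f l - f s * a l := by
    intro l hl f
    simp [mul_sub, Finset.sum_sub_distrib, Pi.single_apply]
  have h1 : ∀ l, l ≠ s → ∀ j, j ≠ s → j ≠ l → D j (a l) = 0 := by
    intro l hl j hj hjl
    have := hpt (Pi.single l 1 - Pi.single s (a l)) (by rw [hv l hl, has]; ring) l j
    rw [hv l hl, hv l hl] at this
    simpa [hl, hj, hjl, hDs, Pi.single_apply] using this
  have h2 : ∀ i, i ≠ s → ∀ j, j ≠ s → D i (a i) = D j (a j) := by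
    intro i hi j hj
    by_cases hij : i = j
    · rw [hij]
    have := hpt ((Pi.single i 1 - Pi.single s (a i)) + (Pi.single j 1 - Pi.single s (a j)))
      (by simp only [Pi.add_apply, mul_add, Finset.sum_add_distrib]
          rw [hv i hi, hv j hj, has]; ring) i j
    simp only [Pi.add_apply, mul_add, Finset.sum_add_distrib] at this
    rw [hv i hi, hv j hj, hv i hi, hv j hj] at this
    have hji : j ≠ i := fun h => hij h.symm
    simp [hi, hj, hij, hji, hDs, Pi.single_apply, h1 i hi j hj hji, h1 j hj i hi hij] at this
    exact this.symm
  have h3 : ∀ i, i ≠ s → D s (a i) = - (a i * D i (a i)) := by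
    intro i hi
    have := hpt (Pi.single i 1 - Pi.single s (a i)) (by rw [hv i hi, has]; ring) i s
    rw [hv i hi, hv i hi] at this
    simpa [hi, hi.symm, hDs, Pi.single_apply] using this
  -- two further indices
  have hex : ∀ i : Fin n, ∃ l, l ≠ s ∧ l ≠ i := by
    intro i
    have : ({s, i} : Finset (Fin n)).card < (Finset.univ : Finset (Fin n)).card := by
      refine lt_of_le_of_lt Finset.card_le_two ?_
      simp; omega
    obtain ⟨l, _, hl⟩ := Finset.exists_mem_notMem_of_card_lt_card this
    simp at hl
    exact ⟨l, hl⟩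
  obtain ⟨l0, hl0, -⟩ := hex s
  set c := D l0 (a l0) with hc
  have hcl : ∀ l, l ≠ s → D l (a l) = c := fun l hl => h2 l hl l0 hl0
  have hc0 : ∀ i, i ≠ s → D i c = 0 := by
    intro i hi
    obtain ⟨l, hl, hli⟩ := hex i
    rw [← hcl l hl, hcomm, h1 l hl i hi hli.symm, map_zero]
  have hcs : D s c = - c ^ 2 := by
    rw [hc, hcomm, h3 l0 hl0, ← hc]
    simp only [Derivation.leibniz, map_neg, smul_eq_mul, hc0 l0 hl0, ← hc]
    ring
  have hGL : LinF b0 ∣ Gm - F := LinF_dvd_sub b0 1 Gm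
  by_cases hcz : c = 0
  · -- the form is constant
    refine ⟨vec 0 a, s.succ.succ, rfl, haL, ?_⟩
    have hDa : ∀ j l, D j (a l) = 0 := by
      intro j l
      by_cases hl : l = s
      · rw [hl, hDs]
      by_cases hj : j = s
      · rw [hj, h3 l hl, hcl l hl, hcz]; simp
      by_cases hjl : j = l
      · rw [hjl, hcl l hl, hcz]
      · exact h1 l hl j hj hjl
    refine final_aux (D l0) _ _ ?_ G (b0 + t s • vec 0 a) 1 (by simp [hb0]) ?_ ?_
    · intro i
      have := congrFun (vec_map (D l0) (map_zero _) 0 a) i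
      rw [this]; simp only [map_zero, hDa]
      refine Fin.cases ?_ (fun i => Fin.cases ?_ (fun i => ?_) i) i <;> rfl
    · obtain ⟨q, hq⟩ := hGL
      have := congrArg (subF (vec 0 a) s.succ.succ) hq
      rw [map_sub, h, sub_zero, map_mul, subF_LinF] at this
      rw [← hGm, this]
      apply dvd_mul_of_dvd_left
      rw [LinF_add, LinF_smul]
      simp [hb0]
    · have : (fun i => D l0 ((b0 + t s • vec 0 a) i)) = (-1 : E) • Pi.single l0.succ.succ 1 := by
        funext i
        refine Fin.cases ?_ (fun i => Fin.cases ?_ (fun i => ?_) i) i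
        · simp [hb0]
        · simp [hb0, (D l0).map_one_eq_zero, Pi.single_apply]
          intro h; exact absurd h (by simp [Fin.ext_iff])
        · simp [hb0, hDa, hDt, Pi.single_apply, hl0.symm]
          split_ifs <;> simp
      rw [this, LinF_smul]
      have h' : LinF (Pi.single l0.succ.succ 1 : Fin (n + 2) → E) = X l0.succ.succ := by
        rw [LinF, Finset.sum_eq_single l0.succ.succ]
        · simp
        · intro b _ hb; simp [Pi.single_apply, hb]
        · simp
      rw [h']
      refine LinF_not_dvd_X _ 1 _ (by simp [hb0]) ?_ _ (by simp)
      simp [Fin.ext_iff]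
  · -- the hyperplane comes from `α`
    set α : Fin n → E := fun i => t i - a i / c with hα
    have hDα : ∀ j i, D j (α i) = 0 := by
      have hdiv : ∀ j x, D j (x / c) = D j x / c - x * D j c / c ^ 2 := by
        intro j x
        rw [Derivation.leibniz_div]
        simp only [smul_eq_mul]
        field_simp
      intro j i
      simp only [hα, map_sub, hDt, hdiv]
      by_cases hj : j = s
      · subst hj
        rw [hcs]
        by_cases hi : i = j
        · subst hi; rw [hDs, has]; field_simp; simp
        · rw [if_neg hi, h3 i hi, hcl i hi]; field_simp; ring
      · rw [hc0 j hj]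
        by_cases hi : i = s
        · subst hi; rw [hDs, if_neg (Ne.symm hj)]; simp
        · by_cases hij : i = j
          · subst hij; rw [hcl i hi]; field_simp; simp
          · rw [if_neg hij, h1 i hi j hj (Ne.symm hij)]; simp
    set b2 : Fin (n + 2) → E := vec 1 (fun i => - α i) with hb2
    refine ⟨b2, 1, rfl, rfl, ?_⟩
    refine final_aux (D l0) _ _ ?_ G (vec 0 a) s.succ.succ haL ?_ ?_
    · intro i
      have := congrFun (vec_map (D l0) (map_zero _) 1 (fun i => - α i)) i
      rw [hb2, this]; simp only [map_neg, hDα, (D l0).map_one_eq_zero]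
      refine Fin.cases ?_ (fun i => Fin.cases ?_ (fun i => ?_) i) i <;> simp [vec]
    · obtain ⟨q, hq⟩ := hGL
      obtain ⟨u, hu⟩ := hLF
      have := congrArg (subF b2 1) hq
      rw [hu] at this
      simp only [map_sub, map_mul, subF_LinF] at this
      have e1 : b0 = b2 + (-1 / c) • vec 0 a := by
        funext i
        refine Fin.cases ?_ (fun i => Fin.cases ?_ (fun i => ?_) i) i
        · simp [hb0, hb2]
        · simp [hb0, hb2]
        · simp [hb0, hb2, hα]; ring
      have e2 : LinF b0 = LinF b2 + C (-1 / c) * LinF (vec 0 a) := by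
        rw [e1, LinF_add, LinF_smul]
      have e3 : b0 1 = 1 := rfl
      rw [e2, e3] at this
      simp only [vec_one, C_0, C_1, zero_mul, sub_zero, one_mul] at this
      rw [← hGm]
      refine ⟨subF b2 1 u + C (-1 / c) * subF b2 1 q, ?_⟩
      linear_combination this
    · rw [vec_map _ (map_zero _)]
      have : LinF (vec (D l0 0) (fun i => D l0 (a i))) = C c * X l0.succ.succ := by
        rw [LinF_vec, Finset.sum_eq_single l0]
        · simp [hc]
        · intro b _ hb
          by_cases hbs : b = s
          · rw [hbs, hDs]; simp
          · rw [h1 b hbs l0 hl0 hb.symm]; simp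
        · simp
      rw [this]
      exact LinF_not_dvd_X _ s.succ.succ _ haL (by simpa using hl0) _ hcz

open TensorProduct in
/-- existence of commuting derivations on an étale extension of a polynomial ring -/
lemma exists_derivations {k E : Type*} [Field k] [Field E] [Algebra k E] {n : ℕ}
    [Algebra (MvPolynomial (Fin n) k) E] [IsScalarTower k (MvPolynomial (Fin n) k) E]
    [Algebra.FormallyEtale (MvPolynomial (Fin n) k) E] :
    ∃ D : Fin n → Derivation k E E, (∀ i j x, D i (D j x) = D j (D i x)) ∧
      ∀ j i, D j (algebraMap (MvPolynomial (Fin n) k) E (X i)) = if i = j then 1 else 0 := by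
  have ex : ∀ j : Fin n, ∃ D : Derivation k E E, ∀ i,
      D (algebraMap (MvPolynomial (Fin n) k) E (X i)) = if i = j then 1 else 0 := by
    intro j
    let d : Derivation k (MvPolynomial (Fin n) k) E :=
      MvPolynomial.mkDerivation k (fun i => if i = j then (1 : E) else 0)
    let l : E ⊗[MvPolynomial (Fin n) k] Ω[MvPolynomial (Fin n) k⁄k] →ₗ[E] E :=
      LinearMap.liftBaseChange E d.liftKaehlerDifferential
    let e := KaehlerDifferential.tensorKaehlerEquivOfFormallyEtale k (MvPolynomial (Fin n) k) E
    refine ⟨(l ∘ₗ e.symm.toLinearMap).compDer (KaehlerDifferential.D k E), ?_⟩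
    intro i
    change l (e.symm (KaehlerDifferential.D k E _)) = _
    rw [KaehlerDifferential.tensorKaehlerEquivOfFormallyEtale_symm_D_algebraMap]
    simp [l, d]
  choose D hD using ex
  refine ⟨D, ?_, hD⟩
  intro i j x
  have hz : ∀ d : Derivation k E E, (∀ i, d (algebraMap (MvPolynomial (Fin n) k) E (X i)) = 0) → ∀ x, d x = 0 := by
    intro d hd x
    have hd' : ∀ p : MvPolynomial (Fin n) k, d (algebraMap _ E p) = 0 := by
      have : d.compAlgebraMap (MvPolynomial (Fin n) k) = 0 := by
        apply MvPolynomial.derivation_ext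
        intro i
        simpa using hd i
      intro p
      exact congrArg (fun g => g p) this
    let d2 : Derivation (MvPolynomial (Fin n) k) E E := Derivation.mk'
      { toFun := d
        map_add' := map_add d
        map_smul' := by
          intro p y
          rw [Algebra.smul_def, Derivation.leibniz, hd']
          simp [Algebra.smul_def] } (fun a b => d.leibniz a b)
    have : d2 = 0 := by
      have hs : Subsingleton (Ω[E⁄MvPolynomial (Fin n) k]) := inferInstance
      rw [← d2.liftKaehlerDifferential_comp]
      ext y
      simp [Subsingleton.elim (KaehlerDifferential.D (MvPolynomial (Fin n) k) E y) 0]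
    exact congrArg (fun g => g x) this
  have := hz ⁅D i, D j⁆ (by
    intro l
    rw [Derivation.commutator_apply, hD, hD]
    split_ifs <;> simp [Derivation.map_one_eq_zero]) x
  rwa [Derivation.commutator_apply, sub_eq_zero] at this

lemma exists_derivations_frac {k E : Type*} [Field k] [CharZero k] [Field E] {n : ℕ}
    [Algebra (FractionRing (MvPolynomial (Fin n) k)) E]
    [Algebra.FiniteType (FractionRing (MvPolynomial (Fin n) k)) E] :
    ∃ (_ : Algebra k E) (D : Fin n → Derivation k E E),
      (∀ p : k, algebraMap (FractionRing (MvPolynomial (Fin n) k)) E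
        (algebraMap (MvPolynomial (Fin n) k) _ (C p)) = algebraMap k E p) ∧
      (∀ i j x, D i (D j x) = D j (D i x)) ∧
      ∀ j i, D j (algebraMap (FractionRing (MvPolynomial (Fin n) k)) E
        (algebraMap (MvPolynomial (Fin n) k) _ (X i))) = if i = j then 1 else 0 := by
  let R := MvPolynomial (Fin n) k
  let K := FractionRing R
  have : Module.Finite K E := finite_of_finite_type_of_isJacobsonRing K E
  have : Algebra.IsSeparable K E := inferInstance
  let _ : Algebra R E := ((algebraMap K E).comp (algebraMap R K)).toAlgebra
  have : IsScalarTower R K E := IsScalarTower.of_algebraMap_eq (fun _ => rfl)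
  have : Algebra.FormallyEtale K E := Algebra.FormallyEtale.of_isSeparable K E
  have : Algebra.FormallyEtale R K := Algebra.FormallyEtale.of_isLocalization (nonZeroDivisors R)
  have : Algebra.FormallyEtale R E := Algebra.FormallyEtale.comp R K E
  let _ : Algebra k E := ((algebraMap R E).comp (algebraMap k R)).toAlgebra
  have : IsScalarTower k R E := IsScalarTower.of_algebraMap_eq (fun _ => rfl)
  obtain ⟨D, hD1, hD2⟩ := exists_derivations (k := k) (E := E) (n := n)
  exact ⟨inferInstance, D, fun _ => rfl, hD1, hD2⟩

universe u in
lemma generic_point {k : Type u} [Field k] [CharZero k] {n : ℕ} {σ : Type} [Fintype σ]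
    (B : σ → Type u) [∀ s, CommRing (B s)] [∀ s, Algebra (MvPolynomial (Fin n) k) (B s)]
    [∀ s, Algebra.FiniteType (MvPolynomial (Fin n) k) (B s)]
    (h : ∀ t : Fin n → k, ∃ s, ∃ g : B s →+* k, ∀ p, g (algebraMap _ _ p) = eval t p) :
    ∃ (s : σ) (E : Type u) (_ : Field E) (_ : Algebra k E) (D : Fin n → Derivation k E E)
      (f : B s →+* E),
      (∀ p : k, f (algebraMap _ _ (C p : MvPolynomial (Fin n) k)) = algebraMap k E p) ∧
      (∀ i j x, D i (D j x) = D j (D i x)) ∧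
      (∀ j i, D j (f (algebraMap _ _ (X i : MvPolynomial (Fin n) k))) = if i = j then 1 else 0) := by
  classical
  obtain ⟨s, hs⟩ : ∃ s, ∀ q : MvPolynomial (Fin n) k, algebraMap _ (B s) q = 0 → q = 0 := by
    by_contra hcon
    push Not at hcon
    choose q hq hq0 using hcon
    have hprod : ∏ s, q s ≠ 0 := Finset.prod_ne_zero_iff.mpr (fun s _ => hq0 s)
    apply hprod
    apply MvPolynomial.funext
    intro t
    obtain ⟨s, g, hg⟩ := h t
    rw [map_prod, map_zero]
    apply Finset.prod_eq_zero (Finset.mem_univ s)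
    rw [← hg, hq, map_zero]
  let R := MvPolynomial (Fin n) k
  let K := FractionRing R
  let T := TensorProduct R K (B s)
  have hT : Nontrivial T := by
    refine ⟨1, 0, ?_⟩
    intro h1
    have : IsLocalizedModule (nonZeroDivisors R) (TensorProduct.mk R K (B s) 1) :=
      (isLocalizedModule_iff_isBaseChange (nonZeroDivisors R) K _).mpr (TensorProduct.isBaseChange R (B s) K)
    have h2 : TensorProduct.mk R K (B s) 1 1 = 0 := h1
    rw [IsLocalizedModule.eq_zero_iff (nonZeroDivisors R)] at h2
    obtain ⟨c, hc⟩ := h2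
    have h3 : (c : R) • (1 : B s) = 0 := hc
    rw [← Algebra.algebraMap_eq_smul_one] at h3
    exact nonZeroDivisors.ne_zero c.2 (hs _ h3)
  obtain ⟨m, hm⟩ := Ideal.exists_maximal T
  let E := T ⧸ m
  let _ : Field E := Ideal.Quotient.field m
  have : Algebra.FiniteType K E := inferInstance
  obtain ⟨iA, D, hD0, hD1, hD2⟩ := exists_derivations_frac (k := k) (E := E) (n := n)
  let f : B s →ₐ[R] E := (Ideal.Quotient.mkₐ R m).comp Algebra.TensorProduct.includeRight
  have hf : ∀ p : R, f (algebraMap R (B s) p) = algebraMap K E (algebraMap R K p) := by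
    intro p
    rw [f.commutes]
    rfl
  refine ⟨s, E, inferInstance, iA, D, f, ?_, hD1, ?_⟩
  · intro p
    exact (hf _).trans (hD0 p)
  · intro j i
    rw [RingHom.coe_coe, hf]
    exact hD2 j i

lemma exists_spec_field {k F : Type*} [Field k] [IsAlgClosed k] [Field F] [Algebra k F]
    [Algebra.FiniteType k F] : Nonempty (F →ₐ[k] k) := by
  have : Module.Finite k F := finite_of_finite_type_of_isJacobsonRing k F
  exact ⟨IsAlgClosed.lift⟩

/-- specialization of finitely generated algebras over an algebraically closed field -/
lemma exists_spec {k E ι : Type*} [Field k] [IsAlgClosed k] [Field E] [Algebra k E] [Finite ι] (b : ι → E) :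
    Nonempty (Algebra.adjoin k (Set.range b) →ₐ[k] k) := by
  let A := Algebra.adjoin k (Set.range b)
  have : Algebra.FiniteType k A := by
    rw [← Subalgebra.fg_iff_finiteType]
    exact Subalgebra.fg_def.mpr ⟨_, Set.finite_range b, rfl⟩
  obtain ⟨m, hm⟩ := Ideal.exists_maximal A
  let _ : Field (A ⧸ m) := Ideal.Quotient.field m
  obtain ⟨f⟩ := exists_spec_field (k := k) (F := A ⧸ m)
  exact ⟨f.comp (Ideal.Quotient.mkₐ k m)⟩

lemma spec_hyperplane {k E ι : Type*} [Field k] [IsAlgClosed k] [Field E] [Algebra k E] [Fintype ι]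
    [DecidableEq ι] (b : ι → E) (i0 i1 : ι) (h1 : b i1 = 0) (h0 : b i0 = 1) (G : MvPolynomial ι k)
    (h : subF b i0 (map (algebraMap k E) G) = 0) :
    ∃ b' : ι → k, b' i1 = 0 ∧ b' i0 = 1 ∧ LinF b' ∣ G := by
  let A := Algebra.adjoin k (Set.range b)
  obtain ⟨f⟩ := exists_spec (k := k) b
  let bA : ι → A := fun i => ⟨b i, Algebra.subset_adjoin ⟨i, rfl⟩⟩
  have e1 : bA i1 = 0 := Subtype.ext h1
  have e0 : bA i0 = 1 := Subtype.ext h0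
  have hA : subF bA i0 (map (algebraMap k A) G) = 0 := by
    apply MvPolynomial.map_injective (algebraMap A E) Subtype.val_injective
    rw [map_subF, map_map, ← IsScalarTower.algebraMap_eq, map_zero]
    exact h
  refine ⟨fun i => f (bA i), by simp [e1], by simp [e0], ?_⟩
  rw [LinF_dvd_iff _ i0 (by simp [e0])]
  have := congrArg (map (f : A →+* k)) hA
  rw [map_subF, map_map, map_zero] at this
  have e : (f : A →+* k).comp (algebraMap k A) = RingHom.id k := by
    ext x; simp
  rw [e, map_id] at this
  exact this

lemma map_subsub {A B : Type*} [CommRing A] [CommRing B] {n : ℕ} (f : A →+* B) (a t : Fin n → A) (s : Fin n)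
    (p : MvPolynomial (Fin (n + 2)) A) :
    map f (subF (vec 0 a) s.succ.succ (subF (vec 1 (fun i => - t i)) 1 p)) =
      subF (vec 0 (fun i => f (a i))) s.succ.succ (subF (vec 1 (fun i => - f (t i))) 1 (map f p)) := by
  rw [map_subF, map_subF]
  have e1 : f ∘ vec 0 a = vec 0 (fun i => f (a i)) := by
    have := vec_map f (map_zero f) 0 a
    rw [map_zero] at this
    exact this
  have e2 : f ∘ vec 1 (fun i => - t i) = vec 1 (fun i => - f (t i)) := by
    have := vec_map f (map_zero f) 1 (fun i => - t i)
    simp only [map_one, map_neg] at this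
    exact this
  rw [e1, e2]

universe u in
lemma generic_family {k : Type u} [Field k] [CharZero k] {n : ℕ} (G : MvPolynomial (Fin (n + 2)) k)
    (hA : ∀ t : Fin n → k, ∃ (s : Fin n) (a : Fin n → k), a s = 1 ∧
      subF (vec 0 a) s.succ.succ (subF (vec 1 (fun i => - t i)) 1 G) = 0) :
    ∃ (s : Fin n) (E : Type u) (_ : Field E) (_ : Algebra k E) (D : Fin n → Derivation k E E)
      (t a : Fin n → E), (∀ i j x, D i (D j x) = D j (D i x)) ∧
      (∀ j i, D j (t i) = if i = j then 1 else 0) ∧ a s = 1 ∧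
      subF (vec 0 a) s.succ.succ (subF (vec 1 (fun i => - t i)) 1 (map (algebraMap k E) G)) = 0 := by
  classical
  let R := MvPolynomial (Fin n) k
  let Q := MvPolynomial (Fin n) R
  let au : Fin n → Fin n → Q := fun s => Function.update (X : Fin n → Q) s 1
  let tu : Fin n → Q := fun i => C (X i)
  let Φ : Fin n → MvPolynomial (Fin (n + 2)) Q := fun s =>
    subF (vec 0 (au s)) s.succ.succ (subF (vec 1 (fun i => - tu i)) 1 (map (algebraMap k Q) G))
  let I : Fin n → Ideal Q := fun s => Ideal.span (Set.range fun m => coeff m (Φ s))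
  obtain ⟨s, E, iF, iA, D, f, hf0, hD1, hD2⟩ := generic_point (k := k) (n := n) (fun s => Q ⧸ I s) (by
    intro t
    obtain ⟨s, a, has, hs⟩ := hA t
    refine ⟨s, ?_⟩
    let ev : Q →+* k := (eval₂Hom (eval t) a)
    have hevX : ∀ i, ev (X i) = a i := fun i => eval₂Hom_X' _ _ i
    have hevC : ∀ p, ev (C p) = eval t p := fun p => eval₂Hom_C _ _ p
    refine ⟨Ideal.Quotient.lift (I s) ev ?_, ?_⟩
    · intro x hx
      rw [← RingHom.mem_ker]
      refine (Ideal.span_le.mpr ?_) hx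
      rintro _ ⟨m, rfl⟩
      change ev (coeff m (Φ s)) = 0
      rw [← coeff_map, map_subsub, map_map]
      have e1 : (fun i => ev (au s i)) = a := by
        funext i
        by_cases hi : i = s
        · subst hi; simp [au, has]
        · simp only [au, Function.update_of_ne hi, hevX]
      have e2 : ∀ i, ev (tu i) = t i := by intro i; rw [hevC, eval_X]
      have e3 : ev.comp (algebraMap k Q) = RingHom.id k := by
        ext x
        exact (hevC (C x)).trans (eval_C x)
      simp only [e1, e2, e3, map_id, hs, coeff_zero]
    · intro p
      change Ideal.Quotient.lift (I s) ev _ (Ideal.Quotient.mk (I s) (C p)) = _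
      rw [Ideal.Quotient.lift_mk]
      exact hevC p)
  let F : Q →+* E := f.comp (Ideal.Quotient.mk (I s))
  refine ⟨s, E, iF, iA, D, fun i => F (tu i), fun i => F (au s i), hD1, hD2, by simp [au], ?_⟩
  have e3 : F.comp (algebraMap k Q) = algebraMap k E := by
    ext x
    exact hf0 x
  rw [← e3, ← map_map, ← map_subsub]
  ext m
  rw [coeff_map, coeff_zero]
  change f (Ideal.Quotient.mk (I s) (coeff m (Φ s))) = 0
  rw [Ideal.Quotient.eq_zero_iff_mem.mpr, map_zero]
  exact Ideal.subset_span ⟨m, rfl⟩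

lemma aeval_subF_eq {E B ι : Type*} [CommRing E] [CommRing B] [Algebra E B] [Fintype ι] [DecidableEq ι]
    (b : ι → E) (i0 : ι) (v : ι → B) (hv : ∑ i, algebraMap E B (b i) * v i = 0) (F : MvPolynomial ι E) :
    aeval v (subF b i0 F) = aeval v F := by
  obtain ⟨c, hc⟩ := LinF_dvd_sub b i0 F
  have h1 : aeval v (LinF b) = 0 := by
    rw [← hv]; simp [LinF]
  have := congrArg (aeval v) hc
  rw [map_sub, map_mul, h1, zero_mul, sub_eq_zero] at this
  exact this.symm

lemma aeval_point_eq_zero {k E B ι : Type*} [CommRing k] [CommRing E] [CommRing B] [Algebra k E]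
    [Algebra E B] [Algebra k B] [IsScalarTower k E B] [Fintype ι] [DecidableEq ι]
    (b b' : ι → E) (i0 i1 : ι) (v : ι → B) (hv : ∑ i, algebraMap E B (b i) * v i = 0)
    (hv' : ∑ i, algebraMap E B (b' i) * v i = 0) (G : MvPolynomial ι k)
    (h : subF b i0 (subF b' i1 (map (algebraMap k E) G)) = 0) : aeval v G = 0 := by
  have := congrArg (aeval v) h
  rw [aeval_subF_eq _ _ _ hv, aeval_subF_eq _ _ _ hv', map_zero, aeval_map_algebraMap] at this
  exact this

/-- the cone ideal of a point -/
noncomputable def coneHom (k : Type*) {E : Type*} [Field k] [Field E] [Algebra k E] {m : ℕ} (ξ : Fin m → E) :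
    MvPolynomial (Fin m) k →ₐ[k] Polynomial E :=
  aeval (fun i => Polynomial.C (ξ i) * Polynomial.X)

lemma coneHom_coeffs {k E : Type*} [Field k] [Field E] [Algebra k E] {m : ℕ} (ξ : Fin m → E)
    (G : MvPolynomial (Fin (m + 1)) k)
    (h : aeval (Fin.cons Polynomial.X (fun i => Polynomial.C (Polynomial.C (ξ i) * Polynomial.X)) :
      Fin (m + 1) → Polynomial (Polynomial E)) G = 0) (j : ℕ) :
    coneHom k ξ ((finSuccEquiv k m G).coeff j) = 0 := by
  have h2 : Polynomial.mapAlgHom (coneHom k ξ) (finSuccEquiv k m G) = 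
     aeval (Fin.cons Polynomial.X (fun i => Polynomial.C (Polynomial.C (ξ i) * Polynomial.X)) :
      Fin (m + 1) → Polynomial (Polynomial E)) G := by
    have : (Polynomial.mapAlgHom (coneHom k ξ)).comp (finSuccEquiv k m).toAlgHom = 
      aeval (Fin.cons Polynomial.X (fun i => Polynomial.C (Polynomial.C (ξ i) * Polynomial.X)) :
      Fin (m + 1) → Polynomial (Polynomial E)) := by
      apply MvPolynomial.algHom_ext
      intro i
      refine Fin.cases ?_ (fun i => ?_) i
      · simp [finSuccEquiv_X_zero]
      · simp [finSuccEquiv_X_succ, coneHom]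
    rw [← this]; rfl
  rw [h] at h2
  have := congrArg (fun p => Polynomial.coeff p j) h2
  simpa using this

lemma coneHom_coeff {k E : Type*} [Field k] [Field E] [Algebra k E] {m : ℕ} (ξ : Fin m → E)
    (g : MvPolynomial (Fin m) k) (d : ℕ) :
    coneHom k ξ (homogeneousComponent d g) = Polynomial.C ((coneHom k ξ g).coeff d) * Polynomial.X ^ d := by
  have hh : ∀ (n : ℕ) (q : MvPolynomial (Fin m) k), q.IsHomogeneous n →
      coneHom k ξ q = Polynomial.C (aeval ξ q) * Polynomial.X ^ n := by
    intro n q hq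
    conv_lhs => rw [q.as_sum]
    conv_rhs => rw [q.as_sum]
    simp only [map_sum, Finset.sum_mul]
    refine Finset.sum_congr rfl fun u hu => ?_
    have hu' := hq (mem_support_iff.mp hu)
    rw [coneHom, aeval_monomial, aeval_monomial]
    simp only [Finsupp.prod, mul_pow, Finset.prod_mul_distrib, Finset.prod_pow_eq_pow_sum]
    have h3 : ∑ i ∈ u.support, u i = n := by
      rw [← hu', Finsupp.weight_apply]; simp [Finsupp.sum]
    rw [h3]
    simp [IsScalarTower.algebraMap_apply k E (Polynomial E), mul_assoc]
  have hg : coneHom k ξ g = ∑ i ∈ Finset.range (g.totalDegree + 1), coneHom k ξ (homogeneousComponent i g) := by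
    rw [← map_sum, sum_homogeneousComponent]
  rw [hh d _ (homogeneousComponent_isHomogeneous d g)]
  congr 2
  rw [hg, Polynomial.finsetSum_coeff]
  rw [Finset.sum_congr rfl (fun i _ => by
    rw [hh i _ (homogeneousComponent_isHomogeneous i g), Polynomial.coeff_C_mul_X_pow])]
  rw [Finset.sum_ite_eq]
  split_ifs with h
  · rfl
  · rw [homogeneousComponent_eq_zero, map_zero]
    simpa using h

lemma curve_factor {k E : Type*} [Field k] [IsAlgClosed k] [Field E] [Algebra k E] (ξ : Fin 3 → E)
    (l : Fin 3) (hl : ξ l = 1) (hξ : ¬ ∀ i, ∃ c : k, ξ i = algebraMap k E c)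
    (g0 : MvPolynomial (Fin 3) k) (hg0 : g0 ≠ 0) (hg0' : coneHom k ξ g0 = 0) :
    ∃ (f : MvPolynomial (Fin 3) k) (d : ℕ), 0 < d ∧ f.IsHomogeneous d ∧
      ∀ g, coneHom k ξ g = 0 → f ∣ g := by
  set p : Ideal (MvPolynomial (Fin 3) k) := RingHom.ker (coneHom k ξ) with hp
  set p' : Ideal (MvPolynomial (Fin 3) k) := RingHom.ker (aeval ξ : MvPolynomial (Fin 3) k →ₐ[k] E) with hp'
  have hpp : p.IsPrime := RingHom.ker_isPrime _
  have hpp' : p'.IsPrime := RingHom.ker_isPrime _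
  have hlt : p < p' := by
    refine lt_of_le_of_ne ?_ ?_
    · intro g hg
      rw [hp, RingHom.mem_ker] at hg
      rw [hp', RingHom.mem_ker]
      have h1 : (Polynomial.evalRingHom (1 : E)).comp (coneHom k ξ : MvPolynomial (Fin 3) k →+* _)
         = (aeval ξ : MvPolynomial (Fin 3) k →ₐ[k] E) := by
        apply MvPolynomial.ringHom_ext
        · intro r
          simp [coneHom, IsScalarTower.algebraMap_apply k E (Polynomial E)]
        · intro i; simp [coneHom]
      have h2 := congrArg (fun φ => φ g) h1
      simp only [RingHom.comp_apply, RingHom.coe_coe, hg, map_zero] at h2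
      exact h2.symm
    · intro h
      have h1 : (X l - 1 : MvPolynomial (Fin 3) k) ∈ p' := by
        rw [hp', RingHom.mem_ker]; simp [hl]
      rw [← h, hp, RingHom.mem_ker] at h1
      simp only [map_sub, coneHom, aeval_X, hl, map_one, one_mul] at h1
      have := congrArg (Polynomial.eval 0) h1
      simp at this
  have hnm : ¬ p'.IsMaximal := by
    intro hm
    rw [MvPolynomial.isMaximal_iff_eq_vanishingIdeal_singleton] at hm
    obtain ⟨x, hx⟩ := hm
    apply hξ
    intro i
    refine ⟨x i, ?_⟩
    have : (X i - C (x i) : MvPolynomial (Fin 3) k) ∈ p' := by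
      rw [hx]; simp
    rw [hp', RingHom.mem_ker] at this
    simpa [sub_eq_zero] using this
  obtain ⟨m, hm, hpm⟩ := Ideal.exists_le_maximal p' hpp'.ne_top
  have hlt' : p' < m := lt_of_le_of_ne hpm (fun h => hnm (h ▸ hm))
  have hpb : p ≠ ⊥ := by
    intro h
    apply hg0
    have : g0 ∈ p := hg0'
    rw [h] at this
    simpa using this
  obtain ⟨f, hfp, hf⟩ := hpp.exists_mem_prime_of_ne_bot hpb
  have hfpr : (Ideal.span {f}).IsPrime := (Ideal.span_singleton_prime hf.ne_zero).mpr hf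
  have hspan : Ideal.span {f} = p := by
    by_contra hne
    have h1 : Ideal.span {f} < p := lt_of_le_of_ne ((Ideal.span_singleton_le_iff_mem _).mpr hfp) hne
    have h0 : (⊥ : Ideal (MvPolynomial (Fin 3) k)) < Ideal.span {f} := by
      rw [bot_lt_iff_ne_bot, Ne, Ideal.span_singleton_eq_bot]; exact hf.ne_zero
    have hb : (⊥ : Ideal (MvPolynomial (Fin 3) k)).IsPrime := Ideal.isPrime_bot
    have a1 := Ideal.height_add_one_le_of_lt_of_isPrime h0
    have a2 := Ideal.height_add_one_le_of_lt_of_isPrime h1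
    have a3 := Ideal.height_add_one_le_of_lt_of_isPrime hlt
    have hmp := hm.isPrime
    have a4 := Ideal.height_add_one_le_of_lt_of_isPrime hlt'
    have a5 := Ideal.height_le_ringKrullDim_of_isPrime (I := m)
    rw [MvPolynomial.ringKrullDim_of_isNoetherianRing, ringKrullDim_eq_zero_of_field] at a5
    have a6 : m.height ≤ 3 := by
      simp only [Nat.card_eq_fintype_card, Fintype.card_fin, zero_add] at a5
      have a7 : ((m.height : ℕ∞) : WithBot ℕ∞) ≤ ((3 : ℕ∞) : WithBot ℕ∞) := a5
      exact WithBot.coe_le_coe.mp a7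
    have : (4 : ℕ∞) ≤ m.height := by
      calc (4 : ℕ∞) = 0 + 1 + 1 + 1 + 1 := by norm_num
        _ ≤ (⊥ : Ideal (MvPolynomial (Fin 3) k)).height + 1 + 1 + 1 + 1 := by gcongr; exact zero_le
        _ ≤ (Ideal.span {f}).height + 1 + 1 + 1 := by gcongr
        _ ≤ p.height + 1 + 1 := by gcongr
        _ ≤ p'.height + 1 := by gcongr
        _ ≤ _ := a4
    have := this.trans a6
    norm_num at this
  have hdvd : ∀ g, coneHom k ξ g = 0 → f ∣ g := by
    intro g hg
    rw [← Ideal.mem_span_singleton, hspan]; exact hg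
  have hcomp : ∀ e, homogeneousComponent e f ≠ 0 → e = f.totalDegree := by
    intro e he
    have h1 : f ∣ homogeneousComponent e f := by
      apply hdvd
      have : coneHom k ξ f = 0 := hfp
      rw [coneHom_coeff, this]; simp
    obtain ⟨c, hc⟩ := h1
    have hc0 : c ≠ 0 := by rintro rfl; simp [hc] at he
    have h2 := (homogeneousComponent_isHomogeneous e f).totalDegree he
    have h3 := congrArg totalDegree hc
    rw [totalDegree_mul_of_isDomain hf.ne_zero hc0] at h3
    have h4 : e ≤ f.totalDegree := by
      by_contra h
      exact he (homogeneousComponent_eq_zero _ _ (by omega))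
    omega
  have hfh : f.IsHomogeneous f.totalDegree := by
    have : f = homogeneousComponent f.totalDegree f := by
      conv_lhs => rw [← sum_homogeneousComponent f]
      apply Finset.sum_eq_single
      · intro b _ hb
        by_contra h
        exact hb (hcomp b h)
      · simp
    have h2 := homogeneousComponent_isHomogeneous f.totalDegree f
    rwa [← this] at h2
  refine ⟨f, f.totalDegree, ?_, hfh, hdvd⟩
  rw [Nat.pos_iff_ne_zero]
  intro h0
  apply hf.not_isUnit
  rw [totalDegree_eq_zero_iff_eq_C] at h0
  rw [h0]
  apply IsUnit.map
  rw [isUnit_iff_ne_zero]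
  intro h
  apply hf.ne_zero
  rw [h0, h, C_0]

lemma rename_succ_dvd {k : Type*} [Field k] {m : ℕ} (f : MvPolynomial (Fin m) k) (G : MvPolynomial (Fin (m+1)) k)
    (h : ∀ j, f ∣ (finSuccEquiv k m G).coeff j) : rename Fin.succ f ∣ G := by
  have h1 : Polynomial.C f ∣ finSuccEquiv k m G := (Polynomial.C_dvd_iff_dvd_coeff _ _).mpr h
  have h2 := map_dvd (finSuccEquiv k m).symm h1
  rw [AlgEquiv.symm_apply_apply] at h2
  convert h2
  rw [AlgEquiv.eq_symm_apply]
  have h3 : (finSuccEquiv k m).toAlgHom.comp (rename Fin.succ) = 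
      (IsScalarTower.toAlgHom k (MvPolynomial (Fin m) k) (Polynomial (MvPolynomial (Fin m) k))) := by
    apply MvPolynomial.algHom_ext
    intro i
    simp [finSuccEquiv_X_succ]
  exact congrArg (fun φ => φ f) h3

lemma binary_step {k : Type*} [Field k] [IsAlgClosed k] (q : MvPolynomial (Fin 2) k) (d : ℕ)
    (hq : q.IsHomogeneous (d + 1)) :
    ∃ l q' : MvPolynomial (Fin 2) k, l ≠ 0 ∧ l.IsHomogeneous 1 ∧ q'.IsHomogeneous d ∧ q = l * q' := by
  set p : Polynomial k := aeval ![Polynomial.X, 1] q with hp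
  have hpq : p.homogenize (d + 1) = q := Polynomial.homogenize_eq_of_isHomogeneous hq rfl
  have hdeg : p.natDegree ≤ d + 1 := by
    have := MvPolynomial.aeval_natDegree_le (m := d + 1) (n := 1) q hq.totalDegree_le
      ![(Polynomial.X : Polynomial k), 1] (by
        intro i; fin_cases i <;> simp)
    simpa using this
  by_cases h0 : p.degree = 0 ∨ p = 0
  · have : ∃ c, p = Polynomial.C c := by
      rcases h0 with h | h
      · exact ⟨_, Polynomial.eq_C_of_degree_eq_zero h⟩
      · exact ⟨0, by simp [h]⟩
    obtain ⟨c, hc⟩ := this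
    refine ⟨X 1, C c * X 1 ^ d, X_ne_zero _, isHomogeneous_X _ _, ?_, ?_⟩
    · simpa using (isHomogeneous_C _ c).mul (isHomogeneous_X_pow (R := k) (1 : Fin 2) d)
    · rw [← hpq, hc, Polynomial.homogenize_C]; ring
  · push Not at h0
    obtain ⟨r, hr⟩ := IsAlgClosed.exists_root p h0.1
    obtain ⟨p', hp'⟩ := Polynomial.dvd_iff_isRoot.mpr hr
    have hp'0 : p' ≠ 0 := by rintro rfl; simp at hp'; exact h0.2 hp'
    have hd' : p'.natDegree ≤ d := by
      rw [hp', Polynomial.natDegree_mul (Polynomial.X_sub_C_ne_zero r) hp'0, Polynomial.natDegree_X_sub_C] at hdeg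
      omega
    refine ⟨(Polynomial.X - Polynomial.C r).homogenize 1, p'.homogenize d, ?_, 
      Polynomial.isHomogeneous_homogenize _, Polynomial.isHomogeneous_homogenize _, ?_⟩
    · rw [Ne, Polynomial.homogenize_eq_zero_iff (by simp)]
      exact Polynomial.X_sub_C_ne_zero r
    · rw [← hpq, hp', add_comm d 1, Polynomial.homogenize_mul _ _ (by simp) hd']

section restr
variable {k : Type*} [Field k]

lemma eval_restrictPoly {m n : ℕ} (G : MvPolynomial (Fin m) k) (ψ : (Fin n → k) →ₗ[k] (Fin m → k))
    (x : Fin n → k) : eval x (restrictPoly G ψ) = eval (ψ x) G := by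
  have h : (aeval x : MvPolynomial (Fin n) k →ₐ[k] k).comp
      (aeval (fun i => ∑ j, C (ψ (Pi.single j 1) i) * X j)) = (aeval (ψ x) : MvPolynomial (Fin m) k →ₐ[k] k) := by
    apply MvPolynomial.algHom_ext
    intro i
    simp only [AlgHom.comp_apply, aeval_X, map_sum, map_mul]
    conv_rhs => rw [LinearMap.pi_apply_eq_sum_univ ψ x]
    rw [Finset.sum_apply]
    refine Finset.sum_congr rfl fun j _ => ?_
    have hs : (fun i' => if j = i' then (1 : k) else 0) = Pi.single j 1 := by
      funext a; simp [Pi.single_apply, eq_comm]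
    rw [hs]
    simp [mul_comm]
  have h2 := congrArg (fun φ => φ G) h
  simpa [coe_aeval_eq_eval, restrictPoly] using h2

lemma restrictPoly_hom {m n : ℕ} (G : MvPolynomial (Fin m) k) (ψ : (Fin n → k) →ₗ[k] (Fin m → k)) (d : ℕ)
    (h : G.IsHomogeneous d) : (restrictPoly G ψ).IsHomogeneous d := by
  have := h.aeval (fun i => ∑ j, C (ψ (Pi.single j 1) i) * X j : Fin m → MvPolynomial (Fin n) k) (n := 1) (by
    intro i
    apply IsHomogeneous.sum
    intro j _
    simpa using (isHomogeneous_C _ (ψ (Pi.single j 1) i)).mul (isHomogeneous_X k j))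
  simpa [restrictPoly] using this

lemma restrictPoly_mul {m n : ℕ} (F G : MvPolynomial (Fin m) k) (ψ : (Fin n → k) →ₗ[k] (Fin m → k)) :
    restrictPoly (F * G) ψ = restrictPoly F ψ * restrictPoly G ψ := by
  simp [restrictPoly]

lemma restrictPoly_dvd {m n : ℕ} {F G : MvPolynomial (Fin m) k} (h : F ∣ G) (ψ : (Fin n → k) →ₗ[k] (Fin m → k)) :
    restrictPoly F ψ ∣ restrictPoly G ψ := by
  obtain ⟨c, rfl⟩ := h
  rw [restrictPoly_mul]; exact dvd_mul_right _ _

lemma restrictPoly_comp [Infinite k] {m n q : ℕ} (G : MvPolynomial (Fin m) k) (ψ : (Fin n → k) →ₗ[k] (Fin m → k))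
    (φ : (Fin q → k) →ₗ[k] (Fin n → k)) :
    restrictPoly (restrictPoly G ψ) φ = restrictPoly G (ψ.comp φ) := by
  apply MvPolynomial.funext
  intro x
  simp [eval_restrictPoly]

lemma restrictPoly_ne_zero [Infinite k] {m n : ℕ} (G : MvPolynomial (Fin m) k) (hG : G ≠ 0)
    (ψ : (Fin n → k) →ₗ[k] (Fin m → k)) (h : Function.Surjective ψ) : restrictPoly G ψ ≠ 0 := by
  intro h0
  apply hG
  apply MvPolynomial.funext
  intro x
  obtain ⟨y, rfl⟩ := h x
  rw [← eval_restrictPoly, h0]; simp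

lemma eval_zero_of_hom {m d : ℕ} (hd : d ≠ 0) (G : MvPolynomial (Fin m) k) (h : G.IsHomogeneous d) :
    eval 0 G = 0 := by
  rw [eval_zero, constantCoeff_eq]
  apply h.coeff_eq_zero
  simpa using hd.symm
end restr

lemma endgame {k : Type*} [Field k] [IsAlgClosed k] (G : MvPolynomial (Fin (3 + 1)) k)
    (f : MvPolynomial (Fin 3) k) (d : ℕ) (hd : 0 < d) (hf : f.IsHomogeneous d) (hfG : rename Fin.succ f ∣ G)
    (φ : (Fin 3 → k) →ₗ[k] (Fin (3 + 1) → k)) (hφ : Function.Injective φ) (p : Fin 3 → k)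
    (hp : φ p = Pi.single 0 1) (lam : MvPolynomial (Fin 3) k)
    (h2 : ¬ lam ^ 2 ∣ restrictPoly G φ)
    (huniq : ∀ lam' : MvPolynomial (Fin 3) k, lam' ≠ 0 → lam'.IsHomogeneous 1 →
          lam' ∣ restrictPoly G φ → eval p lam' = 0 → ∃ c : k, lam' = c • lam) : d = 1 := by
  have hinf : Infinite k := IsAlgClosed.instInfinite
  by_contra hd1
  obtain ⟨d', rfl⟩ : ∃ d', d = d' + 1 + 1 := ⟨d - 2, by omega⟩
  set T : (Fin (3 + 1) → k) →ₗ[k] (Fin 3 → k) := LinearMap.funLeft k k Fin.succ with hT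
  set M := T.comp φ with hM
  have hren : restrictPoly (rename Fin.succ f) φ = restrictPoly f M := by
    apply MvPolynomial.funext
    intro x
    rw [eval_restrictPoly, eval_restrictPoly, eval_rename]
    rfl
  have hp0 : p ≠ 0 := by
    rintro rfl
    rw [map_zero] at hp
    have := congrFun hp 0
    simp at this
  have hMp : M p = 0 := by
    rw [hM, LinearMap.comp_apply, hp]
    funext i
    simp [hT, LinearMap.funLeft_apply]
  have hker : LinearMap.ker M = Submodule.span k {p} := by
    apply le_antisymm
    · intro x hx
      rw [LinearMap.mem_ker] at hx
      rw [Submodule.mem_span_singleton]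
      refine ⟨φ x 0, ?_⟩
      apply hφ
      rw [map_smul, hp]
      funext i
      refine Fin.cases ?_ (fun i => ?_) i
      · simp
      · have := congrFun hx i
        rw [hM, LinearMap.comp_apply, hT, LinearMap.funLeft_apply] at this
        simp [this]
    · rw [Submodule.span_singleton_le_iff_mem]
      exact hMp
  have hrank : Module.finrank k (LinearMap.range M) = 2 := by
    have := LinearMap.finrank_range_add_finrank_ker M
    rw [hker, finrank_span_singleton hp0] at this
    simp at this
    omega
  have hfe : Module.finrank k (LinearMap.range M) = Module.finrank k (Fin 2 → k) := by
    rw [hrank]; simp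
  let eq := LinearEquiv.ofFinrankEq (LinearMap.range M) (Fin 2 → k) hfe
  set Q : (Fin 3 → k) →ₗ[k] (Fin 2 → k) := eq.toLinearMap.comp M.rangeRestrict with hQ
  set N : (Fin 2 → k) →ₗ[k] (Fin 3 → k) := (LinearMap.range M).subtype.comp eq.symm.toLinearMap with hN
  have hNQ : N.comp Q = M := by
    ext x i
    simp [hN, hQ]
  have hQs : Function.Surjective Q := by
    rw [hQ]
    exact eq.surjective.comp M.surjective_rangeRestrict
  have hQp : Q p = 0 := by
    rw [hQ, LinearMap.comp_apply]
    have : M.rangeRestrict p = 0 := by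
      apply Subtype.ext
      simpa using hMp
    rw [this, map_zero]
  obtain ⟨l1, q1, hl1, hl1h, hq1, e1⟩ := binary_step (restrictPoly f N) (d' + 1) (restrictPoly_hom f N _ hf)
  obtain ⟨l2, q2, hl2, hl2h, hq2, e2⟩ := binary_step q1 d' hq1
  have hdv : restrictPoly l1 Q * restrictPoly l2 Q ∣ restrictPoly G φ := by
    refine dvd_trans ?_ (restrictPoly_dvd hfG φ)
    rw [hren, ← hNQ, ← restrictPoly_comp, e1, e2, restrictPoly_mul, restrictPoly_mul, ← mul_assoc]
    exact dvd_mul_right _ _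
  have key : ∀ l : MvPolynomial (Fin 2) k, l ≠ 0 → l.IsHomogeneous 1 → restrictPoly l Q ∣ restrictPoly G φ →
      lam ∣ restrictPoly l Q := by
    intro l hl hlh hld
    obtain ⟨c, hc⟩ := huniq (restrictPoly l Q) (restrictPoly_ne_zero l hl Q hQs) (restrictPoly_hom l Q 1 hlh)
      hld (by rw [eval_restrictPoly, hQp]; exact eval_zero_of_hom one_ne_zero l hlh)
    rw [hc, smul_eq_C_mul]
    exact dvd_mul_left _ _
  apply h2
  rw [pow_two]
  exact (mul_dvd_mul (key l1 hl1 hl1h ((dvd_mul_right _ _).trans hdv))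
    (key l2 hl2 hl2h ((dvd_mul_left _ _).trans hdv))).trans hdv

lemma linear_eq_LinF {k : Type*} [Field k] {m : ℕ} (f : MvPolynomial (Fin m) k) (hf : f.IsHomogeneous 1) :
    ∃ c, f = LinF c := by
  refine ⟨fun i => coeff (Finsupp.single i 1) f, ?_⟩
  ext u
  by_cases hu : u.degree = 1
  · obtain ⟨i, rfl⟩ : ∃ i, u = Finsupp.single i 1 := by
      exact (Finsupp.sum_eq_one_iff u).mp hu
    simp [LinF, coeff_sum, coeff_C_mul, coeff_X, Finsupp.single_left_inj]
  · rw [hf.coeff_eq_zero hu]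
    have : (LinF (fun i => coeff (Finsupp.single i 1) f)).IsHomogeneous 1 := by
      apply IsHomogeneous.sum
      intro j _
      simpa using (isHomogeneous_C _ (coeff (Finsupp.single j 1) f)).mul (isHomogeneous_X k j)
    rw [this.coeff_eq_zero hu]

/-- auxiliary additive map -/
noncomputable def polyPhi (E : Type*) [Field E] : E →+ Polynomial (Polynomial E) :=
  (Polynomial.C : Polynomial E →+* Polynomial (Polynomial E)).toAddMonoidHom.comp
    ((AddMonoidHom.mulRight (Polynomial.X : Polynomial E)).comp (Polynomial.C : E →+* Polynomial E).toAddMonoidHom)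

lemma polyPhi_mul {E : Type*} [Field E] (c x : E) :
    algebraMap E (Polynomial (Polynomial E)) c * Polynomial.C (Polynomial.C x * Polynomial.X) = polyPhi E (c * x) := by
  simp [IsScalarTower.algebraMap_apply E (Polynomial E) (Polynomial (Polynomial E)), mul_assoc, polyPhi]

lemma case3 {k : Type*} [Field k] [IsAlgClosed k] {E : Type*} [Field E] [Algebra k E]
    (D : Fin 2 → Derivation k E E) (t a : Fin 2 → E) (s : Fin 2)
    (hDt : ∀ j i, D j (t i) = if i = j then 1 else 0) (has : a s = 1)
    (G : MvPolynomial (Fin (3 + 1)) k) (hG : G ≠ 0)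
    (h : subF (vec 0 a) s.succ.succ (subF (vec 1 (fun i => - t i)) 1 (map (algebraMap k E) G)) = 0) :
    ∃ (f : MvPolynomial (Fin 3) k) (d : ℕ), 0 < d ∧ f.IsHomogeneous d ∧ rename Fin.succ f ∣ G := by
  obtain ⟨l, hl⟩ : ∃ l : Fin 2, l ≠ s := exists_ne s
  have hsum : ∀ {R : Type _} [AddCommMonoid R] (g : Fin 2 → R), ∑ i, g i = g s + g l := by
    intro R _ g
    rw [Fin.sum_univ_two]
    fin_cases s <;> fin_cases l <;> simp_all [add_comm]
  set x : Fin 2 → E := fun i => if i = s then - a l else 1 with hx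
  have hxs : x s = - a l := by simp [hx]
  have hxl : x l = 1 := by simp [hx, hl]
  set y : E := ∑ i, t i * x i with hy
  set ξ : Fin 3 → E := Fin.cons y x with hξ
  have hpt : aeval (Fin.cons Polynomial.X (fun i => Polynomial.C (Polynomial.C (ξ i) * Polynomial.X)) :
      Fin (3 + 1) → Polynomial (Polynomial E)) G = 0 := by
    refine aeval_point_eq_zero (vec 0 a) (vec 1 (fun i => - t i)) s.succ.succ 1 _ ?_ ?_ G h
    · have hz : ∑ i, a i * x i = 0 := by rw [hsum, has, hxs, hxl]; ring
      rw [Fin.sum_univ_succ, Fin.sum_univ_succ]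
      simp only [vec_zero, map_zero, zero_mul, zero_add, Fin.cons_succ, vec_succ, hξ]
      rw [show ((0 : Fin 3).succ : Fin 4) = 1 from rfl, vec_one, map_zero, zero_mul, zero_add]
      simp only [polyPhi_mul]
      rw [← map_sum, hz, map_zero]
    · have hz : y + ∑ i, (- t i) * x i = 0 := by rw [hy, ← Finset.sum_add_distrib]; simp
      rw [Fin.sum_univ_succ, Fin.sum_univ_succ]
      simp only [vec_zero, map_zero, zero_mul, zero_add, Fin.cons_succ, vec_succ, hξ, Fin.cons_zero]
      rw [show ((0 : Fin 3).succ : Fin 4) = 1 from rfl, vec_one]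
      simp only [polyPhi_mul]
      rw [← map_sum, ← map_add, one_mul, hz, map_zero]
  have hco := coneHom_coeffs ξ G hpt
  have hF : finSuccEquiv k 3 G ≠ 0 := by
    rw [Ne, EmbeddingLike.map_eq_zero_iff]; exact hG
  obtain ⟨j, hj⟩ : ∃ j, (finSuccEquiv k 3 G).coeff j ≠ 0 := by
    by_contra hcon
    push Not at hcon
    exact hF (Polynomial.ext (by simpa using hcon))
  have hnc : ¬ ∀ i, ∃ c : k, ξ i = algebraMap k E c := by
    intro hc
    obtain ⟨c0, h0⟩ := hc 0
    obtain ⟨c1, h1⟩ := hc s.succ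
    have h0' : y = algebraMap k E c0 := h0
    have h1' : x s = algebraMap k E c1 := h1
    have hD := congrArg (D l) h0'
    rw [hy, hsum, hxl, h1'] at hD
    simp [Derivation.leibniz, hDt, hl.symm] at hD
  obtain ⟨f, d, hd, hfh, hfd⟩ := curve_factor ξ l.succ (by simp [hξ, hxl]) hnc _ hj (hco j)
  exact ⟨f, d, hd, hfh, rename_succ_dvd f G (fun j => hfd _ (hco j))⟩

lemma eval_subF {A ι : Type*} [CommRing A] [Fintype ι] [DecidableEq ι] (b : ι → A) (i0 : ι) (p : ι → A)
    (F : MvPolynomial ι A) :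
    eval p (subF b i0 F) = eval (p - (∑ i, b i * p i) • Pi.single i0 1) F := by
  have h : (aeval p : MvPolynomial ι A →ₐ[A] A).comp (subF b i0) =
      (aeval (p - (∑ i, b i * p i) • Pi.single i0 1) : MvPolynomial ι A →ₐ[A] A) := by
    apply MvPolynomial.algHom_ext
    intro i
    rw [AlgHom.comp_apply, subF_X, aeval_X]
    split_ifs with hi
    · subst hi
      simp [coe_aeval_eq_eval, eval_LinF]
    · simp [Pi.single_apply, hi]
  have h2 := congrArg (fun φ => φ F) h
  simpa [coe_aeval_eq_eval] using h2

lemma exists_equiv_apply {k : Type*} [Field k] {n : ℕ} (P : Fin (n + 1) → k) (hP : P ≠ 0) :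
    ∃ ψ : (Fin (n + 1) → k) ≃ₗ[k] (Fin (n + 1) → k), ψ (Pi.single 0 1) = P := by
  obtain ⟨s, hs⟩ : ∃ s, P s ≠ 0 := by
    by_contra h
    push Not at h
    exact hP (funext h)
  set f : (Fin (n + 1) → k) →ₗ[k] (Fin (n + 1) → k) :=
    LinearMap.funLeft k k (Equiv.swap 0 s) + (LinearMap.proj 0).smulRight (P - Pi.single s 1) with hf
  have hfa : ∀ x i, f x i = x (Equiv.swap 0 s i) + x 0 * (P i - (Pi.single s 1 : Fin (n+1) → k) i) := by
    intro x i
    simp [hf, LinearMap.funLeft_apply]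
  have hinj : Function.Injective f := by
    rw [injective_iff_map_eq_zero]
    intro x hx
    have h0 : x 0 = 0 := by
      have := congrFun hx s
      rw [hfa] at this
      simp only [Equiv.swap_apply_right, Pi.single_eq_same, Pi.zero_apply] at this
      have h1 : x 0 * P s = 0 := by linear_combination this
      exact (mul_eq_zero.mp h1).resolve_right hs
    funext i
    have := congrFun hx (Equiv.swap 0 s i)
    rw [hfa, h0] at this
    simpa using this
  refine ⟨LinearEquiv.ofInjectiveEndo f hinj, ?_⟩
  rw [LinearEquiv.coe_ofInjectiveEndo]
  funext i
  rw [hfa]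
  have : (Pi.single (0 : Fin (n+1)) (1:k) : Fin (n+1) → k) (Equiv.swap 0 s i) = (Pi.single s 1 : Fin (n+1) → k) i := by
    simp only [Pi.single_apply]
    congr 1
    rw [Equiv.swap_apply_eq_iff]; simp
  rw [this]
  simp

lemma stmtA {k : Type*} [Field k] [Infinite k] {n : ℕ} (G : MvPolynomial (Fin (n + 2)) k)
    (hhyp : ∀ ℓ : (Fin (n + 2) → k) →ₗ[k] k, ℓ ≠ 0 → ℓ (Pi.single 0 1) = 0 →
      ∃ W : Submodule k (Fin (n + 2) → k), Module.finrank k W = n ∧ (Pi.single 0 1) ∈ W ∧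
        ∀ x ∈ W, ℓ x = 0 ∧ eval x G = 0) (t : Fin n → k) :
    ∃ s a, a s = 1 ∧ subF (vec 0 a) s.succ.succ (subF (vec 1 (fun i => - t i)) 1 G) = 0 := by
  set ℓ : (Fin (n + 2) → k) →ₗ[k] k :=
    LinearMap.proj 1 - ∑ i, t i • LinearMap.proj i.succ.succ with hℓ
  have hℓa : ∀ x, ℓ x = x 1 - ∑ i, t i * x i.succ.succ := by
    intro x
    simp [hℓ]
  obtain ⟨W, hWn, hW0, hW⟩ := hhyp ℓ (by
    intro h
    have := congrArg (fun φ => φ (Pi.single 1 1)) h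
    simp only [hℓa] at this
    have h1 : ∀ i : Fin n, (i.succ.succ : Fin (n + 2)) ≠ 1 := fun i h => by
      have := congrArg Fin.val h; simp at this
    simp [Pi.single_apply, h1] at this) (by
    rw [hℓa]
    simp [Pi.single_apply])
  set π : (Fin (n + 2) → k) →ₗ[k] (Fin n → k) := LinearMap.funLeft k k (fun i => i.succ.succ) with hπ
  have hπa : ∀ x i, π x i = x i.succ.succ := fun x i => rfl
  set U := W.map π with hU
  have hπ0 : π (Pi.single 0 1) = 0 := by
    funext i; simp [hπa, Pi.single_apply]
  -- points of W determined by the projection up to e_0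
  have hdet : ∀ x : Fin (n + 2) → k, ℓ x = 0 → π x = 0 → x = x 0 • Pi.single 0 1 := by
    intro x h1 h2
    have h3 : ∀ i : Fin n, x i.succ.succ = 0 := fun i => congrFun h2 i
    have h4 : x 1 = 0 := by
      rw [hℓa] at h1
      simpa [h3] using h1
    funext i
    refine Fin.cases ?_ (fun i => Fin.cases ?_ (fun i => ?_) i) i
    · simp
    · simpa [Pi.single_apply] using h4
    · simp [h3]
  set f := π.domRestrict W with hf
  have hker : LinearMap.ker f = Submodule.span k {(⟨Pi.single 0 1, hW0⟩ : W)} := by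
    apply le_antisymm
    · intro x hx
      rw [Submodule.mem_span_singleton]
      refine ⟨x.1 0, ?_⟩
      apply Subtype.ext
      exact (hdet x.1 (hW x.1 x.2).1 hx).symm
    · rw [Submodule.span_singleton_le_iff_mem]
      exact hπ0
  have hUr : LinearMap.range f = U := by
    rw [hf, LinearMap.range_domRestrict]
  have hrn := LinearMap.finrank_range_add_finrank_ker f
  rw [hker, finrank_span_singleton (by
    intro h
    have := congrFun (congrArg Subtype.val h) 0
    simp at this), hUr, hWn] at hrn
  have hUtop : U < ⊤ := by
    rw [lt_top_iff_ne_top]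
    intro h
    rw [h, finrank_top] at hrn
    simp at hrn
  obtain ⟨g, hg0, hg⟩ := Submodule.exists_le_ker_of_lt_top U hUtop
  have hgU : U = LinearMap.ker g := by
    apply Submodule.eq_of_le_of_finrank_eq hg
    have h1 := LinearMap.finrank_range_add_finrank_ker g
    have h2 : LinearMap.range g = ⊤ := LinearMap.range_eq_top.mpr (LinearMap.surjective hg0)
    rw [h2, finrank_top] at h1
    simp at h1
    omega
  have hgs : ∀ x, g x = ∑ i, g (Pi.single i 1) * x i := by
    intro x
    conv_lhs => rw [LinearMap.pi_apply_eq_sum_univ g x]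
    refine Finset.sum_congr rfl fun j _ => ?_
    have hs : (fun i' => if j = i' then (1 : k) else 0) = Pi.single j 1 := by
      funext a; simp [Pi.single_apply, eq_comm]
    rw [hs, smul_eq_mul, mul_comm]
  obtain ⟨s, hs⟩ : ∃ s, g (Pi.single s 1) ≠ 0 := by
    by_contra h
    push Not at h
    apply hg0
    ext x
    simp [h]
  refine ⟨s, fun i => g (Pi.single i 1) / g (Pi.single s 1), div_self hs, ?_⟩
  set a : Fin n → k := fun i => g (Pi.single i 1) / g (Pi.single s 1) with ha
  have has : a s = 1 := div_self hs
  have hag : ∀ x, g x = g (Pi.single s 1) * ∑ i, a i * x i := by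
    intro x
    rw [hgs, Finset.mul_sum]
    refine Finset.sum_congr rfl fun i _ => ?_
    simp only [ha]
    field_simp
  have hmem : ∀ q : Fin (n + 2) → k, ℓ q = 0 → ∑ i, a i * q i.succ.succ = 0 → q ∈ W := by
    intro q h1 h2
    have h3 : π q ∈ U := by
      rw [hgU, LinearMap.mem_ker, hag]
      simp only [hπa, h2, mul_zero]
    obtain ⟨w, hw, hwq⟩ := h3
    have h4 := hdet (q - w) (by rw [map_sub, h1, (hW w hw).1, sub_zero]) (by rw [map_sub, hwq, sub_self])
    have h5 : q = w + (q - w) 0 • Pi.single 0 1 := by rw [← h4]; abel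
    rw [h5]
    exact W.add_mem hw (W.smul_mem _ hW0)
  apply MvPolynomial.funext
  intro p
  rw [map_zero, eval_subF, eval_subF]
  set q := p - (∑ i, vec 0 a i * p i) • Pi.single s.succ.succ 1 with hq
  refine (hW _ (hmem _ ?_ ?_)).2
  · rw [hℓa]
    have h1 : ∀ i : Fin n, (i.succ.succ : Fin (n + 2)) ≠ 1 := fun i h => by
      have := congrArg Fin.val h; simp at this
    rw [sum_vec]
    simp [Pi.single_apply, h1]
  · have h1 : ∀ i : Fin n, (i.succ.succ : Fin (n + 2)) ≠ 1 := fun i h => by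
      have := congrArg Fin.val h; simp at this
    simp only [Pi.sub_apply, Pi.smul_apply, Pi.single_apply, h1, if_false, smul_zero, sub_zero]
    simp only [hq, sum_vec, Pi.sub_apply, Pi.smul_apply, Pi.single_apply, Fin.succ_inj]
    simp [mul_sub, Finset.sum_sub_distrib, has]

universe u

lemma hyperplane_done {k : Type*} [Field k] {m : ℕ} (G : MvPolynomial (Fin (m + 1)) k) (P : Fin (m + 1) → k)
    (ψ : (Fin (m + 1) → k) ≃ₗ[k] (Fin (m + 1) → k)) (hψ : ψ (Pi.single 0 1) = P)
    (b : Fin (m + 1) → k) (hb : b ≠ 0) (hb0 : b 0 = 0) (hd : LinF b ∣ restrictPoly G ψ.toLinearMap) :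
    ∃ W : Submodule k (Fin (m + 1) → k), Module.finrank k W = m ∧ P ∈ W ∧
      ∀ x ∈ W, eval x G = 0 := by
  set β : (Fin (m + 1) → k) →ₗ[k] k := ∑ i, b i • LinearMap.proj i with hβ
  have hβa : ∀ x, β x = ∑ i, b i * x i := by intro x; simp [hβ]
  have hβ0 : β ≠ 0 := by
    intro h
    apply hb
    funext i
    have := congrArg (fun φ => φ (Pi.single i 1)) h
    simpa [hβa, Pi.single_apply] using this
  refine ⟨(LinearMap.ker β).map ψ.toLinearMap, ?_, ?_, ?_⟩
  · rw [LinearEquiv.finrank_map_eq]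
    have h1 := LinearMap.finrank_range_add_finrank_ker β
    have h2 : LinearMap.range β = ⊤ := LinearMap.range_eq_top.mpr (LinearMap.surjective hβ0)
    rw [h2, finrank_top] at h1
    simp at h1
    omega
  · refine ⟨Pi.single 0 1, ?_, hψ⟩
    simp [hβa, Pi.single_apply, hb0]
  · rintro _ ⟨y, hy, rfl⟩
    rw [← eval_restrictPoly]
    obtain ⟨c, hc⟩ := hd
    have hy' : ∑ i, b i * y i = 0 := by rw [← hβa]; exact hy
    rw [hc, map_mul, eval_LinF, hy', zero_mul]

lemma rename_LinF {k : Type*} [Field k] {m : ℕ} (c : Fin m → k) :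
    rename Fin.succ (LinF c) = LinF (Fin.cons 0 c : Fin (m + 1) → k) := by
  rw [LinF, LinF, Fin.sum_univ_succ]
  simp

lemma reduction {k : Type*} [Field k] [Infinite k] {n : ℕ} (G : MvPolynomial (Fin (n + 2)) k)
    (P : Fin (n + 2) → k) (ψ : (Fin (n + 2) → k) ≃ₗ[k] (Fin (n + 2) → k)) (hψ : ψ (Pi.single 0 1) = P)
    (hhyp : ∀ ℓ : (Fin (n + 2) → k) →ₗ[k] k, ℓ ≠ 0 → ℓ P = 0 →
      ∃ W : Submodule k (Fin (n + 2) → k), Module.finrank k W = n ∧ P ∈ W ∧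
        ∀ x ∈ W, ℓ x = 0 ∧ eval x G = 0) (t : Fin n → k) :
    ∃ (s : Fin n) (a : Fin n → k), a s = 1 ∧
      subF (vec 0 a) s.succ.succ (subF (vec 1 (fun i => - t i)) 1 (restrictPoly G ψ.toLinearMap)) = 0 := by
  apply stmtA
  intro ℓ hℓ hℓ0
  have hsym : ψ.symm P = Pi.single 0 1 := by rw [← hψ, LinearEquiv.symm_apply_apply]
  obtain ⟨W, h1, h2, h3⟩ := hhyp (ℓ.comp ψ.symm.toLinearMap) (by
    intro h
    apply hℓ
    apply LinearMap.ext
    intro x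
    have := congrArg (fun φ => φ (ψ x)) h
    simpa using this) (by
    rw [LinearMap.comp_apply, LinearEquiv.coe_coe, hsym, hℓ0])
  refine ⟨W.map ψ.symm.toLinearMap, ?_, ⟨P, h2, hsym⟩, ?_⟩
  · rw [LinearEquiv.finrank_map_eq, h1]
  · rintro _ ⟨y, hy, rfl⟩
    rw [eval_restrictPoly]
    have := h3 y hy
    simpa using this

theorem main_ge {k : Type u} [Field k] [IsAlgClosed k] [CharZero k] {n : ℕ} (hn : 3 ≤ n)
    (G : MvPolynomial (Fin (n + 2)) k)
    (hA : ∀ t : Fin n → k, ∃ (s : Fin n) (a : Fin n → k), a s = 1 ∧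
      subF (vec 0 a) s.succ.succ (subF (vec 1 (fun i => - t i)) 1 G) = 0) :
    ∃ b : Fin (n + 2) → k, b ≠ 0 ∧ b 0 = 0 ∧ LinF b ∣ G := by
  obtain ⟨s, E, _, _, D, t, a, hcomm, hDt, has, h⟩ := generic_family G hA
  have : CharZero E := charZero_of_injective_algebraMap (algebraMap k E).injective
  obtain ⟨b, i0, hb0, hb1, hb⟩ := core hn D hcomm t hDt a s has G h
  obtain ⟨b', h1, h2, h3⟩ := spec_hyperplane b i0 0 hb0 hb1 G hb
  exact ⟨b', by rintro rfl; simp at h2, h1, h3⟩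

theorem main_three {k : Type u} [Field k] [IsAlgClosed k] [CharZero k]
    (G : MvPolynomial (Fin (3 + 1)) k) (hG : G ≠ 0)
    (hA : ∀ t : Fin 2 → k, ∃ (s : Fin 2) (a : Fin 2 → k), a s = 1 ∧
      subF (vec 0 a) s.succ.succ (subF (vec 1 (fun i => - t i)) 1 G) = 0)
    (φ : (Fin 3 → k) →ₗ[k] (Fin (3 + 1) → k)) (hφ : Function.Injective φ) (p : Fin 3 → k)
    (hp : φ p = Pi.single 0 1) (lam : MvPolynomial (Fin 3) k)
    (h2 : ¬ lam ^ 2 ∣ restrictPoly G φ)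
    (huniq : ∀ lam' : MvPolynomial (Fin 3) k, lam' ≠ 0 → lam'.IsHomogeneous 1 →
          lam' ∣ restrictPoly G φ → eval p lam' = 0 → ∃ c : k, lam' = c • lam) :
    ∃ b : Fin (3 + 1) → k, b ≠ 0 ∧ b 0 = 0 ∧ LinF b ∣ G := by
  obtain ⟨s, E, _, _, D, t, a, hcomm, hDt, has, h⟩ := generic_family G hA
  obtain ⟨f, d, hd, hfh, hfG⟩ := case3 D t a s hDt has G hG h
  have hd1 := endgame G f d hd hfh hfG φ hφ p hp lam h2 huniq
  subst hd1
  obtain ⟨c, rfl⟩ := linear_eq_LinF f hfh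
  rw [rename_LinF] at hfG
  refine ⟨Fin.cons 0 c, ?_, rfl, hfG⟩
  intro h0
  rw [h0] at hfG
  apply hG
  simpa [LinF] using hfG

/-- Lemma 7.1 of Salberger: let `Z = {G = 0} ⊂ P^r`, `r ≥ 3`, be a (possibly
non-reduced or reducible) hypersurface over an algebraically closed field of
characteristic `0` and `P` a point of `Z` such that every hyperplane section of `Z`
through `P` contains an `(r-2)`-plane through `P`.  If `r = 3`, suppose also that some
plane `Π = ker ℓ₀` through `P` is such that there is (up to scalars) exactly one line on
`Π ∩ Z` through `P`, and this line is simple on `Π ∩ Z`.  Then there is an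
`(r-1)`-plane on `Z` through `P`. -/
theorem stmt_15 (k : Type*) [Field k] [IsAlgClosed k] [CharZero k] (r : ℕ) (hr : 3 ≤ r)
    (G : MvPolynomial (Fin (r + 1)) k) (hG0 : G ≠ 0) (e : ℕ) (he : 0 < e)
    (hhom : G.IsHomogeneous e)
    (P : Fin (r + 1) → k) (hP0 : P ≠ 0) (hPG : eval P G = 0)
    (hhyp : ∀ ℓ : (Fin (r + 1) → k) →ₗ[k] k, ℓ ≠ 0 → ℓ P = 0 →
      ∃ W : Submodule k (Fin (r + 1) → k), Module.finrank k W = r - 1 ∧ P ∈ W ∧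
        ∀ x ∈ W, ℓ x = 0 ∧ eval x G = 0)
    (hr3 : r = 3 → ∃ ℓ₀ : (Fin (r + 1) → k) →ₗ[k] k, ℓ₀ ≠ 0 ∧ ℓ₀ P = 0 ∧
      ∃ φ : (Fin 3 → k) ≃ₗ[k] (LinearMap.ker ℓ₀), ∃ hPker : P ∈ LinearMap.ker ℓ₀,
      ∃ lam : MvPolynomial (Fin 3) k, lam ≠ 0 ∧ lam.IsHomogeneous 1 ∧
        lam ∣ restrictPoly G ((LinearMap.ker ℓ₀).subtype.comp φ.toLinearMap) ∧
        eval (φ.symm ⟨P, hPker⟩) lam = 0 ∧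
        ¬ (lam ^ 2 ∣ restrictPoly G ((LinearMap.ker ℓ₀).subtype.comp φ.toLinearMap)) ∧
        ∀ lam' : MvPolynomial (Fin 3) k, lam' ≠ 0 → lam'.IsHomogeneous 1 →
          lam' ∣ restrictPoly G ((LinearMap.ker ℓ₀).subtype.comp φ.toLinearMap) →
          eval (φ.symm ⟨P, hPker⟩) lam' = 0 →
          ∃ c : k, lam' = c • lam) :
    ∃ W : Submodule k (Fin (r + 1) → k), Module.finrank k W = r ∧ P ∈ W ∧
      ∀ x ∈ W, eval x G = 0 := by
  obtain ⟨ψ, hψ⟩ := exists_equiv_apply P hP0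
  have hinf : Infinite k := IsAlgClosed.instInfinite
  obtain ⟨n, rfl⟩ : ∃ n, r = n + 1 := ⟨r - 1, by omega⟩
  have hA := reduction (n := n) G P ψ hψ hhyp
  have hGt : restrictPoly G ψ.toLinearMap ≠ 0 := restrictPoly_ne_zero G hG0 _ ψ.surjective
  suffices hb : ∃ b : Fin (n + 2) → k, b ≠ 0 ∧ b 0 = 0 ∧ LinF b ∣ restrictPoly G ψ.toLinearMap by
    obtain ⟨b, h1, h2, h3⟩ := hb
    exact hyperplane_done G P ψ hψ b h1 h2 h3
  by_cases hn : 3 ≤ n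
  · exact main_ge hn _ hA
  · obtain rfl : n = 2 := by omega
    obtain ⟨ℓ₀, hℓ0, hℓP, φ, hPker, lam, hl0, hlh, hld, hlP, hl2, huniq⟩ := hr3 rfl
    have hcomp : restrictPoly (restrictPoly G ψ.toLinearMap)
        (ψ.symm.toLinearMap.comp ((LinearMap.ker ℓ₀).subtype.comp φ.toLinearMap)) =
        restrictPoly G ((LinearMap.ker ℓ₀).subtype.comp φ.toLinearMap) := by
      rw [restrictPoly_comp]
      congr 1
      apply LinearMap.ext
      intro x
      simp
    rw [← hcomp] at hl2 huniq
    refine main_three _ hGt hA _ ?_ (φ.symm ⟨P, hPker⟩) ?_ lam hl2 huniq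
    · exact ψ.symm.injective.comp ((Submodule.injective_subtype _).comp φ.injective)
    · simp [← hψ]
end

section
/- Let k be a field with algebraic closure k̄, let I ⊂ k[x_0,…,x_n] be a homogeneous prime ideal such that the Krull dimension of k[x_0,…,x_n]/I is r+1 with r ≥ 1 (so X = Proj(k[x_0,…,x_n]/I) is an integral closed subscheme of P^n_k of dimension r), and let V ⊆ k̄^{n+1} be the common zero set of I over k̄. Then the following are equivalent: (a) every nonzero x ∈ V lies in an r-dimensional k̄-linear subspace W of k̄^{n+1} with W ⊆ V; (b) there are infinitely many r-dimensional k̄-linear subspaces W of k̄^{n+1} with W ⊆ V. -/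
open MvPolynomial

namespace S16

universe u v

/-- generic linear parametrisation -/
noncomputable def lin {r m : ℕ} {A : Type*} [CommRing A] (w : Fin r → Fin m → A) (j : Fin m) :
    MvPolynomial (Fin r) A := ∑ i, C (w i j) * X i

/-- evaluate along the parametrisation -/
noncomputable def th {k : Type*} [Field k] {r m : ℕ} {A : Type*} [CommRing A] (c : k →+* A)
    (w : Fin r → Fin m → A) : MvPolynomial (Fin m) k →+* MvPolynomial (Fin r) A :=
  eval₂Hom (C.comp c) (lin w)

structure Good {k : Type*} [Field k] {r m : ℕ} (I : Ideal (MvPolynomial (Fin m) k))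
    {A : Type*} [CommRing A] (ρ : MvPolynomial (Fin m) k →+* A) (e : Fin r → Fin m)
    (w : Fin r → Fin m → A) : Prop where
  piv : ∀ i j, w i (e j) = if i = j then 1 else 0
  van : ∀ f ∈ I, th (ρ.comp C) w f = 0
  thr : ∀ j, ρ (X j) = ∑ i, ρ (X (e i)) * w i j

section
variable {k : Type*} [Field k] {r m : ℕ} {I : Ideal (MvPolynomial (Fin m) k)}

lemma map_lin {A B : Type*} [CommRing A] [CommRing B] (φ : A →+* B) (w : Fin r → Fin m → A) (j) :
    MvPolynomial.map φ (lin w j) = lin (fun i j => φ (w i j)) j := by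
  simp [lin]

lemma map_th {A B : Type*} [CommRing A] [CommRing B] (φ : A →+* B) (c : k →+* A)
    (w : Fin r → Fin m → A) (f) :
    MvPolynomial.map φ (th c w f) = th (φ.comp c) (fun i j => φ (w i j)) f := by
  have : (MvPolynomial.map φ).comp (th c w) = th (φ.comp c) (fun i j => φ (w i j)) := by
    apply MvPolynomial.ringHom_ext
    · intro a; simp [th]
    · intro j; simp [th, map_lin]
  exact congrArg (fun g => g f) this

lemma Good.push {A B : Type*} [CommRing A] [CommRing B] (φ : A →+* B)
    {ρ : MvPolynomial (Fin m) k →+* A} {e : Fin r → Fin m} {w : Fin r → Fin m → A}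
    (h : Good I ρ e w) : Good I (φ.comp ρ) e (fun i j => φ (w i j)) where
  piv i j := by simp only [h.piv]; split_ifs <;> simp
  van f hf := by
    rw [RingHom.comp_assoc, ← map_th, h.van f hf, map_zero]
  thr j := by simp [h.thr j, map_sum]

lemma Good.reflect {A : Type*} [CommRing A] {ι : Type*} {B : ι → Type*} [∀ i, CommRing (B i)]
    (φ : ∀ i, A →+* B i) (hφ : ∀ a b, (∀ i, φ i a = φ i b) → a = b)
    {ρ : MvPolynomial (Fin m) k →+* A} {e : Fin r → Fin m} {w : Fin r → Fin m → A}
    (h : ∀ l, Good I ((φ l).comp ρ) e (fun i j => φ l (w i j))) : Good I ρ e w where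
  piv i j := hφ _ _ fun l => by rw [(h l).piv]; split_ifs <;> simp
  van f hf := by
    ext d
    refine hφ _ _ fun l => ?_
    have := (h l).van f hf
    rw [RingHom.comp_assoc, ← map_th] at this
    rw [← MvPolynomial.coeff_map, this]; simp
  thr j := hφ _ _ fun l => by
    have := (h l).thr j
    simpa [map_sum] using this

/-- valuation step -/
lemma Good.specialize {Ω : Type u} [Field Ω] {ρ : MvPolynomial (Fin m) k →+* Ω}
    {e : Fin r → Fin m} {w : Fin r → Fin m → Ω} (h : Good I ρ e w)
    (p : Ideal (MvPolynomial (Fin m) k)) (hp : p ≠ ⊤) (hk : RingHom.ker ρ ≤ p) :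
    ∃ (κ : Type u) (_ : Field κ) (ρ' : MvPolynomial (Fin m) k →+* κ) (e' : Fin r → Fin m)
      (w' : Fin r → Fin m → κ), Good I ρ' e' w' ∧ p ≤ RingHom.ker ρ' := by
  classical
  have hq : p.map ρ.rangeRestrict ≠ ⊤ := by
    intro ht
    apply hp
    have := Ideal.comap_map_of_surjective ρ.rangeRestrict ρ.rangeRestrict_surjective p
    rw [ht, Ideal.comap_top] at this
    rw [eq_top_iff, this]
    refine sup_le le_rfl fun x hx => hk ?_
    have hx' : ρ.rangeRestrict x = 0 := by simpa using hx
    have := congrArg Subtype.val hx'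
    simpa [RingHom.mem_ker] using this
  obtain ⟨B, hB1, hB2⟩ := Ideal.image_subset_nonunits_valuationSubring _ hq
  let W : Matrix (Fin r) (Fin m) Ω := Matrix.of w
  have : Nonempty (Fin r → Fin m) := ⟨e⟩
  obtain ⟨e', he'⟩ := Finite.exists_max
    (fun e' : Fin r → Fin m => B.valuation (W.submatrix id e').det)
  set N := W.submatrix id e' with hN
  have hWe : W.submatrix id e = 1 := by
    ext i j; simp [W, h.piv, Matrix.one_apply]
  have h1 : (1 : B.ValueGroup) ≤ B.valuation N.det := by
    have := he' e
    simpa [hWe] using this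
  have hdet : N.det ≠ 0 := by
    intro h0; rw [h0] at h1; simp at h1
  have hu : IsUnit N.det := hdet.isUnit
  let W' : Matrix (Fin r) (Fin m) Ω := N⁻¹ * W
  have hsub : ∀ g : Fin r → Fin m, W'.submatrix id g = N⁻¹ * W.submatrix id g := by
    intro g; ext i j; simp [W', Matrix.mul_apply]
  have hW'e : W'.submatrix id e' = 1 := by
    rw [hsub, Matrix.nonsing_inv_mul _ hu]
  have hint : ∀ i j, W' i j ∈ B := by
    intro i j
    have h2 : W' i j = (W'.submatrix id (Function.update e' i j)).det := by
      have h3 : W'.submatrix id (Function.update e' i j)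
          = (1 : Matrix (Fin r) (Fin r) Ω).updateCol i (fun l => W' l j) := by
        ext a b
        by_cases hb : b = i
        · subst hb; simp
        · rw [Matrix.updateCol_ne hb, ← hW'e]; simp [Function.update_of_ne hb]
      rw [h3, ← Matrix.cramer_apply, Matrix.cramer_one]; rfl
    rw [← B.valuation_le_one_iff, h2, hsub, Matrix.det_mul, map_mul]
    calc _ ≤ B.valuation (N⁻¹).det * B.valuation N.det := by
            gcongr; exact he' _
      _ = 1 := by
        rw [← map_mul, ← Matrix.det_mul, Matrix.nonsing_inv_mul _ hu]; simp
  have hgood : Good I ρ e' W' := by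
    refine ⟨?_, ?_, ?_⟩
    · intro i j
      have := congrFun (congrFun hW'e i) j
      simpa [Matrix.one_apply] using this
    · intro f hf
      let s : MvPolynomial (Fin r) Ω →+* MvPolynomial (Fin r) Ω :=
        eval₂Hom C (fun l => ∑ i, C (N⁻¹ i l) * X i)
      have : th (ρ.comp C) W' = s.comp (th (ρ.comp C) w) := by
        apply MvPolynomial.ringHom_ext
        · intro a; simp [th, s]
        · intro j
          simp only [th, RingHom.comp_apply, coe_eval₂Hom, eval₂_X, lin, map_sum, map_mul, s, eval₂_C,
            W', Matrix.mul_apply, Finset.sum_mul, Finset.mul_sum]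
          rw [Finset.sum_comm]
          refine Finset.sum_congr rfl fun a _ => Finset.sum_congr rfl fun b _ => ?_
          simp only [W, Matrix.of_apply]; ring
      rw [this, RingHom.comp_apply, h.van f hf, map_zero]
    · have h3 : (fun j => ρ (X j)) = Matrix.vecMul (fun i => ρ (X (e i))) W := by
        ext j; simpa [Matrix.vecMul, dotProduct, W] using h.thr j
      have h4 : (fun i => ρ (X (e' i))) = Matrix.vecMul (fun i => ρ (X (e i))) N := by
        ext i
        have := congrFun h3 (e' i)
        simpa [Matrix.vecMul, dotProduct, hN] using this
      intro j
      have : (fun j => ρ (X j)) = Matrix.vecMul (fun i => ρ (X (e' i))) W' := by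
        rw [h4, Matrix.vecMul_vecMul, ← Matrix.mul_assoc, Matrix.mul_nonsing_inv _ hu, Matrix.one_mul, h3]
      simpa [Matrix.vecMul, dotProduct] using congrFun this j
  let ρB : MvPolynomial (Fin m) k →+* B := ρ.codRestrict B.toSubring (fun x => hB1 ⟨x, rfl⟩)
  have hgB : Good I ρB e' (fun i j => (⟨W' i j, hint i j⟩ : B)) := by
    refine Good.reflect (ι := Unit) (B := fun _ => Ω) (fun _ => B.subtype) ?_ ?_
    · intro a b hab; exact Subtype.ext (hab ())
    · intro _; exact hgood
  refine ⟨IsLocalRing.ResidueField B, inferInstance, (IsLocalRing.residue B).comp ρB, e', _,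
    hgB.push _, ?_⟩
  intro x hx
  rw [RingHom.mem_ker, RingHom.comp_apply, IsLocalRing.residue_eq_zero_iff]
  have h5 : (ρB x : Ω) ∈ B.nonunits := hB2 ⟨ρ.rangeRestrict x, Ideal.mem_map_of_mem _ hx, rfl⟩
  exact (ValuationSubring.coe_mem_nonunits_iff).1 h5

/-- descent step -/
lemma Good.descend' {κ : Type*} [Field κ] {F : Type*} [Field F]
    (q : MvPolynomial (Fin m) k →+* F) (a : F →+* κ)
    {e : Fin r → Fin m} {w : Fin r → Fin m → κ} (h : Good I (a.comp q) e w)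
    {K : Type*} [Field K] [IsAlgClosed K] (b : F →+* K) :
    ∃ w' : Fin r → Fin m → K, Good I (b.comp q) e w' := by
  let _ : Algebra F K := b.toAlgebra
  let ev : MvPolynomial (Fin r × Fin m) F →+* κ := eval₂Hom a (fun q => w q.1 q.2)
  obtain ⟨M, hM, hle⟩ := Ideal.exists_le_maximal (RingHom.ker ev) (RingHom.ker_ne_top ev)
  obtain ⟨y, hy⟩ := eq_vanishingIdeal_singleton_of_isMaximal K hM
  let T := MvPolynomial (Fin r × Fin m) F ⧸ RingHom.ker ev
  let ρT : MvPolynomial (Fin m) k →+* T :=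
    (Ideal.Quotient.mk _).comp (C.comp q)
  let u : T →+* κ := RingHom.kerLift ev
  have hu : ∀ x, u (Ideal.Quotient.mk _ x) = ev x := fun x => RingHom.kerLift_mk ev x
  have hT : Good I ρT e (fun i j => (Ideal.Quotient.mk _ (X (i, j)) : T)) := by
    refine Good.reflect (ι := Unit) (B := fun _ => κ) (fun _ => u) ?_ ?_
    · intro p q hpq; exact RingHom.kerLift_injective ev (hpq ())
    · intro _
      have e1 : u.comp ρT = a.comp q := by
        apply RingHom.ext; intro x
        exact (hu _).trans (by simp [ev])
      have e2 : (fun i j => u (Ideal.Quotient.mk _ (X (i, j)))) = w := by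
        ext i j
        exact (hu _).trans (by simp [ev])
      rw [e1, e2]; exact h
  let v : T →+* K := Ideal.Quotient.lift _ (aeval (R := F) y).toRingHom (by
    intro x hx
    have := hle hx
    rw [hy, mem_vanishingIdeal_singleton_iff] at this
    exact this)
  have h1 := hT.push v
  have e1 : v.comp ρT = b.comp q := by
    apply RingHom.ext; intro x
    change aeval (R := F) y (C (q x)) = b (q x)
    rw [aeval_C]; rfl
  rw [e1] at h1
  exact ⟨_, h1⟩

lemma Good.descend {κ : Type*} [Field κ] {ρ : MvPolynomial (Fin m) k →+* κ}
    {e : Fin r → Fin m} {w : Fin r → Fin m → κ} (h : Good I ρ e w)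
    {K : Type*} [Field K] [IsAlgClosed K] (σ : MvPolynomial (Fin m) k →+* K)
    (hmax : (RingHom.ker σ).IsMaximal) (hk : RingHom.ker σ ≤ RingHom.ker ρ) :
    ∃ w' : Fin r → Fin m → K, Good I σ e w' := by
  let _ : Field (MvPolynomial (Fin m) k ⧸ RingHom.ker σ) := Ideal.Quotient.field _
  exact Good.descend' (Ideal.Quotient.mk (RingHom.ker σ)) (Ideal.Quotient.lift _ ρ hk) h
    (Ideal.Quotient.lift _ σ (fun x hx => hx))

/-- generic step -/
lemma exists_generic {k : Type u} [Field k] {r m : ℕ} {I : Ideal (MvPolynomial (Fin m) k)}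
    (hI : I.IsPrime) {K : Type v} [Field K] (e : Fin r → Fin m)
    (h : ∀ f, (∀ (σ : MvPolynomial (Fin m) k →+* K) (w : Fin r → Fin m → K), Good I σ e w →
      σ f = 0) → f ∈ I) :
    ∃ (Ω : Type (max u v)) (_ : Field Ω) (ρ : MvPolynomial (Fin m) k →+* Ω)
      (w : Fin r → Fin m → Ω), Good I ρ e w ∧ RingHom.ker ρ ≤ I := by
  let ι := {q : (MvPolynomial (Fin m) k →+* K) × (Fin r → Fin m → K) // Good I q.1 e q.2}
  let A := ι → K
  let ρ : MvPolynomial (Fin m) k →+* A := RingHom.pi (fun q : ι => q.1.1)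
  let w : Fin r → Fin m → A := fun i j q => q.1.2 i j
  have hA : Good I ρ e w := by
    refine Good.reflect (ι := ι) (B := fun _ => K) (fun q => Pi.evalRingHom _ q) ?_ ?_
    · intro a b hab; exact funext hab
    · intro q; exact q.2
  let S : Submonoid A := I.primeCompl.map ρ
  have hS : Disjoint ((⊥ : Ideal A) : Set A) (S : Set A) := by
    rw [Set.disjoint_left]
    rintro _ h0 ⟨f, hf, rfl⟩
    apply hf
    apply h
    intro σ w hg
    exact congrFun (show ρ f = 0 from h0) ⟨(σ, w), hg⟩
  obtain ⟨P, hP, -, hd⟩ := Ideal.exists_le_prime_disjoint _ _ hS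
  refine ⟨FractionRing (A ⧸ P), inferInstance, ((algebraMap (A ⧸ P) _).comp (Ideal.Quotient.mk P)).comp ρ,
    _, hA.push _, ?_⟩
  intro f hf
  by_contra hfI
  rw [RingHom.mem_ker, RingHom.comp_apply, RingHom.comp_apply,
    FaithfulSMul.algebraMap_eq_zero_iff, Ideal.Quotient.eq_zero_iff_mem] at hf
  exact Set.disjoint_left.1 hd hf ⟨f, hfI, rfl⟩

/-- combination -/
lemma exists_good (hI : I.IsPrime) {K : Type*} [Field K] [IsAlgClosed K] (e : Fin r → Fin m)
    (h : ∀ f, (∀ (σ : MvPolynomial (Fin m) k →+* K) (w : Fin r → Fin m → K), Good I σ e w →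
      σ f = 0) → f ∈ I) (σ : MvPolynomial (Fin m) k →+* K)
    (hmax : (RingHom.ker σ).IsMaximal) (hk : I ≤ RingHom.ker σ) :
    ∃ (e' : Fin r → Fin m) (w' : Fin r → Fin m → K), Good I σ e' w' := by
  obtain ⟨Ω, _, ρ, w, hg, hρ⟩ := exists_generic hI e h
  obtain ⟨κ, _, ρ', e', w', hg', hp⟩ := hg.specialize _ hmax.ne_top (hρ.trans hk)
  exact ⟨e', hg'.descend σ hmax hp⟩

end

lemma dim_le_of_integral (R S : Type*) [CommRing R] [CommRing S] (φ : R →+* S)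
    (h : φ.IsIntegral) : ringKrullDim S ≤ ringKrullDim R := by
  let _ := φ.toAlgebra
  have : Algebra.IsIntegral R S := ⟨h⟩
  refine Order.krullDim_le_of_strictMono (PrimeSpectrum.comap φ) ?_
  intro p q hpq
  exact Ideal.IsIntegral.comap_lt_comap (R := R) (A := S) hpq

lemma lift_series {R S : Type*} [CommRing R] [CommRing S] [Algebra R S] [Algebra.IsIntegral R S]
    (hi : Function.Injective (algebraMap R S)) (p : LTSeries (PrimeSpectrum R)) :
    ∃ q : LTSeries (PrimeSpectrum S), q.length = p.length ∧
      PrimeSpectrum.comap (algebraMap R S) q.last = p.last := by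
  induction p using RelSeries.inductionOn' with
  | singleton x =>
    obtain ⟨Q, -, hQ, hc⟩ := Ideal.exists_ideal_over_prime_of_isIntegral (S := S) x.asIdeal ⊥
      (by
        intro y hy
        have : y = 0 := hi (by simpa using hy)
        simp [this])
    exact ⟨RelSeries.singleton _ ⟨Q, hQ⟩, rfl, PrimeSpectrum.ext hc⟩
  | snoc p x hx ih =>
    obtain ⟨q, hl, hq⟩ := ih
    have hx' : p.last < x := hx
    obtain ⟨Q, hle, hQ, hc⟩ := Ideal.exists_ideal_over_prime_of_isIntegral (S := S) x.asIdeal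
      q.last.asIdeal (by
        have : (q.last.asIdeal).comap (algebraMap R S) = p.last.asIdeal :=
          congrArg PrimeSpectrum.asIdeal hq
        rw [this]; exact hx'.le)
    have hlt : q.last < ⟨Q, hQ⟩ := by
      refine lt_of_le_of_ne hle ?_
      intro h
      rw [h] at hq
      have : x = p.last := by rw [← hq]; exact (PrimeSpectrum.ext hc).symm
      exact hx'.ne' this
    refine ⟨q.snoc ⟨Q, hQ⟩ hlt, by simp [hl], ?_⟩
    rw [RelSeries.last_snoc, RelSeries.last_snoc]
    exact PrimeSpectrum.ext hc

lemma dim_ge_of_integral (R S : Type*) [CommRing R] [CommRing S] (φ : R →+* S)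
    (h : φ.IsIntegral) (hi : Function.Injective φ) : ringKrullDim R ≤ ringKrullDim S := by
  let _ := φ.toAlgebra
  have : Algebra.IsIntegral R S := ⟨h⟩
  unfold ringKrullDim Order.krullDim
  refine iSup_le fun p => ?_
  obtain ⟨q, hq, -⟩ := lift_series (S := S) hi p
  rw [← hq]
  exact le_iSup (fun q : LTSeries (PrimeSpectrum S) => (q.length : WithBot ℕ∞)) q

lemma integral_quotient {R S : Type*} [CommRing R] [CommRing S] (φ : R →+* S)
    (h : φ.IsIntegral) (Q : Ideal S) :
    (Ideal.quotientMap Q φ le_rfl : R ⧸ Q.comap φ →+* S ⧸ Q).IsIntegral := by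
  apply RingHom.IsIntegral.tower_top (Ideal.Quotient.mk _)
  rw [Ideal.quotientMap_comp_mk]
  exact RingHom.IsIntegral.trans _ _ h
    (RingHom.isIntegral_of_surjective _ Ideal.Quotient.mk_surjective)

lemma integral_map {σ k K : Type*} [Field k] [Field K] [Algebra k K] [Algebra.IsIntegral k K] :
    (MvPolynomial.map (σ := σ) (algebraMap k K)).IsIntegral := by
  intro x
  let _ : Algebra (MvPolynomial σ k) (MvPolynomial σ K) := MvPolynomial.algebraMvPolynomial
  exact (inferInstance : Algebra.IsIntegral (MvPolynomial σ k) (MvPolynomial σ K)).isIntegral x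
section
variable {k : Type*} [Field k] {r m : ℕ} {I : Ideal (MvPolynomial (Fin m) k)}
variable {K : Type*} [Field K] [Algebra k K]

lemma th_comp (c : k →+* K) (w : Fin r → Fin m → K) :
    th c w = (th (RingHom.id K) w).comp (MvPolynomial.map c) := by
  apply MvPolynomial.ringHom_ext
  · intro a; simp [th]
  · intro j; simp [th]

lemma th_surj {e : Fin r → Fin m} {w : Fin r → Fin m → K}
    (hp : ∀ i j, w i (e j) = if i = j then 1 else 0) :
    Function.Surjective (th (RingHom.id K) w) := by
  intro f
  refine ⟨rename e f, ?_⟩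
  have : (th (RingHom.id K) w).comp (rename e : MvPolynomial (Fin r) K →ₐ[K] _).toRingHom
      = RingHom.id _ := by
    apply MvPolynomial.ringHom_ext
    · intro a; simp [th]
    · intro j; simp [th, lin, hp]
  exact congrArg (fun g => g f) this

lemma dim_K (r : ℕ) : ringKrullDim (MvPolynomial (Fin r) K) = r := by
  simp

lemma dim_quot_le [Algebra.IsIntegral k K] {e : Fin r → Fin m} {w : Fin r → Fin m → K}
    (hp : ∀ i j, w i (e j) = if i = j then 1 else 0)
    (h : RingHom.ker (th (algebraMap k K) w) ≤ I) :
    ringKrullDim (MvPolynomial (Fin m) k ⧸ I) ≤ r := by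
  have h1 : ringKrullDim (MvPolynomial (Fin m) k ⧸ I) ≤
      ringKrullDim (MvPolynomial (Fin m) k ⧸ RingHom.ker (th (algebraMap k K) w)) :=
    ringKrullDim_le_of_surjective (Ideal.Quotient.factor h) (Ideal.Quotient.factor_surjective h)
  refine h1.trans ((dim_ge_of_integral _ _ (RingHom.kerLift (th (algebraMap k K) w)) ?_
    (RingHom.kerLift_injective _)).trans (dim_K (K := K) r).le)
  apply RingHom.IsIntegral.tower_top (Ideal.Quotient.mk (RingHom.ker (th (algebraMap k K) w)))
  have : (th (algebraMap k K) w).kerLift.comp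
      (Ideal.Quotient.mk (RingHom.ker (th (algebraMap k K) w))) = th (algebraMap k K) w := by
    apply RingHom.ext; intro x; exact RingHom.kerLift_mk (th (algebraMap k K) w) x
  rw [this, th_comp]
  exact RingHom.IsIntegral.trans _ _ integral_map
    (RingHom.isIntegral_of_surjective _ (th_surj hp))

lemma ker_inj {e : Fin r → Fin m} {w w' : Fin r → Fin m → K}
    (hp : ∀ i j, w i (e j) = if i = j then 1 else 0)
    (hp' : ∀ i j, w' i (e j) = if i = j then 1 else 0)
    (h : RingHom.ker (th (RingHom.id K) w) = RingHom.ker (th (RingHom.id K) w')) : w = w' := by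
  ext i j
  have key : ∀ u : Fin r → Fin m → K, (∀ i j, u i (e j) = if i = j then 1 else 0) →
      th (RingHom.id K) u (X j - ∑ i, C (w i j) * X (e i)) = ∑ i, C (u i j - w i j) * X i := by
    intro u hu
    simp [th, lin, hu, sub_mul, Finset.sum_sub_distrib]
  have h1 : (X j - ∑ i, C (w i j) * X (e i)) ∈ RingHom.ker (th (RingHom.id K) w) := by
    rw [RingHom.mem_ker, key w hp]; simp
  rw [h, RingHom.mem_ker, key w' hp'] at h1
  have h2 := congrArg (MvPolynomial.eval (Pi.single i (1 : K))) h1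
  simp [Pi.single_apply] at h2
  exact (sub_eq_zero.1 h2).symm

/-- dimension step -/
lemma dim_step [Algebra.IsIntegral k K] (hI : I.IsPrime)
    (hdim : ringKrullDim (MvPolynomial (Fin m) k ⧸ I) = ((r + 1 : ℕ) : WithBot ℕ∞))
    (e : Fin r → Fin m) (G : Set (Fin r → Fin m → K)) (hG : G.Infinite)
    (hp : ∀ w ∈ G, ∀ i j, w i (e j) = if i = j then 1 else 0)
    (hv : ∀ w ∈ G, ∀ f ∈ I, th (algebraMap k K) w f = 0)
    (f : MvPolynomial (Fin m) k) (hf : ∀ w ∈ G, th (algebraMap k K) w f = 0) : f ∈ I := by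
  by_contra hfI
  let J : Ideal (MvPolynomial (Fin m) k) := I ⊔ Ideal.span {f}
  let J' := J.map (MvPolynomial.map (algebraMap k K))
  have hmin : ∀ w ∈ G, RingHom.ker (th (RingHom.id K) w) ∈ J'.minimalPrimes := by
    intro w hw
    refine ⟨⟨RingHom.ker_isPrime _, ?_⟩, ?_⟩
    · rw [Ideal.map_le_iff_le_comap, RingHom.comap_ker, ← th_comp]
      refine sup_le (fun g hg => hv w hw g hg) ?_
      rw [Ideal.span_singleton_le_iff_mem]
      exact hf w hw
    · rintro Q ⟨hQ, hJQ⟩ hle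
      by_contra hnot
      obtain ⟨g, hg, hgQ⟩ := Set.not_subset.1 hnot
      have d1 : ringKrullDim (MvPolynomial (Fin r) K) + 1 ≤
          ringKrullDim (MvPolynomial (Fin m) K ⧸ Q) := by
        refine ringKrullDim_succ_le_of_surjective
          (Ideal.Quotient.lift Q (th (RingHom.id K) w) hle)
          (Ideal.Quotient.lift_surjective_of_surjective _ _ (th_surj (hp w hw)))
          (r := Ideal.Quotient.mk Q g) ?_ hg
        rw [mem_nonZeroDivisors_iff_ne_zero, Ne, Ideal.Quotient.eq_zero_iff_mem]
        exact hgQ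
      have d2 := dim_le_of_integral _ _ _
        (integral_quotient (MvPolynomial.map (σ := Fin m) (algebraMap k K)) integral_map Q)
      have hJ2 : J ≤ Q.comap (MvPolynomial.map (algebraMap k K)) := Ideal.map_le_iff_le_comap.1 hJQ
      have d3 : ringKrullDim (MvPolynomial (Fin m) k ⧸ Q.comap (MvPolynomial.map (algebraMap k K)))
          + 1 ≤ ringKrullDim (MvPolynomial (Fin m) k ⧸ I) := by
        refine ringKrullDim_succ_le_of_surjective
          (Ideal.Quotient.factor (le_sup_left.trans hJ2)) (Ideal.Quotient.factor_surjective _)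
          (r := Ideal.Quotient.mk I f) ?_ ?_
        · rw [mem_nonZeroDivisors_iff_ne_zero, Ne, Ideal.Quotient.eq_zero_iff_mem]
          exact hfI
        · rw [Ideal.Quotient.factor_mk, Ideal.Quotient.eq_zero_iff_mem]
          exact hJ2 (Ideal.mem_sup_right (Ideal.mem_span_singleton_self f))
      rw [dim_K] at d1
      rw [hdim] at d3
      have d4 : ((r : WithBot ℕ∞) + 1) + 1 ≤ ((r + 1 : ℕ) : WithBot ℕ∞) :=
        (add_le_add_left (d1.trans d2) 1).trans d3
      have d5 : ((r + 1 + 1 : ℕ) : WithBot ℕ∞) ≤ ((r + 1 : ℕ) : WithBot ℕ∞) := by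
        push_cast at d4 ⊢; exact d4
      have : r + 1 + 1 ≤ r + 1 := by exact_mod_cast d5
      omega
  apply hG
  refine Set.Finite.of_finite_image (f := fun w => RingHom.ker (th (RingHom.id K) w))
    ((Ideal.finite_minimalPrimes_of_isNoetherianRing _ J').subset ?_) ?_
  · rintro _ ⟨w, hw, rfl⟩; exact hmin w hw
  · intro w hw w' hw' h
    exact ker_inj (hp w hw) (hp w' hw') h

lemma exists_piv (W : Submodule K (Fin m → K)) (hW : Module.finrank K W = r) :
    ∃ (e : Fin r → Fin m) (w : Fin r → Fin m → K),
      (∀ i j, w i (e j) = if i = j then 1 else 0) ∧ Submodule.span K (Set.range w) = W := by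
  classical
  let φ : Fin m → Module.Dual K W := fun j => (LinearMap.proj j).comp W.subtype
  obtain ⟨κ, a, ha, hs, hli⟩ := exists_linearIndependent' K φ
  have : Finite κ := Finite.of_injective a ha
  have := Fintype.ofFinite κ
  let E0 : W →ₗ[K] (κ → K) := LinearMap.pi (fun i => φ (a i))
  have hE0 : Function.Injective E0 := by
    rw [← LinearMap.ker_eq_bot, LinearMap.ker_eq_bot']
    intro y hy
    have h1 : ∀ ψ ∈ Submodule.span K (Set.range (φ ∘ a)), ψ y = 0 := by
      intro ψ hψ
      induction hψ using Submodule.span_induction with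
      | mem x hx => obtain ⟨i, rfl⟩ := hx; exact congrFun hy i
      | zero => rfl
      | add x z _ _ hx hz => simp [hx, hz]
      | smul c x _ hx => simp [hx]
    ext j
    exact h1 (φ j) (hs ▸ Submodule.subset_span ⟨j, rfl⟩)
  have c1 : Fintype.card κ ≤ r := by
    have := hli.fintype_card_le_finrank
    rwa [Subspace.dual_finrank_eq, hW] at this
  have c2 : r ≤ Fintype.card κ := by
    have := LinearMap.finrank_le_finrank_of_injective hE0
    rwa [hW, Module.finrank_fintype_fun_eq_card] at this
  let q : Fin r ≃ κ := (Fintype.equivFinOfCardEq (le_antisymm c1 c2)).symm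
  let E1 : W →ₗ[K] (Fin r → K) := LinearMap.pi (fun i => φ (a (q i)))
  have hE1 : Function.Injective E1 := by
    intro x y hxy
    apply hE0
    ext i
    have := congrFun hxy (q.symm i)
    simpa [E1, E0] using this
  let E : W ≃ₗ[K] (Fin r → K) := LinearEquiv.ofInjectiveOfFinrankEq E1 hE1 (by simp [hW])
  let b := Module.Basis.ofEquivFun E
  refine ⟨fun i => a (q i), fun i => (b i : Fin m → K), ?_, ?_⟩
  · intro i j
    have h1 : E (b i) j = (if i = j then 1 else 0) := by
      simp [b, Pi.single_apply, eq_comm]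
    exact h1
  · have : Set.range (fun i => (b i : Fin m → K)) = W.subtype '' Set.range b := by
      rw [← Set.range_comp]; rfl
    rw [this, Submodule.span_image, b.span_eq, Submodule.map_top, Submodule.range_subtype]

lemma finrank_piv {e : Fin r → Fin m} {w : Fin r → Fin m → K}
    (hp : ∀ i j, w i (e j) = if i = j then 1 else 0) :
    Module.finrank K (Submodule.span K (Set.range w)) = r := by
  have : LinearIndependent K w := by
    rw [Fintype.linearIndependent_iff]
    intro g hg i
    have := congrFun hg (e i)
    simpa [hp] using this
  rw [finrank_span_eq_card this]; simp

lemma eval_th (w : Fin r → Fin m → K) (c : Fin r → K) (f : MvPolynomial (Fin m) k) :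
    MvPolynomial.eval c (th (algebraMap k K) w f) = aeval (∑ i, c i • w i) f := by
  have : (MvPolynomial.eval c).comp (th (algebraMap k K) w)
      = (aeval (∑ i, c i • w i) : MvPolynomial (Fin m) k →ₐ[k] K).toRingHom := by
    apply MvPolynomial.ringHom_ext
    · intro a; simp [th]
    · intro j; simp [th, lin, mul_comm]
  exact congrArg (fun g => g f) this

lemma th_zero_iff [Infinite K] (w : Fin r → Fin m → K) (f : MvPolynomial (Fin m) k) :
    th (algebraMap k K) w f = 0 ↔ ∀ y ∈ Submodule.span K (Set.range w), aeval y f = 0 := by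
  constructor
  · intro h y hy
    obtain ⟨c, rfl⟩ := (Submodule.mem_span_range_iff_exists_fun K).1 hy
    rw [← eval_th, h, map_zero]
  · intro h
    apply MvPolynomial.funext
    intro c
    rw [eval_th, map_zero]
    exact h _ ((Submodule.mem_span_range_iff_exists_fun K).2 ⟨c, rfl⟩)

lemma ker_max [Algebra.IsIntegral k K] (x : Fin m → K) :
    (RingHom.ker (aeval x : MvPolynomial (Fin m) k →ₐ[k] K).toRingHom).IsMaximal := by
  have h : (aeval x : MvPolynomial (Fin m) k →ₐ[k] K).toRingHom.IsIntegral := by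
    apply RingHom.IsIntegral.tower_top C
    have : (aeval x : MvPolynomial (Fin m) k →ₐ[k] K).toRingHom.comp C = algebraMap k K := by
      ext a; simp
    rw [this]
    exact fun a => Algebra.IsIntegral.isIntegral a
  have := Ideal.isMaximal_comap_of_isIntegral_of_isMaximal' _ h (⊥ : Ideal K) 
  exact this

lemma good_iff [Infinite K] {e : Fin r → Fin m} {w : Fin r → Fin m → K} {x : Fin m → K} :
    Good I (aeval x : MvPolynomial (Fin m) k →ₐ[k] K).toRingHom e w ↔
    (∀ i j, w i (e j) = if i = j then 1 else 0) ∧ (∀ f ∈ I, th (algebraMap k K) w f = 0) ∧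
      x ∈ Submodule.span K (Set.range w) := by
  have hc : (aeval x : MvPolynomial (Fin m) k →ₐ[k] K).toRingHom.comp C = algebraMap k K := by
    ext a; simp
  constructor
  · intro h
    refine ⟨h.piv, ?_, ?_⟩
    · have := h.van; rwa [hc] at this
    · refine (Submodule.mem_span_range_iff_exists_fun K).2 ⟨fun i => x (e i), ?_⟩
      ext j
      have := h.thr j
      simp at this
      simp [this]
  · rintro ⟨h1, h2, h3⟩
    refine ⟨h1, by rwa [hc], ?_⟩
    obtain ⟨c, rfl⟩ := (Submodule.mem_span_range_iff_exists_fun K).1 h3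
    intro j
    simp [h1]

theorem main [IsAlgClosed K] [Algebra.IsIntegral k K] (hI : I.IsPrime)
    (hdim : ringKrullDim (MvPolynomial (Fin m) k ⧸ I) = ((r + 1 : ℕ) : WithBot ℕ∞)) :
    (∀ x : Fin m → K, (∀ f ∈ I, aeval x f = 0) → x ≠ 0 →
      ∃ W : Submodule K (Fin m → K), Module.finrank K W = r ∧ x ∈ W ∧
        ∀ y ∈ W, ∀ f ∈ I, aeval y f = 0) ↔
    {W : Submodule K (Fin m → K) | Module.finrank K W = r ∧
      ∀ y ∈ W, ∀ f ∈ I, aeval y f = 0}.Infinite := by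
  classical
  have : Infinite K := IsAlgClosed.instInfinite
  constructor
  · intro h hfin
    have hfin' := hfin.insert ⊥
    have hle : ∏ W ∈ hfin'.toFinset, vanishingIdeal k (W : Set (Fin m → K)) ≤ I := by
      refine le_trans ?_ (IsPrime.vanishingIdeal_zeroLocus (K := K) I).le
      intro f hf x hx
      have hmem : ∃ W ∈ hfin'.toFinset, x ∈ W := by
        by_cases h0 : x = 0
        · exact ⟨⊥, by simp, by simp [h0]⟩
        · obtain ⟨W, h1, h2, h3⟩ := h x hx h0
          exact ⟨W, by simp [h1]; right; exact fun y hy f hf => h3 y hy f hf, h2⟩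
      obtain ⟨W, hW, hxW⟩ := hmem
      exact (Ideal.prod_le_inf.trans (Finset.inf_le hW)) hf x hxW
    obtain ⟨W, hW, hWI⟩ := (Ideal.IsPrime.prod_le hI).1 hle
    have hWr : Module.finrank K W ≤ r := by
      simp only [Set.Finite.mem_toFinset, Set.mem_insert_iff, Set.mem_ofPred_eq] at hW
      rcases hW with rfl | hW
      · simp
      · exact hW.1.le
    obtain ⟨e, w, hp, hs⟩ := exists_piv W rfl
    have := dim_quot_le (I := I) hp (fun f hf => hWI (by
      intro y hy
      exact (th_zero_iff w f).1 hf y (by rw [hs]; exact hy)))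
    rw [hdim] at this
    have h2 : r + 1 ≤ Module.finrank K W := by exact_mod_cast this
    omega
  · intro hinf x hx _
    let G : (Fin r → Fin m) → Set (Fin r → Fin m → K) := fun e =>
      {w | (∀ i j, w i (e j) = if i = j then 1 else 0) ∧ ∀ f ∈ I, th (algebraMap k K) w f = 0}
    have hex : ∃ e, (G e).Infinite := by
      by_contra hno
      push Not at hno
      apply hinf
      refine (Set.finite_iUnion (fun e => (hno e).image
        (fun w => Submodule.span K (Set.range w)))).subset ?_
      rintro W ⟨h1, h2⟩
      obtain ⟨e, w, hp, hs⟩ := exists_piv W h1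
      refine Set.mem_iUnion.2 ⟨e, w, ⟨hp, fun f hf => ?_⟩, hs⟩
      rw [th_zero_iff, hs]
      exact fun y hy => h2 y hy f hf
    obtain ⟨e, he⟩ := hex
    obtain ⟨e', w', hg⟩ := exists_good hI (K := K) e (by
      intro f hf
      refine dim_step hI hdim e (G e) he (fun w hw => hw.1) (fun w hw => hw.2) f ?_
      intro w hw
      rw [th_zero_iff]
      intro y hy
      exact hf _ w (good_iff.2 ⟨hw.1, hw.2, hy⟩)) _ (ker_max x) hx
    obtain ⟨h1, h2, h3⟩ := good_iff.1 hg
    exact ⟨_, finrank_piv h1, h3, fun y hy f hf => (th_zero_iff w' f).1 (h2 f hf) y hy⟩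
end
end S16



/-- Proposition 7.4 of Salberger (equivalence (a) ⟺ (c)): for an integral closed
`r`-dimensional subscheme `X = Proj(k[x_0,…,x_n]/I) ⊂ P^n_k` with zero set `V ⊆ k̄^{n+1}`,
`X` is covered by its linear divisors (every nonzero point of `V` lies on an
`r`-dimensional `k̄`-linear subspace contained in `V`) if and only if there are
infinitely many `r`-dimensional `k̄`-linear subspaces contained in `V`. -/
theorem stmt_16 (k : Type*) [Field k] (n r : ℕ) (hr : 1 ≤ r)
    (I : Ideal (MvPolynomial (Fin (n + 1)) k)) (hIprime : I.IsPrime)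
    (hhom : ∀ f ∈ I, ∀ j : ℕ, homogeneousComponent j f ∈ I)
    (hdim : ringKrullDim (MvPolynomial (Fin (n + 1)) k ⧸ I) = ((r + 1 : ℕ) : WithBot ℕ∞)) :
    (∀ x : Fin (n + 1) → AlgebraicClosure k, (∀ f ∈ I, aeval x f = 0) → x ≠ 0 →
      ∃ W : Submodule (AlgebraicClosure k) (Fin (n + 1) → AlgebraicClosure k),
        Module.finrank (AlgebraicClosure k) W = r ∧ x ∈ W ∧
        ∀ y ∈ W, ∀ f ∈ I, aeval y f = 0) ↔
    {W : Submodule (AlgebraicClosure k) (Fin (n + 1) → AlgebraicClosure k) |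
      Module.finrank (AlgebraicClosure k) W = r ∧
      ∀ y ∈ W, ∀ f ∈ I, aeval y f = 0}.Infinite := by
  exact S16.main hIprime hdim
end
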